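/- Let 1 ≤ q₁, q₂ ≤ ∞ and 0 < r < ∞ with 1/r = 1/q₁ + 1/q₂. Suppose a ∈ S^m_{ρ,δ}(n,2) with 0 < ρ ≤ 1, δ ≤ ρ, δ < 1, and m < n(ρ−1)[ max(1/2, 1/q₁, 1/q₂, 1 − 1/r) + (1/2)·max(1/r − 1, 0) ]. Then the bilinear pseudodifferential operator T_a(f,g)(x) = ∫∫ a(x,ξ,η) e^{i⟨x, ξ+η⟩} f̂(ξ) ĝ(η) dξ dη satisfies ‖T_a(f,g)‖_{L^r} ≤ C ‖f‖_{L^{q₁}} ‖g‖_{L^{q₂}} for all Schwartz f, g. -/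

import Mathlib

open MeasureTheory Real Complex
open scoped ENNReal NNReal RealInnerProductSpace SchwartzMap Classical

noncomputable section

/-- `ℝⁿ` as a Euclidean space. -/
abbrev En (n : ℕ) : Type := EuclideanSpace ℝ (Fin n)

/-- Partial derivative in the `i`-th coordinate direction. -/
def pd {n : ℕ} {F : Type} [NormedAddCommGroup F] [NormedSpace ℝ F]
    (i : Fin n) (f : En n → F) : En n → F :=
  fun x => fderiv ℝ f x (EuclideanSpace.single i 1)

/-- Multi-index partial derivative `∂^α`. -/
def mderiv {n : ℕ} {F : Type} [NormedAddCommGroup F] [NormedSpace ℝ F]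
    (α : Fin n → ℕ) (f : En n → F) : En n → F :=
  (List.finRange n).foldr (fun i g => (pd i)^[α i] g) f

/-- The order `|α|` of a multi-index. -/
def mdeg {n : ℕ} (α : Fin n → ℕ) : ℕ := ∑ i, α i

/-- The finite set of multi-indices `α` with every entry `≤ k` and `|α| ≤ k`;
this enumerates all multi-indices of order at most `k`. -/
def multiIdx (n k : ℕ) : Finset (Fin n → ℕ) :=
  (Fintype.piFinset fun _ : Fin n => Finset.range (k + 1)).filter fun α => mdeg α ≤ k

/-- Japanese bracket `⟨ξ⟩^t = (1+|ξ|²)^{t/2}`. -/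
def jb {n : ℕ} (ξ : En n) (t : ℝ) : ℝ := (1 + ‖ξ‖ ^ 2) ^ (t / 2)

/-- The rough amplitude class `L^p S^m_ρ`. -/
def LpSm {n : ℕ} (p : ℝ≥0∞) (m ρ : ℝ) (a : En n → En n → ℂ) : Prop :=
  (∀ x, ContDiff ℝ (⊤ : ℕ∞) (a x)) ∧
  (∀ (α : Fin n → ℕ) (ξ : En n), AEStronglyMeasurable (fun x => mderiv α (a x) ξ) volume) ∧
  ∀ α : Fin n → ℕ, ∃ C : ℝ, ∀ ξ : En n,
    eLpNorm (fun x => mderiv α (a x) ξ) p volume ≤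
      ENNReal.ofReal (C * jb ξ (m - ρ * (mdeg α : ℝ)))

/-- The seminorms `|a|_{p,m,s}` of an amplitude in `L^p S^m_ρ`. -/
def aSemi {n : ℕ} (p : ℝ≥0∞) (m ρ : ℝ) (s : ℕ) (a : En n → En n → ℂ) : ℝ≥0∞ :=
  ∑ α ∈ multiIdx n s, ⨆ ξ : En n,
    ENNReal.ofReal (jb ξ (ρ * (mdeg α : ℝ) - m)) *
      eLpNorm (fun x => mderiv α (a x) ξ) p volume

/-- The mixed derivative `∂_ξ^α ∂_x^β φ(x,ξ)`. -/
def mixedD {n : ℕ} (α β : Fin n → ℕ) (φ : En n → En n → ℝ) (x ξ : En n) : ℝ :=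
  mderiv α (fun ζ => mderiv β (fun y => φ y ζ) x) ξ

/-- The phase function class `Φ^k`. -/
def PhiClass {n : ℕ} (k : ℕ) (φ : En n → En n → ℝ) : Prop :=
  ContDiffOn ℝ (⊤ : ℕ∞) (fun q : En n × En n => φ q.1 q.2) {q | q.2 ≠ 0} ∧
  (∀ (x ξ : En n) (t : ℝ), 0 < t → φ x (t • ξ) = t * φ x ξ) ∧
  ∀ α β : Fin n → ℕ, k ≤ mdeg α + mdeg β →
    ∃ C : ℝ, ∀ (x ξ : En n), ξ ≠ 0 →
      ‖ξ‖ ^ ((mdeg α : ℝ) - 1) * |mixedD α β φ x ξ| ≤ C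

/-- The mixed Hessian matrix `[∂²φ/∂x_j∂ξ_k]`. -/
def mixHess {n : ℕ} (φ : En n → En n → ℝ) (x ξ : En n) : Matrix (Fin n) (Fin n) ℝ :=
  Matrix.of fun j k => pd j (fun y => pd k (φ y) ξ) x

/-- The strong non-degeneracy (SND) condition. -/
def SNDcond {n : ℕ} (φ : En n → En n → ℝ) : Prop :=
  ∃ c : ℝ, 0 < c ∧ ∀ (x ξ : En n), ξ ≠ 0 → c ≤ |(mixHess φ x ξ).det|

/-- The Fourier transform `f̂(ξ) = ∫ e^{-i⟨y,ξ⟩} f(y) dy`. -/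
def ft {n : ℕ} (f : En n → ℂ) (ξ : En n) : ℂ :=
  ∫ y : En n, Complex.exp (-(Complex.I * Complex.ofReal ⟪y, ξ⟫)) * f y

/-- The linear Fourier integral operator
`T_a f(x) = (2π)^{-n} ∫ e^{iφ(x,ξ)} a(x,ξ) f̂(ξ) dξ`. -/
def fio {n : ℕ} (a : En n → En n → ℂ) (φ : En n → En n → ℝ) (f : En n → ℂ)
    (x : En n) : ℂ :=
  (((2 * Real.pi) ^ n)⁻¹ : ℝ) •
    ∫ ξ : En n, Complex.exp (Complex.I * Complex.ofReal (φ x ξ)) * a x ξ * ft f ξ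

/-- The conjugate exponent `p′` of `p ∈ [1,∞]`. -/
def pconj (p : ℝ≥0∞) : ℝ≥0∞ := (1 - p⁻¹)⁻¹

/-- The order `𝔪(ρ,p,q)` from Definition 4.6. -/
def frakm (n : ℕ) (ρ : ℝ) (p q : ℝ≥0∞) : ℝ :=
  if p < 2 ∨ (2 ≤ p ∧ q < pconj p) then
    (n : ℝ) * (ρ - 1) * (min p q)⁻¹.toReal -
      (((n : ℝ) - 1) / 2) * (p⁻¹.toReal + (min p q)⁻¹.toReal)
  else if 2 ≤ q then
    (n : ℝ) * (ρ - 1) / 2 - ((n : ℝ) - 1) * (1 / 2 - q⁻¹.toReal)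
  else
    (n : ℝ) * (ρ - 1) * q⁻¹.toReal -
      (((n : ℝ) - 1) / (1 - 2 * p⁻¹.toReal)) * (q⁻¹.toReal - 1 / 2)

/-- The order `ℳ(ρ,p,q)` from Definition 4.6. -/
def scrM (n : ℕ) (ρ : ℝ) (p q : ℝ≥0∞) : ℝ :=
  (n : ℝ) * (ρ - 1) * q⁻¹.toReal -
    (((n : ℝ) - 1) / (1 + p⁻¹.toReal)) * (q⁻¹.toReal - 1 / 2)

/-- The distribution function `λ_f(s) = |{x : |f(x)| > s}|`. -/
def distFn {n : ℕ} (f : En n → ℂ) (s : ℝ) : ℝ≥0∞ := volume {x : En n | s < ‖f x‖}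

/-- The decreasing rearrangement `f*`. -/
def rearr {n : ℕ} (f : En n → ℂ) (t : ℝ) : ℝ :=
  sInf {s : ℝ | 0 ≤ s ∧ distFn f s ≤ ENNReal.ofReal t}

/-- The Lorentz space quasinorm
`‖f‖_{L^{r,q}} = (∫_0^∞ (t^{1/r} f*(t))^q dt/t)^{1/q}`. -/
def lorentzNorm {n : ℕ} (r q : ℝ≥0∞) (f : En n → ℂ) : ℝ≥0∞ :=
  (∫⁻ t in Set.Ioi (0 : ℝ),
      ENNReal.ofReal ((t ^ r⁻¹.toReal * rearr f t) ^ q.toReal / t)) ^ q⁻¹.toReal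

/-- Mixed frequency derivatives `∂_ξ^{α₁} ∂_η^{α₂} a(x,ξ,η)` of a bilinear amplitude. -/
def d2 {n : ℕ} (α₁ α₂ : Fin n → ℕ) (a : En n → En n → En n → ℂ)
    (x ξ η : En n) : ℂ :=
  mderiv α₁ (fun ζ => mderiv α₂ (fun θ => a x ζ θ) η) ξ

/-- Mixed derivatives `∂_x^β ∂_ξ^{α₁} ∂_η^{α₂} a(x,ξ,η)` of a bilinear amplitude. -/
def d3 {n : ℕ} (β α₁ α₂ : Fin n → ℕ) (a : En n → En n → En n → ℂ)
    (x ξ η : En n) : ℂ :=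
  mderiv β (fun y => d2 α₁ α₂ a y ξ η) x

/-- The bilinear product-type rough amplitude class `L^p_Π S^{(m₁,m₂)}_{(ρ₁,ρ₂)}(n,2)`. -/
def LpPiSm2 {n : ℕ} (p : ℝ≥0∞) (m₁ m₂ ρ₁ ρ₂ : ℝ) (a : En n → En n → En n → ℂ) : Prop :=
  (∀ x, ContDiff ℝ (⊤ : ℕ∞) (fun q : En n × En n => a x q.1 q.2)) ∧
  (∀ (α₁ α₂ : Fin n → ℕ) (ξ η : En n),
    AEStronglyMeasurable (fun x => d2 α₁ α₂ a x ξ η) volume) ∧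
  ∀ α₁ α₂ : Fin n → ℕ, ∃ C : ℝ, ∀ ξ η : En n,
    eLpNorm (fun x => d2 α₁ α₂ a x ξ η) p volume ≤
      ENNReal.ofReal (C * jb ξ (m₁ - ρ₁ * (mdeg α₁ : ℝ)) * jb η (m₂ - ρ₂ * (mdeg α₂ : ℝ)))

/-- The bilinear rough amplitude class `L^p S^m_ρ(n,2)`. -/
def LpSm2 {n : ℕ} (p : ℝ≥0∞) (m ρ : ℝ) (a : En n → En n → En n → ℂ) : Prop :=
  (∀ x, ContDiff ℝ (⊤ : ℕ∞) (fun q : En n × En n => a x q.1 q.2)) ∧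
  (∀ (α₁ α₂ : Fin n → ℕ) (ξ η : En n),
    AEStronglyMeasurable (fun x => d2 α₁ α₂ a x ξ η) volume) ∧
  ∀ α₁ α₂ : Fin n → ℕ, ∃ C : ℝ, ∀ ξ η : En n,
    eLpNorm (fun x => d2 α₁ α₂ a x ξ η) p volume ≤
      ENNReal.ofReal (C * (1 + ‖ξ‖ + ‖η‖) ^ (m - ρ * ((mdeg α₁ : ℝ) + (mdeg α₂ : ℝ))))

/-- The bilinear Hörmander class `S^m_{ρ,δ}(n,2)`. -/
def HormS2 {n : ℕ} (m ρ δ : ℝ) (a : En n → En n → En n → ℂ) : Prop :=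
  ContDiff ℝ (⊤ : ℕ∞) (fun q : En n × En n × En n => a q.1 q.2.1 q.2.2) ∧
  ∀ β α₁ α₂ : Fin n → ℕ, ∃ C : ℝ, ∀ x ξ η : En n,
    ‖d3 β α₁ α₂ a x ξ η‖ ≤
      C * (1 + ‖ξ‖ + ‖η‖) ^ (m - ρ * ((mdeg α₁ : ℝ) + (mdeg α₂ : ℝ)) + δ * (mdeg β : ℝ))

/-- The bilinear Fourier integral operator
`T_a(f,g)(x) = ∫∫ a(x,ξ,η) e^{iφ₁(x,ξ)+iφ₂(x,η)} f̂(ξ) ĝ(η) dξ dη`. -/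
def bfio {n : ℕ} (a : En n → En n → En n → ℂ) (φ₁ φ₂ : En n → En n → ℝ)
    (f g : En n → ℂ) (x : En n) : ℂ :=
  ∫ w : En n × En n,
    a x w.1 w.2 * Complex.exp (Complex.I * Complex.ofReal (φ₁ x w.1 + φ₂ x w.2)) *
      ft f w.1 * ft g w.2

/-- Partial derivative of a function of `N` frequency variables in the `i`-th coordinate
of the `j`-th variable. -/
def pdN {n N : ℕ} (j : Fin N) (i : Fin n) (g : (Fin N → En n) → ℂ) :
    (Fin N → En n) → ℂ :=
  fun ξ => fderiv ℝ g ξ (Pi.single j (EuclideanSpace.single i 1))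

/-- Multi-index derivative `∂_{ξ₁}^{A 1} ⋯ ∂_{ξ_N}^{A N}`. -/
def mderivN {n N : ℕ} (A : Fin N → Fin n → ℕ) (g : (Fin N → En n) → ℂ) :
    (Fin N → En n) → ℂ :=
  (List.finRange N).foldr
    (fun j h => (List.finRange n).foldr (fun i h' => (pdN j i)^[A j i] h') h) g

/-- The multilinear product-type rough amplitude class `L^p_Π S^{m⃗}_{ρ⃗}(n,N)`. -/
def LpPiSmN {n N : ℕ} (p : ℝ≥0∞) (m ρ : Fin N → ℝ)
    (a : En n → (Fin N → En n) → ℂ) : Prop :=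
  (∀ x, ContDiff ℝ (⊤ : ℕ∞) (a x)) ∧
  (∀ (A : Fin N → Fin n → ℕ) (ξ : Fin N → En n),
    AEStronglyMeasurable (fun x => mderivN A (a x) ξ) volume) ∧
  ∀ A : Fin N → Fin n → ℕ, ∃ C : ℝ, ∀ ξ : Fin N → En n,
    eLpNorm (fun x => mderivN A (a x) ξ) p volume ≤
      ENNReal.ofReal (C * ∏ j, jb (ξ j) (m j - ρ j * (mdeg (A j) : ℝ)))

/-- The multilinear rough amplitude class `L^p S^m_ρ(n,N)`. -/
def LpSmN {n N : ℕ} (p : ℝ≥0∞) (m ρ : ℝ) (a : En n → (Fin N → En n) → ℂ) : Prop :=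
  (∀ x, ContDiff ℝ (⊤ : ℕ∞) (a x)) ∧
  (∀ (A : Fin N → Fin n → ℕ) (ξ : Fin N → En n),
    AEStronglyMeasurable (fun x => mderivN A (a x) ξ) volume) ∧
  ∀ A : Fin N → Fin n → ℕ, ∃ C : ℝ, ∀ ξ : Fin N → En n,
    eLpNorm (fun x => mderivN A (a x) ξ) p volume ≤
      ENNReal.ofReal (C * (1 + ∑ j, ‖ξ j‖) ^ (m - ρ * ∑ j, (mdeg (A j) : ℝ)))

/-- The multilinear Fourier integral operator. -/
def mfio {n N : ℕ} (a : En n → (Fin N → En n) → ℂ) (φ : Fin N → En n → En n → ℝ)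
    (f : Fin N → En n → ℂ) (x : En n) : ℂ :=
  ∫ ξ : Fin N → En n,
    a x ξ * Complex.exp (Complex.I * Complex.ofReal (∑ j, φ j x (ξ j))) *
      ∏ j, ft (f j) (ξ j)

/-- The Sobolev (Bessel potential) norm `‖f‖_{H^{s,q}} = ‖ℱ^{-1}(⟨ξ⟩^s f̂)‖_{L^q}`. -/
def besselNorm {n : ℕ} (s : ℝ) (q : ℝ≥0∞) (f : En n → ℂ) : ℝ≥0∞ :=
  eLpNorm (fun x : En n =>
    (((2 * Real.pi) ^ n)⁻¹ : ℝ) •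
      ∫ ξ : En n, Complex.ofReal (jb ξ s) * ft f ξ *
        Complex.exp (Complex.I * Complex.ofReal ⟪x, ξ⟫)) q volume

/-!
A Littlewood–Paley decomposition in `(ξ, η)` splits the symbol into pieces of frequency `N = 2 ^ j`.
The dilation `x ↦ x / N ^ ρ` is compatible with the Hölder relation and turns a piece into a symbol
with frequencies of size at most a constant times `R = N ^ (1 - ρ)`, all of whose derivatives are
`O(N ^ m)`; this uses `δ ≤ ρ ≤ 1` and the frequency localization. It suffices to bound the rescaled
operator by `R ^ (n κ)`, where `κ` is `criticalIndex`, because then the dyadic pieces have norms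
`N ^ (m + (1 - ρ) n κ)`, a summable geometric sequence for the quasi-norm of `L^r`.

For the rescaled operator, integration by parts in the frequencies localizes the problem to unit
balls in `x`, with weighted norms of `f` and `g` on the right. On such a ball Cauchy–Schwarz gives
the pointwise bound `R ^ n ‖f̂‖₂ ‖ĝ‖₂`, with the `L²` norms taken over balls of radius `R`, while
the `TT*` method gives the `L²` bound `R ^ (n / 2) ‖f̂‖₂ ‖ĝ‖₂`, since the oscillation forces
`ξ + η ≈ ξ' + η'`. For `r ≤ 2` the `L²` bound is used on the ball, and for `r > 2` the two bounds
are interpolated. Finally, `‖f̂‖₂` is at most `R ^ (n (1 / q₁ - 1 / 2)₊)` times the `L^q₁` norm: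
for `q₁ ≤ 2` this is a dual Bernstein inequality, and for `q₁ > 2` the weight reduces it to
Plancherel's theorem. Hölder's inequality sums over the balls.
-/

open scoped ContDiff

/-! ### Directional derivatives -/

section DirectionalDerivative

variable {V W F G : Type*} [NormedAddCommGroup V] [NormedSpace ℝ V] [NormedAddCommGroup W]
  [NormedSpace ℝ W] [NormedAddCommGroup F] [NormedSpace ℝ F] [NormedAddCommGroup G]
  [NormedSpace ℝ G]

/-- The directional derivative `∂_v f`, as an operator on functions so that it can be iterated. -/
def dirDeriv (v : V) (f : V → F) : V → F := fun q => fderiv ℝ f q v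

theorem contDiff_dirDeriv {f : V → F} (hf : ContDiff ℝ ∞ f) (v : V) :
    ContDiff ℝ ∞ (dirDeriv v f) :=
  (hf.fderiv_right (m := ∞) (by simp)).clm_apply contDiff_const

theorem hasCompactSupport_dirDeriv {f : V → F} (hf : HasCompactSupport f) (v : V) :
    HasCompactSupport (dirDeriv v f) :=
  hf.fderiv_apply (𝕜 := ℝ) v

theorem dirDeriv_const (c : F) (v : V) : dirDeriv v (fun _ => c) = fun _ => 0 := by
  funext q
  simp [dirDeriv]

theorem dirDeriv_smul_left (f : V → F) (c : ℝ) (v : V) :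
    dirDeriv (c • v) f = fun q => c • dirDeriv v f q := by
  funext q
  simp [dirDeriv]

theorem dirDeriv_add {f g : V → F} (hf : Differentiable ℝ f) (hg : Differentiable ℝ g) (v : V) :
    dirDeriv v (fun q => f q + g q) = fun q => dirDeriv v f q + dirDeriv v g q := by
  funext q
  simp [dirDeriv, fderiv_fun_add (hf q) (hg q)]

theorem dirDeriv_mul {A : Type*} [NormedRing A] [NormedAlgebra ℝ A] {f g : V → A}
    (hf : Differentiable ℝ f) (hg : Differentiable ℝ g) (v : V) :
    dirDeriv v (fun q => f q * g q) = fun q => dirDeriv v f q * g q + f q * dirDeriv v g q := by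
  funext q
  simp [dirDeriv, fderiv_fun_mul' (hf q) (hg q), add_comm]

theorem dirDeriv_clm_apply {f : V → F} (hf : Differentiable ℝ f) (L : F →L[ℝ] G) (v : V) :
    dirDeriv v (fun q => L (f q)) = fun q => L (dirDeriv v f q) := by
  funext q
  exact DFunLike.congr_fun (L.hasFDerivAt.comp q (hf q).hasFDerivAt).fderiv v

theorem dirDeriv_comp_affine {f : V → F} (hf : Differentiable ℝ f) (L : W →L[ℝ] V) (p : V)
    (v : W) : dirDeriv v (fun q => f (L q + p)) = fun q => dirDeriv (L v) f (L q + p) := by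
  funext q
  exact DFunLike.congr_fun
    ((hf (L q + p)).hasFDerivAt.comp q (L.hasFDerivAt.add_const p)).fderiv v

theorem contDiff_comp_affine {f : V → F} (hf : ContDiff ℝ ∞ f) (L : W →L[ℝ] V) (p : V) :
    ContDiff ℝ ∞ fun q => f (L q + p) :=
  hf.comp (L.contDiff.add contDiff_const)

theorem dirDeriv_comm {f : V → F} (hf : ContDiff ℝ ∞ f) (v w : V) :
    dirDeriv v (dirDeriv w f) = dirDeriv w (dirDeriv v f) := by
  funext q
  have hdiff : DifferentiableAt ℝ (fderiv ℝ f) q :=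
    (hf.fderiv_right (m := ∞) (by simp)).differentiable (by simp) q
  have dirDeriv_dirDeriv (u z : V) :
      dirDeriv u (dirDeriv z f) q = fderiv ℝ (fderiv ℝ f) q u z := by
    change fderiv ℝ (fun y => fderiv ℝ f y z) q u = _
    simp [fderiv_clm_apply hdiff (differentiableAt_const z)]
  have hsymm : IsSymmSndFDerivAt ℝ f q :=
    hf.contDiffAt.isSymmSndFDerivAt (by
    simpa using WithTop.coe_le_coe.2 (le_top : (2 : ℕ∞) ≤ ⊤))
  rw [dirDeriv_dirDeriv, dirDeriv_dirDeriv]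
  exact hsymm v w

theorem dirDeriv_eventuallyEq {f g : V → F} {q : V} (h : f =ᶠ[nhds q] g) (v : V) :
    dirDeriv v f =ᶠ[nhds q] dirDeriv v g := by
  filter_upwards [h.fderiv (𝕜 := ℝ)] with y hy
  simp [dirDeriv, hy]

theorem dirDeriv_eq_zero_of_notMem {S : Set V} (hS : IsClosed S) {f : V → F}
    (h : ∀ q ∉ S, f q = 0) (v : V) : ∀ q ∉ S, dirDeriv v f q = 0 := by
  intro q hq
  have hf : f =ᶠ[nhds q] fun _ => 0 := Filter.mem_of_superset (hS.isOpen_compl.mem_nhds hq) h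
  simp [dirDeriv, hf.fderiv_eq]

end DirectionalDerivative

/-- All directional derivatives of `f` at `q` of order at most `k`, along directions of the
family `e`, are bounded by `B`. -/
def DerivBoundAt {V F κ : Type*} [NormedAddCommGroup V] [NormedSpace ℝ V] [NormedAddCommGroup F]
    [NormedSpace ℝ F] (e : κ → V) : ℕ → ℝ → (V → F) → V → Prop
  | 0, B, f, q => ‖f q‖ ≤ B
  | k + 1, B, f, q => ‖f q‖ ≤ B ∧ ∀ i, DerivBoundAt e k B (dirDeriv (e i) f) q

namespace DerivBoundAt

variable {V W F G κ κ' : Type*} [NormedAddCommGroup V] [NormedSpace ℝ V] [NormedAddCommGroup W]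
  [NormedSpace ℝ W] [NormedAddCommGroup F] [NormedSpace ℝ F] [NormedAddCommGroup G]
  [NormedSpace ℝ G] {e : κ → V} {e' : κ' → W} {k l : ℕ} {B B' : ℝ} {q : V}

theorem norm_le {f : V → F} (h : DerivBoundAt e k B f q) : ‖f q‖ ≤ B := by
  cases k with
  | zero => exact h
  | succ k => exact h.1

theorem nonneg {f : V → F} (h : DerivBoundAt e k B f q) : 0 ≤ B :=
  (norm_nonneg _).trans h.norm_le

theorem mono {f : V → F} (h : DerivBoundAt e k B f q) (hB : B ≤ B') :
    DerivBoundAt e k B' f q := by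
  induction k generalizing f with
  | zero => exact le_trans h hB
  | succ k ih => exact ⟨h.1.trans hB, fun i => ih (h.2 i)⟩

theorem of_succ {f : V → F} (h : DerivBoundAt e (k + 1) B f q) : DerivBoundAt e k B f q := by
  induction k generalizing f with
  | zero => exact h.1
  | succ k ih => exact ⟨h.1, fun i => ih (h.2 i)⟩

theorem of_le {f : V → F} (h : DerivBoundAt e k B f q) (hl : l ≤ k) :
    DerivBoundAt e l B f q := by
  induction hl with
  | refl => exact h
  | step _ ih => exact ih h.of_succ

theorem congr {f g : V → F} (h : DerivBoundAt e k B f q) (hfg : f =ᶠ[nhds q] g) :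
    DerivBoundAt e k B g q := by
  induction k generalizing f g with
  | zero => simpa only [DerivBoundAt, ← hfg.eq_of_nhds] using h
  | succ k ih =>
    exact ⟨by simpa only [← hfg.eq_of_nhds] using h.1,
      fun i => ih (h.2 i) (dirDeriv_eventuallyEq hfg _)⟩

protected theorem zero (hB : 0 ≤ B) : DerivBoundAt e k B (fun _ => (0 : F)) q := by
  induction k with
  | zero => simpa [DerivBoundAt] using hB
  | succ k ih => exact ⟨by simpa using hB, fun i => by rw [dirDeriv_const]; exact ih⟩

protected theorem const (c : F) : DerivBoundAt e k ‖c‖ (fun _ => c) q := by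
  cases k with
  | zero => exact le_rfl
  | succ k => exact ⟨le_rfl, fun i => by rw [dirDeriv_const]; exact .zero (norm_nonneg c)⟩

theorem add {f g : V → F} (hf : ContDiff ℝ ∞ f) (hg : ContDiff ℝ ∞ g)
    (h : DerivBoundAt e k B f q) (h' : DerivBoundAt e k B' g q) :
    DerivBoundAt e k (B + B') (fun q => f q + g q) q := by
  induction k generalizing f g with
  | zero => exact norm_add_le_of_le h h'
  | succ k ih =>
    refine ⟨norm_add_le_of_le h.1 h'.1, fun i => ?_⟩
    rw [dirDeriv_add (hf.differentiable (by simp)) (hg.differentiable (by simp))]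
    exact ih (contDiff_dirDeriv hf _) (contDiff_dirDeriv hg _) (h.2 i) (h'.2 i)

theorem mul {A : Type*} [NormedRing A] [NormedAlgebra ℝ A] {f g : V → A} (hf : ContDiff ℝ ∞ f)
    (hg : ContDiff ℝ ∞ g) (h : DerivBoundAt e k B f q) (h' : DerivBoundAt e k B' g q) :
    DerivBoundAt e k (2 ^ k * (B * B')) (fun q => f q * g q) q := by
  have hBB' : 0 ≤ B * B' := mul_nonneg h.nonneg h'.nonneg
  have norm_mul_le_of_le : ‖f q * g q‖ ≤ B * B' :=
    (norm_mul_le _ _).trans (mul_le_mul h.norm_le h'.norm_le (norm_nonneg _) h.nonneg)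
  induction k generalizing f g with
  | zero => simpa [DerivBoundAt] using norm_mul_le_of_le
  | succ k ih =>
    refine ⟨norm_mul_le_of_le.trans (le_mul_of_one_le_left hBB' (one_le_pow₀ one_le_two)),
      fun i => ?_⟩
    have hf' := contDiff_dirDeriv hf (e i)
    have hg' := contDiff_dirDeriv hg (e i)
    rw [dirDeriv_mul (hf.differentiable (by simp)) (hg.differentiable (by simp))]
    have hfg' := ih hf' hg (h.2 i) h'.of_succ <|
      (norm_mul_le _ _).trans (mul_le_mul (h.2 i).norm_le h'.norm_le (norm_nonneg _) h.nonneg)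
    have hf'g := ih hf hg' h.of_succ (h'.2 i) <|
      (norm_mul_le _ _).trans (mul_le_mul h.norm_le (h'.2 i).norm_le (norm_nonneg _) h.nonneg)
    exact (add (hf'.mul hg) (hf.mul hg') hfg' hf'g).mono (by ring_nf; rfl)

theorem clm_apply {f : V → F} (hf : ContDiff ℝ ∞ f) (L : F →L[ℝ] G)
    (h : DerivBoundAt e k B f q) : DerivBoundAt e k (‖L‖ * B) (fun q => L (f q)) q := by
  induction k generalizing f with
  | zero => exact L.le_opNorm_of_le h
  | succ k ih =>
    refine ⟨L.le_opNorm_of_le h.1, fun i => ?_⟩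
    rw [dirDeriv_clm_apply (hf.differentiable (by simp))]
    exact ih (contDiff_dirDeriv hf _) (h.2 i)

theorem const_mul {f : V → ℂ} (hf : ContDiff ℝ ∞ f) (c : ℂ) (h : DerivBoundAt e k B f q) :
    DerivBoundAt e k (‖c‖ * B) (fun q => c * f q) q :=
  (h.clm_apply hf (ContinuousLinearMap.mul ℝ ℂ c)).mono
    (mul_le_mul_of_nonneg_right (ContinuousLinearMap.opNorm_mul_apply_le ℝ ℂ c) h.nonneg)

theorem conj {f : V → ℂ} (hf : ContDiff ℝ ∞ f) (h : DerivBoundAt e k B f q) :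
    DerivBoundAt e k B (fun q => (starRingEnd ℂ) (f q)) q := by
  simpa using h.clm_apply hf Complex.conjCLE.toContinuousLinearMap

theorem comp_affine {f : V → F} (hf : ContDiff ℝ ∞ f) (L : W →L[ℝ] V) (p : V)
    (hL : ∀ i, ∃ j, ∃ c : ℝ, |c| ≤ 1 ∧ L (e' i) = c • e j) {w : W}
    (h : DerivBoundAt e k B f (L w + p)) : DerivBoundAt e' k B (fun q => f (L q + p)) w := by
  induction k generalizing f with
  | zero => exact h
  | succ k ih =>
    refine ⟨h.1, fun i => ?_⟩
    obtain ⟨j, c, hc, hj⟩ := hL i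
    rw [dirDeriv_comp_affine (hf.differentiable (by simp)), hj, dirDeriv_smul_left]
    have hf' := contDiff_dirDeriv hf (e j)
    refine ((ih hf' (h.2 j)).clm_apply (contDiff_comp_affine hf' L p)
      (c • ContinuousLinearMap.id ℝ F)).mono (mul_le_of_le_one_left h.nonneg ?_)
    refine ContinuousLinearMap.opNorm_le_bound _ zero_le_one fun y => ?_
    simpa [norm_smul] using mul_le_mul_of_nonneg_right hc (norm_nonneg y)

end DerivBoundAt

/-! ### Symbols on phase space -/

/-- The space of triples `(x, ξ, η)`. -/
abbrev PhaseSpace (n : ℕ) : Type := En n × En n × En n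

/-- The `i`-th standard basis vector of `ℝⁿ`. -/
abbrev basisVec {n : ℕ} (i : Fin n) : En n := EuclideanSpace.single i 1

/-- The embedding `x ↦ (x, 0, 0)`. -/
def inclX (n : ℕ) : En n →L[ℝ] PhaseSpace n := ContinuousLinearMap.inl ℝ _ _

/-- The embedding `ξ ↦ (0, ξ, 0)`. -/
def inclXi (n : ℕ) : En n →L[ℝ] PhaseSpace n :=
  (ContinuousLinearMap.inr ℝ _ _).comp (ContinuousLinearMap.inl ℝ _ _)

/-- The embedding `η ↦ (0, 0, η)`. -/
def inclEta (n : ℕ) : En n →L[ℝ] PhaseSpace n :=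
  (ContinuousLinearMap.inr ℝ _ _).comp (ContinuousLinearMap.inr ℝ _ _)

theorem inclX_add {n : ℕ} (x y : En n) (w : En n × En n) : inclX n x + (y, w) = (x + y, w) := by
  simp [inclX]

theorem inclXi_add {n : ℕ} (ξ x ζ η : En n) : inclXi n ξ + (x, ζ, η) = (x, ξ + ζ, η) := by
  simp [inclXi]

theorem inclEta_add {n : ℕ} (η x ξ θ : En n) : inclEta n η + (x, ξ, θ) = (x, ξ, η + θ) := by
  simp [inclEta]

/-- The direction of `x i` in phase space. -/
def dirX {n : ℕ} (i : Fin n) : PhaseSpace n := inclX n (basisVec i)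

/-- The direction of `ξ i` in phase space. -/
def dirXi {n : ℕ} (i : Fin n) : PhaseSpace n := inclXi n (basisVec i)

/-- The direction of `η i` in phase space. -/
def dirEta {n : ℕ} (i : Fin n) : PhaseSpace n := inclEta n (basisVec i)

/-- The family of all coordinate directions of phase space. -/
def phaseDirs {n : ℕ} : Fin n ⊕ Fin n ⊕ Fin n → PhaseSpace n :=
  Sum.elim dirX (Sum.elim dirXi dirEta)

section MultiDirDeriv

variable {ι V F : Type*} [NormedAddCommGroup V] [NormedSpace ℝ V] [NormedAddCommGroup F]
  [NormedSpace ℝ F] {f : V → F}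

/-- The iterated derivative `∏_{i ∈ l} ∂_{e i} ^ α i`, with factors in the order of the list `l`,
so that `mderiv` is the case of the standard basis. -/
def multiDirDeriv (e : ι → V) (l : List ι) (α : ι → ℕ) (f : V → F) : V → F :=
  l.foldr (fun i g => (dirDeriv (e i))^[α i] g) f

theorem multiDirDeriv_cons (e : ι → V) (i : ι) (l : List ι) (α : ι → ℕ) :
    multiDirDeriv e (i :: l) α f = (dirDeriv (e i))^[α i] (multiDirDeriv e l α f) :=
  rfl

theorem multiDirDeriv_zero (e : ι → V) (l : List ι) : multiDirDeriv e l 0 f = f := by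
  induction l with
  | nil => rfl
  | cons i l ih => simpa [multiDirDeriv_cons] using ih

theorem contDiff_iterate_dirDeriv (hf : ContDiff ℝ ∞ f) (v : V) (k : ℕ) :
    ContDiff ℝ ∞ ((dirDeriv v)^[k] f) := by
  induction k with
  | zero => exact hf
  | succ k ih => rw [Function.iterate_succ_apply']; exact contDiff_dirDeriv ih v

theorem dirDeriv_iterate_comm (hf : ContDiff ℝ ∞ f) (v w : V) (k : ℕ) :
    dirDeriv w ((dirDeriv v)^[k] f) = (dirDeriv v)^[k] (dirDeriv w f) := by
  induction k with
  | zero => rfl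
  | succ k ih =>
    rw [Function.iterate_succ_apply', Function.iterate_succ_apply',
      dirDeriv_comm (contDiff_iterate_dirDeriv hf v k), ih]

theorem contDiff_multiDirDeriv (hf : ContDiff ℝ ∞ f) (e : ι → V) (l : List ι) (α : ι → ℕ) :
    ContDiff ℝ ∞ (multiDirDeriv e l α f) := by
  induction l with
  | nil => exact hf
  | cons i l ih => exact contDiff_iterate_dirDeriv ih _ _

theorem dirDeriv_multiDirDeriv_comm (hf : ContDiff ℝ ∞ f) (e : ι → V) (l : List ι) (α : ι → ℕ)
    (w : V) : dirDeriv w (multiDirDeriv e l α f) = multiDirDeriv e l α (dirDeriv w f) := by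
  induction l with
  | nil => rfl
  | cons i l ih =>
    rw [multiDirDeriv_cons, multiDirDeriv_cons,
      dirDeriv_iterate_comm (contDiff_multiDirDeriv hf e l α), ih]

theorem multiDirDeriv_congr (e : ι → V) {l : List ι} {α β : ι → ℕ} (h : ∀ i ∈ l, α i = β i) :
    multiDirDeriv e l α f = multiDirDeriv e l β f := by
  induction l with
  | nil => rfl
  | cons i l ih =>
    rw [multiDirDeriv_cons, multiDirDeriv_cons, ih fun j hj => h j (List.mem_cons_of_mem _ hj),
      h i List.mem_cons_self]

theorem multiDirDeriv_add_single [DecidableEq ι] (hf : ContDiff ℝ ∞ f) (e : ι → V) {l : List ι}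
    (hl : l.Nodup) (α : ι → ℕ) {j : ι} (hj : j ∈ l) :
    multiDirDeriv e l (α + Pi.single j 1) f = multiDirDeriv e l α (dirDeriv (e j) f) := by
  induction l with
  | nil => simp at hj
  | cons i l ih =>
    obtain ⟨hil, hl⟩ := List.nodup_cons.1 hl
    rw [multiDirDeriv_cons, multiDirDeriv_cons]
    by_cases hij : i = j
    · subst hij
      have htail : multiDirDeriv e l (α + Pi.single i 1) f = multiDirDeriv e l α f :=
        multiDirDeriv_congr e fun k hk => by simp [ne_of_mem_of_not_mem hk hil]
      rw [htail, ← dirDeriv_multiDirDeriv_comm hf,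
        ← dirDeriv_iterate_comm (contDiff_multiDirDeriv hf e l α), Pi.add_apply, Pi.single_eq_same,
        Function.iterate_succ_apply']
    · rw [ih hl ((List.mem_cons.1 hj).resolve_left (Ne.symm hij)), Pi.add_apply,
        Pi.single_eq_of_ne hij, add_zero]

theorem mderiv_comp_affine {n : ℕ} {F : Type} [NormedAddCommGroup F] [NormedSpace ℝ F] {f : V → F}
    (hf : ContDiff ℝ ∞ f) (L : En n →L[ℝ] V) (p : V) (α : Fin n → ℕ) :
    mderiv α (fun y => f (L y + p)) =
      fun y => multiDirDeriv (fun i => L (basisVec i)) (List.finRange n) α f (L y + p) := by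
  unfold mderiv
  induction List.finRange n with
  | nil => rfl
  | cons i l ih =>
    rw [List.foldr_cons, ih]
    simp only [multiDirDeriv_cons]
    have hg := contDiff_multiDirDeriv hf (fun i => L (basisVec i)) l α
    generalize multiDirDeriv (fun i => L (basisVec i)) l α f = g at hg
    induction α i with
    | zero => rfl
    | succ k ihk =>
      rw [Function.iterate_succ_apply', ihk, Function.iterate_succ_apply']
      exact dirDeriv_comp_affine
        ((contDiff_iterate_dirDeriv hg _ k).differentiable (by simp)) L p (basisVec i)

end MultiDirDeriv

section BilinearSymbol

variable {n : ℕ}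

/-- The symbol `a(x, ξ, η)` as a function on phase space. -/
def uncurrySymbol (a : En n → En n → En n → ℂ) : PhaseSpace n → ℂ := fun q => a q.1 q.2.1 q.2.2

/-- The derivative `∂_x^β ∂_ξ^{α₁} ∂_η^{α₂} F` of a function on phase space. -/
def phaseDeriv (β α₁ α₂ : Fin n → ℕ) (F : PhaseSpace n → ℂ) : PhaseSpace n → ℂ :=
  multiDirDeriv dirX (List.finRange n) β <| multiDirDeriv dirXi (List.finRange n) α₁ <|
    multiDirDeriv dirEta (List.finRange n) α₂ F

theorem d3_eq_phaseDeriv {a : En n → En n → En n → ℂ} (ha : ContDiff ℝ ∞ (uncurrySymbol a))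
    (β α₁ α₂ : Fin n → ℕ) (x ξ η : En n) :
    d3 β α₁ α₂ a x ξ η = phaseDeriv β α₁ α₂ (uncurrySymbol a) (x, ξ, η) := by
  have deriv_eta (y ζ θ : En n) : mderiv α₂ (fun θ => a y ζ θ) θ =
      multiDirDeriv dirEta (List.finRange n) α₂ (uncurrySymbol a) (y, ζ, θ) := by
    have h := congrFun (mderiv_comp_affine ha (inclEta n) (y, ζ, 0) α₂) θ
    simp only [inclEta_add, add_zero] at h
    exact h
  have ha₂ := contDiff_multiDirDeriv ha dirEta (List.finRange n) α₂
  have deriv_xi (y ζ θ : En n) : d2 α₁ α₂ a y ζ θ = multiDirDeriv dirXi (List.finRange n) α₁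
      (multiDirDeriv dirEta (List.finRange n) α₂ (uncurrySymbol a)) (y, ζ, θ) := by
    have h := congrFun (mderiv_comp_affine ha₂ (inclXi n) (y, 0, θ) α₁) ζ
    simp only [inclXi_add, add_zero] at h
    simp only [d2, deriv_eta]
    exact h
  have h := congrFun (mderiv_comp_affine (contDiff_multiDirDeriv ha₂ dirXi (List.finRange n) α₁)
    (inclX n) (0, ξ, η) β) x
  simp only [inclX_add, add_zero] at h
  simp only [d3, deriv_xi]
  exact h

/-- The Hörmander class `S^m_{ρ,δ}(n,2)` of `HormS2`, for functions on phase space. Only joint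
directional derivatives occur, so the class is visibly stable under `∂_x`, `∂_ξ` and `∂_η`. -/
structure IsBilinearSymbol (m ρ δ : ℝ) (F : PhaseSpace n → ℂ) : Prop where
  contDiff : ContDiff ℝ ∞ F
  exists_bound : ∀ β α₁ α₂ : Fin n → ℕ, ∃ C : ℝ, ∀ q : PhaseSpace n, ‖phaseDeriv β α₁ α₂ F q‖ ≤
    C * (1 + ‖q.2.1‖ + ‖q.2.2‖) ^ (m - ρ * ((mdeg α₁ : ℝ) + mdeg α₂) + δ * (mdeg β : ℝ))

theorem isBilinearSymbol_uncurrySymbol {m ρ δ : ℝ} {a : En n → En n → En n → ℂ}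
    (ha : HormS2 m ρ δ a) : IsBilinearSymbol m ρ δ (uncurrySymbol a) where
  contDiff := ha.1
  exists_bound β α₁ α₂ := by
    obtain ⟨C, hC⟩ := ha.2 β α₁ α₂
    exact ⟨C, fun q => d3_eq_phaseDeriv ha.1 β α₁ α₂ q.1 q.2.1 q.2.2 ▸ hC q.1 q.2.1 q.2.2⟩

theorem mdeg_add_single (α : Fin n → ℕ) (j : Fin n) :
    mdeg (α + Pi.single j 1) = mdeg α + 1 := by
  simp [mdeg, Finset.sum_add_distrib]

namespace IsBilinearSymbol

variable {m ρ δ : ℝ} {F : PhaseSpace n → ℂ}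

theorem dirDeriv_dirX (h : IsBilinearSymbol m ρ δ F) (i : Fin n) :
    IsBilinearSymbol (m + δ) ρ δ (dirDeriv (dirX i) F) := by
  refine ⟨contDiff_dirDeriv h.contDiff _, fun β α₁ α₂ => ?_⟩
  obtain ⟨C, hC⟩ := h.exists_bound (β + Pi.single i 1) α₁ α₂
  refine ⟨C, fun q => ?_⟩
  have hsm₂ := contDiff_multiDirDeriv h.contDiff dirEta (List.finRange n) α₂
  have hsm₁ := contDiff_multiDirDeriv hsm₂ dirXi (List.finRange n) α₁
  convert hC q using 2
  · rw [phaseDeriv, phaseDeriv,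
      multiDirDeriv_add_single hsm₁ _ (List.nodup_finRange n) _ (List.mem_finRange i),
      dirDeriv_multiDirDeriv_comm hsm₂, dirDeriv_multiDirDeriv_comm h.contDiff]
  · rw [mdeg_add_single]
    push_cast
    ring_nf

theorem dirDeriv_dirXi (h : IsBilinearSymbol m ρ δ F) (i : Fin n) :
    IsBilinearSymbol (m - ρ) ρ δ (dirDeriv (dirXi i) F) := by
  refine ⟨contDiff_dirDeriv h.contDiff _, fun β α₁ α₂ => ?_⟩
  obtain ⟨C, hC⟩ := h.exists_bound β (α₁ + Pi.single i 1) α₂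
  refine ⟨C, fun q => ?_⟩
  have hsm₂ := contDiff_multiDirDeriv h.contDiff dirEta (List.finRange n) α₂
  convert hC q using 2
  · rw [phaseDeriv, phaseDeriv,
      multiDirDeriv_add_single hsm₂ _ (List.nodup_finRange n) _ (List.mem_finRange i),
      dirDeriv_multiDirDeriv_comm h.contDiff]
  · rw [mdeg_add_single]
    push_cast
    ring_nf

theorem dirDeriv_dirEta (h : IsBilinearSymbol m ρ δ F) (i : Fin n) :
    IsBilinearSymbol (m - ρ) ρ δ (dirDeriv (dirEta i) F) := by
  refine ⟨contDiff_dirDeriv h.contDiff _, fun β α₁ α₂ => ?_⟩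
  obtain ⟨C, hC⟩ := h.exists_bound β α₁ (α₂ + Pi.single i 1)
  refine ⟨C, fun q => ?_⟩
  convert hC q using 2
  · rw [phaseDeriv, phaseDeriv,
      multiDirDeriv_add_single h.contDiff _ (List.nodup_finRange n) _ (List.mem_finRange i)]
  · rw [mdeg_add_single]
    push_cast
    ring_nf

end IsBilinearSymbol

end BilinearSymbol

/-! ### Integration by parts against characters -/

section OscillatoryIntegrals

/-- The character `e^{it}`. -/
def expI (t : ℝ) : ℂ := Complex.exp (Complex.I * Complex.ofReal t)

theorem norm_expI (t : ℝ) : ‖expI t‖ = 1 := by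
  rw [expI, mul_comm, Complex.norm_exp_ofReal_mul_I]

theorem enorm_expI (t : ℝ) : ‖expI t‖ₑ = 1 := by
  rw [← ofReal_norm, norm_expI, ENNReal.ofReal_one]

theorem expI_add (s t : ℝ) : expI (s + t) = expI s * expI t := by
  rw [expI, expI, expI, ← Complex.exp_add, ← mul_add, Complex.ofReal_add]

theorem conj_expI (t : ℝ) : (starRingEnd ℂ) (expI t) = expI (-t) := by
  simp [expI, ← Complex.exp_conj]

theorem contDiff_expI : ContDiff ℝ ∞ expI :=
  (contDiff_const.mul Complex.ofRealCLM.contDiff).cexp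

theorem continuous_expI : Continuous expI := contDiff_expI.continuous

theorem hasDerivAt_expI (t : ℝ) : HasDerivAt expI (Complex.I * expI t) t := by
  have h : HasDerivAt (fun t : ℝ => Complex.I * (t : ℂ)) (Complex.I * 1) t :=
    (Complex.ofRealCLM.hasDerivAt (x := t)).const_mul Complex.I
  exact h.cexp.congr_deriv (by rw [mul_one, mul_comm, expI])

variable {n : ℕ}

theorem inner_basisVec (i : Fin n) (θ : En n) : ⟪basisVec i, θ⟫ = θ i := by
  simp [EuclideanSpace.inner_single_left]

theorem contDiff_expI_inner (θ : En n) : ContDiff ℝ ∞ fun x : En n => expI ⟪x, θ⟫ :=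
  contDiff_expI.comp (contDiff_id.inner ℝ contDiff_const)

theorem dirDeriv_expI_inner (θ v : En n) :
    dirDeriv v (fun x : En n => expI ⟪x, θ⟫) =
      fun x => Complex.I * (⟪v, θ⟫ : ℂ) * expI ⟪x, θ⟫ := by
  funext x
  have h := (hasDerivAt_expI ⟪x, θ⟫).hasFDerivAt.comp x ((innerSL ℝ).flip θ).hasFDerivAt
  refine (DFunLike.congr_fun h.fderiv v).trans ?_
  simp only [ContinuousLinearMap.comp_apply, ContinuousLinearMap.flip_apply, innerSL_apply_apply,
    ContinuousLinearMap.toSpanSingleton_apply, Complex.real_smul]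
  ring

theorem integrable_mul_expI_inner {ψ : En n → ℂ} (hψ : Continuous ψ) (hc : HasCompactSupport ψ)
    (θ : En n) : Integrable fun x => ψ x * expI ⟪x, θ⟫ :=
  (hψ.mul (contDiff_expI_inner θ).continuous).integrable_of_hasCompactSupport hc.mul_right

theorem integral_dirDeriv_mul_expI {ψ : En n → ℂ} (hψ : ContDiff ℝ ∞ ψ)
    (hc : HasCompactSupport ψ) (θ v : En n) :
    ∫ x, dirDeriv v ψ x * expI ⟪x, θ⟫ =
      -(Complex.I * (⟪v, θ⟫ : ℂ)) * ∫ x, ψ x * expI ⟪x, θ⟫ := by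
  have hderiv (x : En n) : fderiv ℝ (fun x : En n => expI ⟪x, θ⟫) x v =
      Complex.I * (⟪v, θ⟫ : ℂ) * expI ⟪x, θ⟫ := congrFun (dirDeriv_expI_inner θ v) x
  have h := integral_mul_fderiv_eq_neg_fderiv_mul_of_integrable (μ := (volume : Measure (En n)))
    (f := ψ) (g := fun x => expI ⟪x, θ⟫) (v := v)
    (integrable_mul_expI_inner (contDiff_dirDeriv hψ v).continuous
      (hasCompactSupport_dirDeriv hc v) θ)
    ((hψ.continuous.mul (contDiff_dirDeriv (contDiff_expI_inner θ) v).continuous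
      ).integrable_of_hasCompactSupport hc.mul_right)
    (integrable_mul_expI_inner hψ.continuous hc θ)
    (fun x _ => hψ.differentiable (by simp) x)
    (fun x _ => (contDiff_expI_inner θ).differentiable (by simp) x)
  simp_rw [hderiv] at h
  rw [eq_comm, neg_mul, ← integral_const_mul, neg_eq_iff_eq_neg]
  refine Eq.trans (integral_congr_ae (.of_forall fun x => ?_)) h
  ring

end OscillatoryIntegrals

section TwistedDerivative

variable {V W : Type*} [NormedAddCommGroup V] [NormedSpace ℝ V] [NormedAddCommGroup W]
  [NormedSpace ℝ W]

/-- The operator `∂_v + i c`. Integration against `e^{i⟨x,θ⟩}` turns it into multiplication by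
`i (c - ⟨v,θ⟩)` when `c` is constant. -/
def twistedDeriv (v : V) (c : V → ℝ) (ψ : V → ℂ) : V → ℂ :=
  fun q => dirDeriv v ψ q + Complex.I * (c q : ℂ) * ψ q

/-- The operator `1 - (∂_v + i c)²`. Integration against `e^{i⟨x,θ⟩}` turns it into multiplication
by the elliptic factor `1 + (c - ⟨v,θ⟩)²` when `c` is constant. -/
def bracketOp (v : V) (c : V → ℝ) (ψ : V → ℂ) : V → ℂ :=
  fun q => ψ q - twistedDeriv v c (twistedDeriv v c ψ) q

variable {v : V} {c : V → ℝ} {ψ : V → ℂ}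

theorem contDiff_twistedDeriv (hc : ContDiff ℝ ∞ c) (hψ : ContDiff ℝ ∞ ψ) :
    ContDiff ℝ ∞ (twistedDeriv v c ψ) :=
  (contDiff_dirDeriv hψ v).add ((contDiff_const.mul (Complex.ofRealCLM.contDiff.comp hc)).mul hψ)

theorem contDiff_bracketOp (hc : ContDiff ℝ ∞ c) (hψ : ContDiff ℝ ∞ ψ) :
    ContDiff ℝ ∞ (bracketOp v c ψ) :=
  hψ.sub (contDiff_twistedDeriv hc (contDiff_twistedDeriv hc hψ))

theorem hasCompactSupport_twistedDeriv (hψ : HasCompactSupport ψ) :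
    HasCompactSupport (twistedDeriv v c ψ) :=
  (hasCompactSupport_dirDeriv hψ v).add hψ.mul_left

theorem hasCompactSupport_bracketOp (hψ : HasCompactSupport ψ) :
    HasCompactSupport (bracketOp v c ψ) :=
  hψ.sub (hasCompactSupport_twistedDeriv (hasCompactSupport_twistedDeriv hψ))

theorem twistedDeriv_eq_zero_of_notMem {S : Set V} (hS : IsClosed S) (h : ∀ q ∉ S, ψ q = 0) :
    ∀ q ∉ S, twistedDeriv v c ψ q = 0 := by
  intro q hq
  simp [twistedDeriv, h q hq, dirDeriv_eq_zero_of_notMem hS h v q hq]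

theorem bracketOp_eq_zero_of_notMem {S : Set V} (hS : IsClosed S) (h : ∀ q ∉ S, ψ q = 0) :
    ∀ q ∉ S, bracketOp v c ψ q = 0 := by
  intro q hq
  rw [bracketOp, h q hq, twistedDeriv_eq_zero_of_notMem hS
    (twistedDeriv_eq_zero_of_notMem hS h) q hq, sub_zero]

theorem twistedDeriv_comp_affine (hψ : ContDiff ℝ ∞ ψ) (L : W →L[ℝ] V) (p : V) (w : W) {c₀ : ℝ}
    (hc₀ : ∀ q, c (L q + p) = c₀) :
    (fun q => twistedDeriv (L w) c ψ (L q + p)) =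
      twistedDeriv w (fun _ => c₀) fun q => ψ (L q + p) := by
  funext q
  simp only [twistedDeriv, dirDeriv_comp_affine (hψ.differentiable (by simp)), hc₀]

theorem bracketOp_comp_affine (hc : ContDiff ℝ ∞ c) (hψ : ContDiff ℝ ∞ ψ) (L : W →L[ℝ] V) (p : V)
    (w : W) {c₀ : ℝ} (hc₀ : ∀ q, c (L q + p) = c₀) :
    (fun q => bracketOp (L w) c ψ (L q + p)) =
      bracketOp w (fun _ => c₀) fun q => ψ (L q + p) := by
  have h := twistedDeriv_comp_affine (contDiff_twistedDeriv (v := L w) hc hψ) L p w hc₀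
  rw [twistedDeriv_comp_affine hψ L p w hc₀] at h
  funext q
  exact congrArg (ψ (L q + p) - ·) (congrFun h q)

theorem derivBoundAt_twistedDeriv {κ : Type*} {e : κ → V} {j : κ} (hc : ContDiff ℝ ∞ c)
    (hψ : ContDiff ℝ ∞ ψ) {k : ℕ} {B D : ℝ} {q : V}
    (hD : DerivBoundAt e k D (fun q => (c q : ℂ)) q) (hB : DerivBoundAt e (k + 1) B ψ q) :
    DerivBoundAt e k (B * (1 + 2 ^ k * D)) (twistedDeriv (e j) c ψ) q := by
  have hc' : ContDiff ℝ ∞ fun q => (c q : ℂ) := Complex.ofRealCLM.contDiff.comp hc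
  have hmul := (hD.mul hc' hψ hB.of_succ).const_mul (hc'.mul hψ) Complex.I
  have heq : twistedDeriv (e j) c ψ =
      fun q => dirDeriv (e j) ψ q + Complex.I * ((c q : ℂ) * ψ q) := by
    funext q
    rw [twistedDeriv, mul_assoc]
  rw [heq]
  refine ((hB.2 j).add (contDiff_dirDeriv hψ _) (contDiff_const.mul (hc'.mul hψ)) hmul).mono
    (le_of_eq ?_)
  rw [Complex.norm_I]
  ring

theorem derivBoundAt_bracketOp {κ : Type*} {e : κ → V} {j : κ} (hc : ContDiff ℝ ∞ c)
    (hψ : ContDiff ℝ ∞ ψ) {k : ℕ} {B D : ℝ} {q : V}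
    (hD : DerivBoundAt e (k + 1) D (fun q => (c q : ℂ)) q) (hB : DerivBoundAt e (k + 2) B ψ q) :
    DerivBoundAt e k (B * (1 + (1 + 2 ^ (k + 1) * D) * (1 + 2 ^ k * D))) (bracketOp (e j) c ψ)
      q := by
  have hψ' := contDiff_twistedDeriv (v := e j) hc hψ
  have hψ'' := contDiff_twistedDeriv (v := e j) hc hψ'
  have htwice := derivBoundAt_twistedDeriv (j := j) hc hψ' hD.of_succ
    (derivBoundAt_twistedDeriv (j := j) hc hψ hD hB)
  have heq : bracketOp (e j) c ψ =
      fun q => ψ q + -1 * twistedDeriv (e j) c (twistedDeriv (e j) c ψ) q := by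
    funext q
    rw [bracketOp]
    ring
  rw [heq]
  refine (hB.of_succ.of_succ.add hψ (contDiff_const.mul hψ'') (htwice.const_mul hψ'' (-1))).mono
    (le_of_eq ?_)
  rw [norm_neg, norm_one]
  ring

theorem integral_twistedDeriv_mul_expI {n : ℕ} {ψ : En n → ℂ} (hψ : ContDiff ℝ ∞ ψ)
    (hsupp : HasCompactSupport ψ) (θ v : En n) (c : ℝ) :
    ∫ x, twistedDeriv v (fun _ => c) ψ x * expI ⟪x, θ⟫ =
      Complex.I * (c - ⟪v, θ⟫ : ℝ) * ∫ x, ψ x * expI ⟪x, θ⟫ := by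
  simp_rw [twistedDeriv, add_mul, mul_assoc (Complex.I * (c : ℂ))]
  rw [integral_add (integrable_mul_expI_inner (contDiff_dirDeriv hψ v).continuous
      (hasCompactSupport_dirDeriv hsupp v) θ)
    ((integrable_mul_expI_inner hψ.continuous hsupp θ).const_mul _),
    integral_dirDeriv_mul_expI hψ hsupp, integral_const_mul]
  push_cast
  ring

theorem integral_bracketOp_mul_expI {n : ℕ} {ψ : En n → ℂ} (hψ : ContDiff ℝ ∞ ψ)
    (hsupp : HasCompactSupport ψ) (θ v : En n) (c : ℝ) :
    ∫ x, bracketOp v (fun _ => c) ψ x * expI ⟪x, θ⟫ =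
      ((1 + (c - ⟪v, θ⟫) ^ 2 : ℝ) : ℂ) * ∫ x, ψ x * expI ⟪x, θ⟫ := by
  have hψ' := contDiff_twistedDeriv (v := v) (contDiff_const (c := c)) hψ
  have hsupp' := hasCompactSupport_twistedDeriv (v := v) (c := fun _ => c) hsupp
  simp_rw [bracketOp, sub_mul]
  rw [integral_sub (integrable_mul_expI_inner hψ.continuous hsupp θ)
    (integrable_mul_expI_inner (contDiff_twistedDeriv contDiff_const hψ').continuous
      (hasCompactSupport_twistedDeriv hsupp') θ),
    integral_twistedDeriv_mul_expI hψ' hsupp', integral_twistedDeriv_mul_expI hψ hsupp]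
  push_cast
  linear_combination (-(c - (⟪v, θ⟫ : ℂ)) ^ 2 * ∫ x, ψ x * expI ⟪x, θ⟫) * Complex.I_sq

end TwistedDerivative

section IteratedBracket

variable {n : ℕ} {V W : Type*} [NormedAddCommGroup V] [NormedSpace ℝ V] [NormedAddCommGroup W]
  [NormedSpace ℝ W]

/-- The composition of the operators `1 - (∂_{e i} + i c i)²`, `i ∈ l`. -/
def iterBracketOp {ι : Type*} (e : ι → V) (c : ι → V → ℝ) (l : List ι) (ψ : V → ℂ) : V → ℂ :=
  l.foldr (fun i g => bracketOp (e i) (c i) g) ψ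

variable {ι : Type*} {e : ι → V} {c : ι → V → ℝ} {ψ : V → ℂ}

theorem iterBracketOp_cons (i : ι) (l : List ι) :
    iterBracketOp e c (i :: l) ψ = bracketOp (e i) (c i) (iterBracketOp e c l ψ) :=
  rfl

theorem contDiff_iterBracketOp (hc : ∀ i, ContDiff ℝ ∞ (c i)) (hψ : ContDiff ℝ ∞ ψ) (l : List ι) :
    ContDiff ℝ ∞ (iterBracketOp e c l ψ) := by
  induction l with
  | nil => exact hψ
  | cons i l ih => exact contDiff_bracketOp (hc i) ih

theorem hasCompactSupport_iterBracketOp (hψ : HasCompactSupport ψ) (l : List ι) :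
    HasCompactSupport (iterBracketOp e c l ψ) := by
  induction l with
  | nil => exact hψ
  | cons i l ih => exact hasCompactSupport_bracketOp ih

theorem iterBracketOp_eq_zero_of_notMem {S : Set V} (hS : IsClosed S) (h : ∀ q ∉ S, ψ q = 0)
    (l : List ι) : ∀ q ∉ S, iterBracketOp e c l ψ q = 0 := by
  induction l with
  | nil => exact h
  | cons i l ih => exact bracketOp_eq_zero_of_notMem hS ih

theorem iterBracketOp_comp_affine (hψ : ContDiff ℝ ∞ ψ) (L : W →L[ℝ] V) (p : V) (e : ι → W)
    (hc : ∀ i, ContDiff ℝ ∞ (c i)) {c₀ : ι → ℝ} (hc₀ : ∀ i q, c i (L q + p) = c₀ i) (l : List ι) :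
    (fun q => iterBracketOp (fun i => L (e i)) c l ψ (L q + p)) =
      iterBracketOp e (fun i _ => c₀ i) l fun q => ψ (L q + p) := by
  induction l with
  | nil => rfl
  | cons i l ih =>
    simp only [iterBracketOp_cons]
    rw [← ih, ← bracketOp_comp_affine (hc i) (contDiff_iterBracketOp hc hψ l) L p (e i) (hc₀ i)]

theorem exists_derivBoundAt_iterBracketOp {κ : Type*} (e : κ → V) (j : ι → κ) {D : ℝ} (hD : 0 ≤ D)
    (hc : ∀ i, ContDiff ℝ ∞ (c i)) (l : List ι) (k : ℕ) :
    ∃ C : ℝ, 0 ≤ C ∧ ∀ (ψ : V → ℂ) (B : ℝ) (q : V), ContDiff ℝ ∞ ψ →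
      (∀ i k', DerivBoundAt e k' D (fun q => (c i q : ℂ)) q) →
      DerivBoundAt e (k + 2 * l.length) B ψ q →
      DerivBoundAt e k (C * B) (iterBracketOp (fun i => e (j i)) c l ψ) q := by
  induction l generalizing k with
  | nil => exact ⟨1, zero_le_one, fun ψ B q _ _ h => by simpa [iterBracketOp] using h⟩
  | cons i l ih =>
    obtain ⟨C, hC, hbound⟩ := ih (k + 2)
    refine ⟨C * (1 + (1 + 2 ^ (k + 1) * D) * (1 + 2 ^ k * D)), by positivity,
      fun ψ B q hψ hcq hB => ?_⟩
    have htail := hbound ψ B q hψ hcq (hB.of_le (by rw [List.length_cons]; lia))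
    exact (derivBoundAt_bracketOp (j := j i) (hc i) (contDiff_iterBracketOp hc hψ l)
      (hcq i (k + 1)) htail).mono (by ring_nf; rfl)

theorem integral_iterBracketOp_mul_expI {ψ : En n → ℂ} (hψ : ContDiff ℝ ∞ ψ)
    (hsupp : HasCompactSupport ψ) (c : Fin n → ℝ) (θ : En n) (l : List (Fin n)) :
    ∫ x, iterBracketOp basisVec (fun i _ => c i) l ψ x * expI ⟪x, θ⟫ =
      (((l.map fun i => 1 + (c i - θ i) ^ 2).prod : ℝ) : ℂ) * ∫ x, ψ x * expI ⟪x, θ⟫ := by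
  induction l with
  | nil => simp [iterBracketOp]
  | cons i l ih =>
    simp only [iterBracketOp_cons, List.map_cons, List.prod_cons]
    rw [integral_bracketOp_mul_expI (contDiff_iterBracketOp (fun i => contDiff_const) hψ l)
      (hasCompactSupport_iterBracketOp hsupp l), ih, inner_basisVec]
    push_cast
    ring

end IteratedBracket

section Weight

variable {n : ℕ}

/-- The integrable weight `∏ (1 + θ_i²)⁻¹`, which measures the decay gained from one application
of `bracketOp` in every coordinate. -/
def weight (θ : En n) : ℝ := ∏ i, (1 + (θ i) ^ 2)⁻¹

theorem weight_pos (θ : En n) : 0 < weight θ := Finset.prod_pos fun i _ => by positivity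

theorem weight_le_one (θ : En n) : weight θ ≤ 1 :=
  Finset.prod_le_one (fun i _ => by positivity) fun i _ =>
    inv_le_one_of_one_le₀ (le_add_of_nonneg_right (sq_nonneg _))

theorem continuous_weight : Continuous (weight (n := n)) :=
  continuous_finsetProd _ fun i _ => Continuous.inv₀ (by fun_prop) fun θ => by positivity

theorem integrable_weight : Integrable (weight (n := n)) := by
  rw [← (PiLp.volume_preserving_toLp (Fin n)).integrable_comp_emb
    (MeasurableEquiv.toLp 2 (Fin n → ℝ)).measurableEmbedding]
  exact Integrable.fintype_prod (μ := fun _ : Fin n => (volume : Measure ℝ))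
    (f := fun (_ : Fin n) (t : ℝ) => (1 + t ^ 2)⁻¹) fun _ => integrable_inv_one_add_sq

theorem weight_neg (θ : En n) : weight (-θ) = weight θ := by simp [weight]

theorem prod_map_finRange_eq_inv_weight (θ : En n) :
    ((List.finRange n).map fun i => 1 + (θ i) ^ 2).prod = (weight θ)⁻¹ := by
  rw [← Fin.prod_univ_def, weight, ← Finset.prod_inv_distrib]
  simp

theorem memLp_of_integrable_of_norm_le_one {α E : Type*} [MeasurableSpace α]
    [NormedAddCommGroup E] {μ : Measure α} {f : α → E} (hf : Integrable f μ)
    (hbound : ∀ x, ‖f x‖ ≤ 1) {s : ℝ≥0∞} (hs : 1 ≤ s) : MemLp f s μ := by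
  rcases eq_or_ne s ⊤ with rfl | hs_top
  · exact memLp_top_of_bound hf.1 1 (.of_forall hbound)
  refine ⟨hf.1, ?_⟩
  rw [eLpNorm_lt_top_iff_lintegral_rpow_enorm_lt_top (zero_lt_one.trans_le hs).ne' hs_top]
  refine (lintegral_mono fun x => ?_).trans_lt hf.2
  have hx : ‖f x‖ₑ ≤ 1 := by
    rw [← ofReal_norm]
    exact ENNReal.ofReal_le_one.2 (hbound x)
  have hs' : 1 ≤ s.toReal := by
    rw [← ENNReal.toReal_one]
    exact ENNReal.toReal_mono hs_top hs
  exact (ENNReal.rpow_le_rpow_of_exponent_ge hx hs').trans_eq (ENNReal.rpow_one _)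

theorem memLp_weight {s : ℝ≥0∞} (hs : 1 ≤ s) : MemLp (weight (n := n)) s volume :=
  memLp_of_integrable_of_norm_le_one integrable_weight
    (fun x => (Real.norm_of_nonneg (weight_pos x).le).trans_le (weight_le_one x)) hs

end Weight

/-! ### Fourier transforms on balls -/

section Plancherel

open scoped FourierTransform

variable {n : ℕ}

theorem ft_eq_integral_expI (u : En n → ℂ) (ξ : En n) : ft u ξ = ∫ y, expI (-⟪y, ξ⟫) * u y := by
  simp [ft, expI]

theorem ft_eq_fourier (u : En n → ℂ) (ξ : En n) : ft u ξ = 𝓕 u ((2 * π)⁻¹ • ξ) := by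
  rw [Real.fourier_eq', ft]
  refine integral_congr_ae (.of_forall fun y => ?_)
  have hpi : (π : ℂ) ≠ 0 := by exact_mod_cast Real.pi_ne_zero
  dsimp only
  rw [smul_eq_mul, inner_smul_right]
  congr 2
  push_cast
  field_simp

theorem continuous_fourier_of_integrable {u : En n → ℂ} (hu : Integrable u) : Continuous (𝓕 u) :=
  VectorFourier.fourierIntegral_continuous Real.continuous_fourierChar
    (by exact continuous_inner) hu

theorem continuous_ft {u : En n → ℂ} (hu : Integrable u) : Continuous (ft u) := by
  rw [funext (ft_eq_fourier u)]
  exact (continuous_fourier_of_integrable hu).comp (continuous_const_smul _)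

theorem ft_add {u v : En n → ℂ} (hu : Integrable u) (hv : Integrable v) (ξ : En n) :
    ft (u + v) ξ = ft u ξ + ft v ξ := by
  have hcont : Continuous fun y : En n => expI (-⟪y, ξ⟫) := continuous_expI.comp (by fun_prop)
  have hInt {w : En n → ℂ} (hw : Integrable w) : Integrable fun y => expI (-⟪y, ξ⟫) * w y :=
    hw.bdd_mul hcont.aestronglyMeasurable (.of_forall fun y => (norm_expI _).le)
  simp_rw [ft_eq_integral_expI, Pi.add_apply, mul_add]
  exact integral_add (hInt hu) (hInt hv)

theorem enorm_ft_le (u : En n → ℂ) (ξ : En n) : ‖ft u ξ‖ₑ ≤ ∫⁻ y, ‖u y‖ₑ := by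
  rw [ft_eq_integral_expI]
  refine (enorm_integral_le_lintegral_enorm _).trans (lintegral_mono fun y => ?_)
  rw [enorm_mul, enorm_expI, one_mul]

/-- Both sides define the same tempered distribution. -/
theorem fourier_ae_eq_fourier_toLp {u : En n → ℂ} (hu : Integrable u) (hu₂ : MemLp u 2) :
    𝓕 u =ᵐ[volume] ((𝓕 (hu₂.toLp u) : Lp ℂ 2 (volume : Measure (En n))) : En n → ℂ) := by
  refine ae_eq_of_integral_contDiff_smul_eq (continuous_fourier_of_integrable hu).locallyIntegrable
    ((Lp.memLp _).locallyIntegrable (by norm_num)) fun g hg hgc => ?_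
  set G : 𝓢(En n, ℂ) := HasCompactSupport.toSchwartzMap (f := Complex.ofRealCLM ∘ g)
    (hgc.comp_left rfl) (by fun_prop)
  have hdistr := congrArg (fun T => T G) (Lp.fourier_toTemperedDistribution_eq (hu₂.toLp u))
  simp only [TemperedDistribution.fourier_apply, Lp.toTemperedDistribution_apply] at hdistr
  have hcoe : ∫ x, (𝓕 G : 𝓢(En n, ℂ)) x • (hu₂.toLp u : En n → ℂ) x = ∫ x, 𝓕 (⇑G) x • u x := by
    refine integral_congr_ae ?_
    filter_upwards [hu₂.coeFn_toLp] with x hx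
    rw [hx]
    rfl
  have hself := VectorFourier.integral_fourierIntegral_smul_eq_flip (L := innerₗ (En n))
    Real.continuous_fourierChar continuous_inner (G.integrable (μ := volume)) hu
  simp only [flip_innerₗ] at hself
  calc ∫ x, g x • 𝓕 u x = ∫ x, G x • 𝓕 u x := rfl
    _ = ∫ x, 𝓕 (⇑G) x • u x := hself.symm
    _ = _ := (hcoe.symm.trans hdistr)

theorem lintegral_comp_smul_of_pos (F : En n → ℝ≥0∞) {c : ℝ} (hc : 0 < c) :
    ∫⁻ x, F (c • x) = ENNReal.ofReal ((c ^ n)⁻¹) * ∫⁻ x, F x := by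
  have hmap : ∫⁻ x, F x ∂(Measure.map (c • ·) volume) = ∫⁻ x, F (c • x) :=
    (Homeomorph.smulOfNeZero c hc.ne').toMeasurableEquiv.measurableEmbedding.lintegral_map _
  rw [← hmap, Measure.map_addHaar_smul volume hc.ne', lintegral_smul_measure]
  simp [abs_of_pos hc]

theorem lintegral_enorm_sq_eq {α E : Type*} [MeasurableSpace α] [NormedAddCommGroup E]
    {μ : Measure α} (v : α → E) : ∫⁻ x, ‖v x‖ₑ ^ 2 ∂μ = eLpNorm v 2 μ ^ 2 := by
  simpa using (eLpNorm_nnreal_pow_eq_lintegral (p := 2) (f := v) (μ := μ) two_ne_zero).symm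

theorem lintegral_enorm_ft_sq {u : En n → ℂ} (hu : Integrable u) (hu₂ : MemLp u 2) :
    ∫⁻ ξ, ‖ft u ξ‖ₑ ^ 2 = ENNReal.ofReal ((2 * π) ^ n) * ∫⁻ y, ‖u y‖ₑ ^ 2 := by
  have hfourier : ∫⁻ ξ, ‖𝓕 u ξ‖ₑ ^ 2 = ∫⁻ y, ‖u y‖ₑ ^ 2 := by
    rw [lintegral_enorm_sq_eq, lintegral_enorm_sq_eq,
      eLpNorm_congr_ae (fourier_ae_eq_fourier_toLp hu hu₂), ← Lp.enorm_def, ← ofReal_norm,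
      Lp.norm_fourier_eq, ofReal_norm, Lp.enorm_def, eLpNorm_congr_ae hu₂.coeFn_toLp]
  simp_rw [ft_eq_fourier]
  rw [lintegral_comp_smul_of_pos (fun x => ‖𝓕 u x‖ₑ ^ 2) (by positivity), hfourier, inv_pow,
    inv_inv]

end Plancherel

section Truncation

variable {α E : Type*} [MeasurableSpace α] [NormedAddCommGroup E] {μ : Measure α}
  {q : ℝ} {Λ : ℝ≥0∞}

theorem lintegral_enorm_indicator_lt_le (hq : 1 ≤ q) (hΛ₀ : Λ ≠ 0) (hΛ : Λ ≠ ⊤) (u : α → E) :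
    ∫⁻ y, ‖{y | Λ < ‖u y‖ₑ}.indicator u y‖ₑ ∂μ ≤ Λ ^ (1 - q) * ∫⁻ y, ‖u y‖ₑ ^ q ∂μ := by
  rw [← lintegral_const_mul' _ _ (ENNReal.rpow_ne_top_of_ne_zero hΛ₀ hΛ)]
  refine lintegral_mono fun y => ?_
  by_cases hy : y ∈ {y | Λ < ‖u y‖ₑ}
  · rw [Set.indicator_of_mem hy]
    replace hy : Λ < ‖u y‖ₑ := hy
    calc ‖u y‖ₑ = ‖u y‖ₑ ^ (1 - q) * ‖u y‖ₑ ^ q := by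
          rw [← ENNReal.rpow_add _ _ (pos_of_gt hy).ne' enorm_ne_top, sub_add_cancel,
            ENNReal.rpow_one]
      _ ≤ Λ ^ (1 - q) * ‖u y‖ₑ ^ q := by
          gcongr ?_ * _
          rw [← neg_sub, ENNReal.rpow_neg, ENNReal.rpow_neg]
          exact ENNReal.inv_le_inv.2 (ENNReal.rpow_le_rpow hy.le (by linarith))
  · rw [Set.indicator_of_notMem hy]
    simp

theorem lintegral_enorm_sq_indicator_le_le (hq : q ≤ 2) (hΛ₀ : Λ ≠ 0) (hΛ : Λ ≠ ⊤) (u : α → E) :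
    ∫⁻ y, ‖{y | Λ < ‖u y‖ₑ}ᶜ.indicator u y‖ₑ ^ 2 ∂μ ≤ Λ ^ (2 - q) * ∫⁻ y, ‖u y‖ₑ ^ q ∂μ := by
  rw [← lintegral_const_mul' _ _ (ENNReal.rpow_ne_top_of_ne_zero hΛ₀ hΛ)]
  refine lintegral_mono fun y => ?_
  by_cases hy : Λ < ‖u y‖ₑ
  · rw [Set.indicator_of_notMem (by simpa using hy)]
    simp
  rw [Set.indicator_of_mem (by simpa using hy)]
  rcases eq_or_ne (‖u y‖ₑ) 0 with hy₀ | hy₀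
  · simp [hy₀]
  calc ‖u y‖ₑ ^ 2 = ‖u y‖ₑ ^ (2 - q) * ‖u y‖ₑ ^ q := by
        rw [← ENNReal.rpow_add _ _ hy₀ enorm_ne_top, sub_add_cancel, ENNReal.rpow_two]
    _ ≤ Λ ^ (2 - q) * ‖u y‖ₑ ^ q := by
        gcongr
        exact not_lt.1 hy

end Truncation

section Bernstein

variable {n : ℕ}

/-- The `L²` energy of `U` in the ball of radius `R` about the origin. -/
def ballEnergy (R : ℝ) (U : En n → ℂ) : ℝ≥0∞ := ∫⁻ ξ in Metric.closedBall 0 R, ‖U ξ‖ₑ ^ 2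

theorem enorm_add_sq_le {E : Type*} [NormedAddCommGroup E] (x y : E) :
    ‖x + y‖ₑ ^ 2 ≤ 2 * ‖x‖ₑ ^ 2 + 2 * ‖y‖ₑ ^ 2 := by
  have h := ENNReal.rpow_add_le_mul_rpow_add_rpow ‖x‖ₑ ‖y‖ₑ one_le_two
  norm_num at h
  rw [← mul_add]
  exact (pow_le_pow_left' (enorm_add_le x y) 2).trans h

theorem ballEnergy_add_le (R : ℝ) {U U' : En n → ℂ} (hU : AEStronglyMeasurable U) :
    ballEnergy R (fun ξ => U ξ + U' ξ) ≤ 2 * ballEnergy R U + 2 * ballEnergy R U' := by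
  rw [ballEnergy, ballEnergy, ballEnergy, ← lintegral_const_mul' _ _ ENNReal.ofNat_ne_top,
    ← lintegral_const_mul' _ _ ENNReal.ofNat_ne_top,
    ← lintegral_add_left' ((hU.restrict.enorm.pow_const 2).const_mul 2)]
  exact lintegral_mono fun ξ => enorm_add_sq_le _ _

theorem ballEnergy_ft_le_lintegral_enorm {R : ℝ} (hR : 0 ≤ R) (u : En n → ℂ) :
    ballEnergy R (ft u) ≤
      ENNReal.ofReal (R ^ n) * volume (Metric.closedBall (0 : En n) 1) * (∫⁻ y, ‖u y‖ₑ) ^ 2 := by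
  refine (lintegral_mono fun ξ => pow_le_pow_left' (enorm_ft_le u ξ) 2).trans_eq ?_
  rw [lintegral_const, Measure.restrict_apply_univ, Measure.addHaar_closedBall' volume _ hR,
    finrank_euclideanSpace_fin, mul_comm]

theorem ballEnergy_ft_le_lintegral_enorm_sq (R : ℝ) {u : En n → ℂ} (hu : Integrable u)
    (hu₂ : MemLp u 2) :
    ballEnergy R (ft u) ≤ ENNReal.ofReal ((2 * π) ^ n) * ∫⁻ y, ‖u y‖ₑ ^ 2 :=
  (setLIntegral_le_lintegral _ _).trans_eq (lintegral_enorm_ft_sq hu hu₂)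

theorem mul_rpow_sub_mul_rpow {a b : ℝ≥0∞} (ha : a ≠ 0) (hb₀ : b ≠ 0) (hb : b ≠ ⊤) (q t : ℝ) :
    (a * b) ^ (t - q) * b ^ q = a ^ (t - q) * b ^ t := by
  rw [ENNReal.mul_rpow_of_ne_zero ha hb₀, mul_assoc, ← ENNReal.rpow_add _ _ hb₀ hb,
    sub_add_cancel]

/-- The part of `u` above the height `Λ` is estimated in `L¹`, the part below it in `L²`. -/
theorem ballEnergy_ft_le_of_threshold {q : ℝ} (hq₁ : 1 ≤ q) (hq₂ : q ≤ 2) {R : ℝ} (hR : 0 ≤ R)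
    {Λ : ℝ≥0∞} (hΛ₀ : Λ ≠ 0) (hΛ : Λ ≠ ⊤) {u : En n → ℂ} (hu : Integrable u)
    (huq : ∫⁻ y, ‖u y‖ₑ ^ q ≠ ⊤) :
    ballEnergy R (ft u) ≤
      2 * (ENNReal.ofReal (R ^ n) * volume (Metric.closedBall (0 : En n) 1) *
        (Λ ^ (1 - q) * ∫⁻ y, ‖u y‖ₑ ^ q) ^ 2) +
      2 * (ENNReal.ofReal ((2 * π) ^ n) * (Λ ^ (2 - q) * ∫⁻ y, ‖u y‖ₑ ^ q)) := by
  set S : Set (En n) := {y | Λ < ‖u y‖ₑ} with hS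
  have hSm : NullMeasurableSet S := nullMeasurableSet_lt aemeasurable_const hu.1.enorm
  have hlow := lintegral_enorm_sq_indicator_le_le (μ := volume) hq₂ hΛ₀ hΛ u
  have hInt : Integrable (S.indicator u) := hu.indicator₀ hSm
  have hInt' : Integrable (Sᶜ.indicator u) := hu.indicator₀ hSm.compl
  have hmem : MemLp (Sᶜ.indicator u) 2 := by
    refine ⟨hInt'.1, lt_top_iff_ne_top.2 fun htop => ?_⟩
    rw [← hS, lintegral_enorm_sq_eq, htop, ENNReal.top_pow two_ne_zero, top_le_iff] at hlow
    exact ENNReal.mul_ne_top (ENNReal.rpow_ne_top_of_ne_zero hΛ₀ hΛ) huq hlow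
  have hsum : ft u = fun ξ => ft (S.indicator u) ξ + ft (Sᶜ.indicator u) ξ := by
    funext ξ
    rw [← ft_add hInt hInt', Set.indicator_self_add_compl]
  rw [hsum]
  refine (ballEnergy_add_le R (continuous_ft hInt).aestronglyMeasurable).trans ?_
  gcongr
  · exact (ballEnergy_ft_le_lintegral_enorm hR _).trans
      (by gcongr; exact lintegral_enorm_indicator_lt_le hq₁ hΛ₀ hΛ u)
  · exact (ballEnergy_ft_le_lintegral_enorm_sq R hInt' hmem).trans (by gcongr)

theorem exists_ballEnergy_ft_le_of_le_two {q : ℝ} (hq₁ : 1 ≤ q) (hq₂ : q ≤ 2) :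
    ∃ C : ℝ≥0∞, C ≠ ⊤ ∧ ∀ R : ℝ, 1 ≤ R → ∀ u : En n → ℂ, Integrable u →
      MemLp u (ENNReal.ofReal q) → ballEnergy R (ft u) ≤
        C * ENNReal.ofReal (R ^ (n * (2 / q - 1))) * eLpNorm u (ENNReal.ofReal q) volume ^ 2 := by
  have hq : 0 < q := by linarith
  have hq' : ENNReal.ofReal q ≠ 0 := by simpa using hq
  refine ⟨2 * volume (Metric.closedBall (0 : En n) 1) + 2 * ENNReal.ofReal ((2 * π) ^ n),
    by have := measure_closedBall_lt_top (x := (0 : En n)) (r := 1) (μ := volume).ne; finiteness,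
    fun R hR u hu huq => ?_⟩
  set N := eLpNorm u (ENNReal.ofReal q) volume with hN
  have hN_top : N ≠ ⊤ := huq.2.ne
  rcases eq_or_ne N 0 with hN₀ | hN₀
  · rw [hN, eLpNorm_eq_zero_iff hu.1 hq'] at hN₀
    have hzero (ξ : En n) : ft u ξ = 0 :=
      integral_eq_zero_of_ae (hN₀.mono fun y hy => by simp [hy])
    simp [ballEnergy, hzero]
  have hNq : ∫⁻ y, ‖u y‖ₑ ^ q = N ^ q := by
    rw [hN, eLpNorm_eq_lintegral_rpow_enorm_toReal hq' ENNReal.ofReal_ne_top,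
      ENNReal.toReal_ofReal hq.le, ← ENNReal.rpow_mul, one_div, inv_mul_cancel₀ hq.ne',
      ENNReal.rpow_one]
  have hR₀ : 0 < R := by linarith
  set s : ℝ≥0∞ := ENNReal.ofReal R with hs
  have hs₀ : s ≠ 0 := by simpa [hs] using hR₀
  have hs_top : s ≠ ⊤ := ENNReal.ofReal_ne_top
  have hpow (t : ℝ) : ENNReal.ofReal (R ^ t) = s ^ t := (ENNReal.ofReal_rpow_of_pos hR₀).symm
  have hs₁ : s ^ ((n : ℝ) / q) ≠ 0 := by simp [hs₀, hs_top]
  have hs₂ : s ^ ((n : ℝ) / q) ≠ ⊤ := by simp [hs₀, hs_top]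
  have hbound := ballEnergy_ft_le_of_threshold hq₁ hq₂ hR₀.le (mul_ne_zero hs₁ hN₀)
    (ENNReal.mul_ne_top hs₂ hN_top) hu (hNq ▸ ENNReal.rpow_ne_top_of_nonneg hq.le hN_top)
  rw [hNq, mul_rpow_sub_mul_rpow hs₁ hN₀ hN_top, mul_rpow_sub_mul_rpow hs₁ hN₀ hN_top,
    ENNReal.rpow_one, ENNReal.rpow_two, mul_pow, ← ENNReal.rpow_mul, ← ENNReal.rpow_mul,
    ← ENNReal.rpow_two (s ^ _), ← ENNReal.rpow_mul, ← Real.rpow_natCast, hpow] at hbound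
  have hhigh : s ^ (n : ℝ) * s ^ ((n : ℝ) / q * (1 - q) * 2) = s ^ (n * (2 / q - 1)) := by
    rw [← ENNReal.rpow_add _ _ hs₀ hs_top]
    congr 1
    field_simp
    ring
  have hlow : (n : ℝ) / q * (2 - q) = n * (2 / q - 1) := by field_simp
  rw [hpow, ← hhigh]
  rw [hlow, ← hhigh] at hbound
  exact hbound.trans_eq (by ring)

/-- The power of `R ^ n` lost in the estimate of the squared `L²` norm over the ball of radius `R`
of the Fourier transform of an `L^q` function. -/
def bernsteinLoss (q : ℝ≥0∞) : ℝ := max (2 * q⁻¹.toReal - 1) 0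

/-- Membership in every `L^p`, `0 ≤ p ≤ ∞`. -/
def InAllLp (f : En n → ℂ) : Prop := ∀ p : ℝ≥0∞, MemLp f p volume

theorem InAllLp.integrable {f : En n → ℂ} (hf : InAllLp f) : Integrable f :=
  memLp_one_iff_integrable.1 (hf 1)

/-- The product of `f` with the decaying weight. -/
def weighted (f : En n → ℂ) : En n → ℂ := fun x => (weight x : ℂ) * f x

theorem norm_weighted_le (f : En n → ℂ) (x : En n) : ‖weighted f x‖ ≤ ‖f x‖ := by
  rw [weighted, norm_mul, Complex.norm_real, Real.norm_of_nonneg (weight_pos x).le]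
  exact mul_le_of_le_one_left (norm_nonneg _) (weight_le_one x)

theorem InAllLp.weighted {f : En n → ℂ} (hf : InAllLp f) : InAllLp (weighted f) := fun p =>
  (hf p).mono ((Complex.continuous_ofReal.comp continuous_weight).aestronglyMeasurable.mul (hf p).1)
    (.of_forall (norm_weighted_le f))

theorem exists_eLpNorm_two_weighted_le {q : ℝ≥0∞} (hq : 2 ≤ q) :
    ∃ C : ℝ≥0∞, C ≠ ⊤ ∧ ∀ f : En n → ℂ, AEStronglyMeasurable f →
      eLpNorm (weighted f) 2 volume ≤ C * eLpNorm f q volume := by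
  have hle : q⁻¹ ≤ 2⁻¹ := ENNReal.inv_le_inv.2 hq
  set s : ℝ≥0∞ := (2⁻¹ - q⁻¹)⁻¹ with hs
  have hs₁ : 1 ≤ s := ENNReal.one_le_inv.2 (tsub_le_self.trans (by simp))
  have : ENNReal.HolderTriple s q 2 := ⟨by rw [hs, inv_inv, tsub_add_cancel_of_le hle]⟩
  refine ⟨eLpNorm (weight (n := n)) s volume, (memLp_weight hs₁).2.ne, fun f hf => ?_⟩
  have hsmul : weighted f = weight (n := n) • f := by
    funext x
    simp [weighted]
  rw [hsmul]
  exact eLpNorm_smul_le_mul_eLpNorm hf continuous_weight.aestronglyMeasurable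

theorem bernsteinLoss_of_le_two {q : ℝ≥0∞} (hq : q ≤ 2) (hq₀ : q ≠ 0) :
    bernsteinLoss q = 2 / q.toReal - 1 := by
  have hinv : (2 : ℝ≥0∞)⁻¹.toReal ≤ q⁻¹.toReal :=
    ENNReal.toReal_mono (ENNReal.inv_ne_top.2 hq₀) (ENNReal.inv_le_inv.2 hq)
  rw [ENNReal.toReal_inv, ENNReal.toReal_ofNat, ENNReal.toReal_inv] at hinv
  rw [bernsteinLoss, ENNReal.toReal_inv, max_eq_left (by linarith), div_eq_mul_inv]

theorem bernsteinLoss_of_two_le {q : ℝ≥0∞} (hq : 2 ≤ q) : bernsteinLoss q = 0 := by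
  have hinv : q⁻¹.toReal ≤ (2 : ℝ≥0∞)⁻¹.toReal :=
    ENNReal.toReal_mono (by simp) (ENNReal.inv_le_inv.2 hq)
  rw [ENNReal.toReal_inv 2, ENNReal.toReal_ofNat] at hinv
  exact max_eq_right (by linarith)

theorem exists_ballEnergy_ft_weighted_le {q : ℝ≥0∞} (hq : 1 ≤ q) :
    ∃ C : ℝ≥0∞, C ≠ ⊤ ∧ ∀ R : ℝ, 1 ≤ R → ∀ f : En n → ℂ, InAllLp f →
      ballEnergy R (ft (weighted (weighted f))) ≤
        C * ENNReal.ofReal (R ^ (n * bernsteinLoss q)) * eLpNorm (weighted f) q volume ^ 2 := by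
  rcases le_total q 2 with hq₂ | hq₂
  · have hq_top : q ≠ ⊤ := ne_top_of_le_ne_top ENNReal.ofNat_ne_top hq₂
    obtain ⟨C, hC, hbound⟩ := exists_ballEnergy_ft_le_of_le_two (n := n) (q := q.toReal)
      (by simpa using ENNReal.toReal_mono hq_top hq)
      (by simpa using ENNReal.toReal_mono ENNReal.ofNat_ne_top hq₂)
    rw [ENNReal.ofReal_toReal hq_top] at hbound
    refine ⟨C, hC, fun R hR f hf => ?_⟩
    rw [bernsteinLoss_of_le_two hq₂ (zero_lt_one.trans_le hq).ne']
    refine (hbound R hR _ hf.weighted.weighted.integrable (hf.weighted.weighted q)).trans ?_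
    gcongr
    exact eLpNorm_mono (norm_weighted_le _)
  · obtain ⟨C, hC, hbound⟩ := exists_eLpNorm_two_weighted_le (n := n) hq₂
    refine ⟨ENNReal.ofReal ((2 * π) ^ n) * C ^ 2, by finiteness, fun R _ f hf => ?_⟩
    refine (ballEnergy_ft_le_lintegral_enorm_sq R hf.weighted.weighted.integrable
      (hf.weighted.weighted 2)).trans ?_
    rw [bernsteinLoss_of_two_le hq₂, mul_zero, Real.rpow_zero, ENNReal.ofReal_one, mul_one,
      lintegral_enorm_sq_eq, mul_assoc, ← mul_pow]
    gcongr
    exact hbound _ (hf.weighted q).1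

end Bernstein

/-! ### Operators with compactly supported symbols -/

section LocalizedSymbol

variable {n : ℕ}

/-- Repeated integration by parts, one application of `1 - ∂_i²` for each coordinate. -/
theorem exists_norm_integral_mul_expI_le {K : Set (En n)} (hK : IsCompact K) :
    ∃ C : ℝ, 0 ≤ C ∧ ∀ (ψ : En n → ℂ) (B : ℝ), ContDiff ℝ ∞ ψ → (∀ x ∉ K, ψ x = 0) →
      (∀ x, DerivBoundAt basisVec (2 * n) B ψ x) →
      ∀ θ : En n, ‖∫ x, ψ x * expI ⟪x, θ⟫‖ ≤ C * B * weight θ := by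
  obtain ⟨C, hC, hbound⟩ := exists_derivBoundAt_iterBracketOp (V := En n) basisVec id le_rfl
    (c := fun _ _ => (0 : ℝ)) (fun _ => contDiff_const) (List.finRange n) 0
  refine ⟨C * volume.real K, by positivity, fun ψ B hψ hsupp hB θ => ?_⟩
  set φ := iterBracketOp basisVec (fun _ _ => (0 : ℝ)) (List.finRange n) ψ
  have hφ : ∀ x, ‖φ x‖ ≤ C * B := fun x => (hbound ψ B x hψ
    (fun _ _ => by simpa using DerivBoundAt.zero le_rfl) (by simpa using hB x)).norm_le
  have hφ₀ : ∀ x ∉ K, φ x = 0 := iterBracketOp_eq_zero_of_notMem hK.isClosed hsupp _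
  have hparts : ∫ x, φ x * expI ⟪x, θ⟫ = ((weight θ)⁻¹ : ℝ) * ∫ x, ψ x * expI ⟪x, θ⟫ := by
    rw [integral_iterBracketOp_mul_expI hψ (HasCompactSupport.intro hK hsupp) (fun _ => 0),
      ← prod_map_finRange_eq_inv_weight]
    simp only [zero_sub, neg_sq]
  have hle : ‖∫ x, φ x * expI ⟪x, θ⟫‖ ≤ C * B * volume.real K := by
    rw [← setIntegral_eq_integral_of_forall_compl_eq_zero fun x hx => by rw [hφ₀ x hx, zero_mul]]
    refine norm_setIntegral_le_of_norm_le_const hK.measure_lt_top fun x _ => ?_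
    rw [norm_mul, norm_expI, mul_one]
    exact hφ x
  have hw := weight_pos θ
  rw [hparts, norm_mul, Complex.norm_real, Real.norm_of_nonneg (by positivity),
    inv_mul_le_iff₀ hw] at hle
  exact hle.trans_eq (by ring)

/-- The product of two balls of radius `R` in frequency space. -/
def freqBox (n : ℕ) (R : ℝ) : Set (En n × En n) :=
  Metric.closedBall 0 R ×ˢ Metric.closedBall 0 R

theorem isCompact_freqBox (R : ℝ) : IsCompact (freqBox n R) :=
  (isCompact_closedBall 0 R).prod (isCompact_closedBall 0 R)

/-- Symbols supported in `|x| ≤ 2`, `|ξ|, |η| ≤ R` all of whose derivatives of order up to `k` are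
bounded by `B`. -/
structure IsLocalizedSymbol (R B : ℝ) (k : ℕ) (A : PhaseSpace n → ℂ) : Prop where
  contDiff : ContDiff ℝ ∞ A
  eq_zero_of_notMem : ∀ q ∉ Metric.closedBall (0 : En n) 2 ×ˢ freqBox n R, A q = 0
  derivBoundAt : ∀ q, DerivBoundAt phaseDirs k B A q

/-- The integrand of `bilinearOp`. -/
def bilinearIntegrand (A : PhaseSpace n → ℂ) (U V : En n → ℂ) (x : En n) (w : En n × En n) : ℂ :=
  A (x, w) * expI (⟪x, w.1⟫ + ⟪x, w.2⟫) * U w.1 * V w.2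

/-- The operator `∫∫ A(x,ξ,η) e^{i⟨x,ξ+η⟩} U(ξ) V(η) dξ dη` acting on the frequency side. -/
def bilinearOp (A : PhaseSpace n → ℂ) (U V : En n → ℂ) (x : En n) : ℂ :=
  ∫ w, bilinearIntegrand A U V x w

namespace IsLocalizedSymbol

variable {R B : ℝ} {k : ℕ} {A : PhaseSpace n → ℂ}

theorem nonneg (hA : IsLocalizedSymbol R B k A) : 0 ≤ B := (hA.derivBoundAt 0).nonneg

theorem contDiff_slice (hA : IsLocalizedSymbol R B k A) (w : En n × En n) :
    ContDiff ℝ ∞ fun x => A (x, w) := by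
  simpa [inclX_add] using contDiff_comp_affine hA.contDiff (inclX n) (0, w)

theorem derivBoundAt_slice (hA : IsLocalizedSymbol R B k A) (w : En n × En n) (x : En n) :
    DerivBoundAt basisVec k B (fun x => A (x, w)) x := by
  have := DerivBoundAt.comp_affine (e := phaseDirs) (e' := basisVec) (w := x) hA.contDiff
    (inclX n) (0, w) (fun i => ⟨Sum.inl i, 1, by simp, by simp [phaseDirs, dirX]⟩)
    (hA.derivBoundAt _)
  simpa [inclX_add] using this

theorem bilinearIntegrand_eq_zero (hA : IsLocalizedSymbol R B k A) (U V : En n → ℂ) {x : En n}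
    {w : En n × En n} (h : (x, w) ∉ Metric.closedBall (0 : En n) 2 ×ˢ freqBox n R) :
    bilinearIntegrand A U V x w = 0 := by
  simp [bilinearIntegrand, hA.eq_zero_of_notMem _ h]

theorem enorm_bilinearIntegrand_le (hA : IsLocalizedSymbol R B k A) (U V : En n → ℂ) (x : En n)
    (w : En n × En n) :
    ‖bilinearIntegrand A U V x w‖ₑ ≤ ENNReal.ofReal B * (‖U w.1‖ₑ * ‖V w.2‖ₑ) := by
  have hAw : ‖A (x, w)‖ₑ ≤ ENNReal.ofReal B := by
    rw [← ofReal_norm]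
    exact ENNReal.ofReal_le_ofReal (hA.derivBoundAt _).norm_le
  rw [bilinearIntegrand, enorm_mul, enorm_mul, enorm_mul, enorm_expI, mul_one, mul_assoc]
  gcongr

end IsLocalizedSymbol

theorem exists_norm_integral_slice_mul_conj_le (n : ℕ) :
    ∃ C : ℝ, 0 ≤ C ∧ ∀ (R B : ℝ) (A : PhaseSpace n → ℂ), IsLocalizedSymbol R B (2 * n) A →
      ∀ (w w' : En n × En n) (θ : En n),
      ‖∫ x, (A (x, w) * (starRingEnd ℂ) (A (x, w'))) * expI ⟪x, θ⟫‖ ≤ C * B ^ 2 * weight θ := by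
  obtain ⟨C, hC, hdecay⟩ := exists_norm_integral_mul_expI_le (isCompact_closedBall (0 : En n) 2)
  refine ⟨C * 2 ^ (2 * n), by positivity, fun R B A hA w w' θ => ?_⟩
  have hconj : ContDiff ℝ ∞ fun x => (starRingEnd ℂ) (A (x, w')) :=
    Complex.conjCLE.contDiff.comp (hA.contDiff_slice w')
  refine (hdecay _ (2 ^ (2 * n) * (B * B)) ((hA.contDiff_slice w).mul hconj) (fun x hx => ?_)
    (fun x => (hA.derivBoundAt_slice w x).mul (hA.contDiff_slice w) hconj
      ((hA.derivBoundAt_slice w' x).conj (hA.contDiff_slice w'))) θ).trans_eq (by ring)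
  rw [hA.eq_zero_of_notMem (x, w) fun hq => hx hq.1, zero_mul]

end LocalizedSymbol

section FrequencyBox

variable {n : ℕ} {R : ℝ}

theorem volume_restrict_freqBox (R : ℝ) : (volume : Measure (En n × En n)).restrict (freqBox n R) =
    (volume.restrict (Metric.closedBall (0 : En n) R)).prod
      (volume.restrict (Metric.closedBall (0 : En n) R)) := by
  rw [Measure.prod_restrict]
  rfl

theorem setLIntegral_freqBox_mul (R : ℝ) {F G : En n → ℝ≥0∞} (hF : Measurable F)
    (hG : Measurable G) :
    ∫⁻ w in freqBox n R, F w.1 * G w.2 = (∫⁻ x in Metric.closedBall (0 : En n) R, F x) *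
      ∫⁻ x in Metric.closedBall (0 : En n) R, G x := by
  rw [volume_restrict_freqBox, lintegral_prod_mul hF.aemeasurable hG.aemeasurable]

theorem setLIntegral_freqBox_weight_le (R : ℝ) (c : En n) :
    ∫⁻ w in freqBox n R, ENNReal.ofReal (weight (c - (w.1 + w.2))) ≤
      volume (Metric.closedBall (0 : En n) R) * ∫⁻ x : En n, ENNReal.ofReal (weight x) := by
  have hmeas : Measurable fun w : En n × En n => ENNReal.ofReal (weight (c - (w.1 + w.2))) :=
    ENNReal.measurable_ofReal.comp (continuous_weight.comp (by fun_prop)).measurable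
  rw [volume_restrict_freqBox, lintegral_prod _ hmeas.aemeasurable]
  calc
    _ ≤ ∫⁻ x in Metric.closedBall (0 : En n) R, ∫⁻ y, ENNReal.ofReal (weight (c - (x + y))) :=
      lintegral_mono fun x => setLIntegral_le_lintegral _ _
    _ = ∫⁻ _ in Metric.closedBall (0 : En n) R, ∫⁻ y : En n, ENNReal.ofReal (weight y) := by
      simp_rw [← sub_sub, lintegral_sub_left_eq_self fun y => ENNReal.ofReal (weight y)]
    _ = _ := by rw [lintegral_const, Measure.restrict_apply_univ, mul_comm]

theorem lintegral_weight_ne_top : ∫⁻ x : En n, ENNReal.ofReal (weight x) ≠ ⊤ :=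
  integrable_weight.lintegral_lt_top.ne

theorem sq_setLIntegral_closedBall_le (R : ℝ) {U : En n → ℂ} (hU : Continuous U) :
    (∫⁻ x in Metric.closedBall (0 : En n) R, ‖U x‖ₑ) ^ 2 ≤
      volume (Metric.closedBall (0 : En n) R) * ballEnergy R U := by
  have hcs := ENNReal.lintegral_mul_le_Lp_mul_Lq
    (volume.restrict (Metric.closedBall (0 : En n) R)) .two_two (f := fun _ => 1)
    (g := fun x => ‖U x‖ₑ) aemeasurable_const hU.enorm.measurable.aemeasurable
  simp only [Pi.mul_apply, one_mul, ENNReal.one_rpow, lintegral_const,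
    Measure.restrict_apply_univ] at hcs
  refine (pow_le_pow_left' hcs 2).trans_eq ?_
  rw [mul_pow, ← ENNReal.rpow_natCast, ← ENNReal.rpow_natCast, ← ENNReal.rpow_mul,
    ← ENNReal.rpow_mul]
  simp [ballEnergy]

theorem IsLocalizedSymbol.enorm_bilinearOp_sq_le {B : ℝ} {k : ℕ} {A : PhaseSpace n → ℂ}
    (hA : IsLocalizedSymbol R B k A) {U V : En n → ℂ} (hU : Continuous U) (hV : Continuous V)
    (x : En n) :
    ‖bilinearOp A U V x‖ₑ ^ 2 ≤ ENNReal.ofReal (B ^ 2) *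
      (volume (Metric.closedBall (0 : En n) R)) ^ 2 * (ballEnergy R U * ballEnergy R V) := by
  set I : (En n → ℂ) → ℝ≥0∞ := fun U => ∫⁻ x in Metric.closedBall (0 : En n) R, ‖U x‖ₑ with hI
  have hle : ‖bilinearOp A U V x‖ₑ ≤ ENNReal.ofReal B * (I U * I V) := by
    have hset : bilinearOp A U V x = ∫ w in freqBox n R, bilinearIntegrand A U V x w :=
      (setIntegral_eq_integral_of_forall_compl_eq_zero fun w hw =>
        hA.bilinearIntegrand_eq_zero U V fun h => hw h.2).symm
    rw [hset, hI, ← setLIntegral_freqBox_mul R hU.enorm.measurable hV.enorm.measurable,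
      ← lintegral_const_mul' _ _ ENNReal.ofReal_ne_top]
    exact (enorm_integral_le_lintegral_enorm _).trans
      (lintegral_mono fun w => hA.enorm_bilinearIntegrand_le U V x w)
  calc
    _ ≤ (ENNReal.ofReal B * (I U * I V)) ^ 2 := by gcongr
    _ = ENNReal.ofReal (B ^ 2) * (I U ^ 2 * I V ^ 2) := by
      rw [mul_pow, mul_pow, ENNReal.ofReal_pow hA.nonneg]
    _ ≤ ENNReal.ofReal (B ^ 2) * ((volume (Metric.closedBall (0 : En n) R) * ballEnergy R U) *
        (volume (Metric.closedBall (0 : En n) R) * ballEnergy R V)) := by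
      gcongr <;> apply sq_setLIntegral_closedBall_le <;> assumption
    _ = _ := by ring

end FrequencyBox

theorem mul_le_sq_add_sq_ennreal (s t : ℝ≥0∞) : s * t ≤ s ^ 2 + t ^ 2 := by
  rw [sq, sq]
  rcases le_total s t with h | h
  · exact (mul_le_mul_left h t).trans le_add_self
  · exact (mul_le_mul_right h s).trans le_self_add

theorem lintegral_kernel_mul_le_of_schur {W : Type*} [MeasurableSpace W] (μ : Measure W) [SFinite μ]
    {κ : W × W → ℝ≥0∞} (hκ : Measurable κ) {M : ℝ≥0∞} (hrow : ∀ w, ∫⁻ y, κ (w, y) ∂μ ≤ M)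
    (hcol : ∀ w, ∫⁻ y, κ (y, w) ∂μ ≤ M) {a : W → ℝ≥0∞} (ha : Measurable a) :
    ∫⁻ z, κ z * (a z.1 * a z.2) ∂(μ.prod μ) ≤ 2 * M * ∫⁻ w, a w ^ 2 ∂μ := by
  have hm₁ : Measurable fun z => κ z * a z.1 ^ 2 := by fun_prop
  have hm₂ : Measurable fun z => κ z * a z.2 ^ 2 := by fun_prop
  calc
    _ ≤ ∫⁻ z, (κ z * a z.1 ^ 2 + κ z * a z.2 ^ 2) ∂(μ.prod μ) := by
      refine lintegral_mono fun z => ?_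
      rw [← mul_add]
      exact mul_le_mul_right (mul_le_sq_add_sq_ennreal _ _) _
    _ = (∫⁻ z, κ z * a z.1 ^ 2 ∂(μ.prod μ)) + ∫⁻ z, κ z * a z.2 ^ 2 ∂(μ.prod μ) :=
      lintegral_add_left hm₁ _
    _ = (∫⁻ w, (∫⁻ y, κ (w, y) ∂μ) * a w ^ 2 ∂μ) + ∫⁻ w, (∫⁻ y, κ (y, w) ∂μ) * a w ^ 2 ∂μ := by
      rw [lintegral_prod _ hm₁.aemeasurable, lintegral_prod_symm _ hm₂.aemeasurable]
      congr 1 <;> exact lintegral_congr fun w => lintegral_mul_const (a w ^ 2) (by fun_prop)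
    _ ≤ (∫⁻ w, M * a w ^ 2 ∂μ) + ∫⁻ w, M * a w ^ 2 ∂μ := by
      gcongr with w w
      exacts [hrow w, hcol w]
    _ = _ := by
      rw [lintegral_const_mul _ (ha.pow_const 2)]
      ring

/-- The `TT*` method: the square of the integral over `w` is a double integral, in which the
integration over `x` is carried out first. -/
theorem lintegral_enorm_integral_sq_le {X W : Type*} [MeasurableSpace X] [MeasurableSpace W]
    {μ : Measure X} {ν : Measure W} [SFinite μ] [SFinite ν] (G : X → W → ℂ)
    (hG : Integrable (fun q : X × (W × W) => G q.1 q.2.1 * (starRingEnd ℂ) (G q.1 q.2.2))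
      (μ.prod (ν.prod ν))) :
    ∫⁻ x, ‖∫ w, G x w ∂ν‖ₑ ^ 2 ∂μ ≤
      ∫⁻ z, ‖∫ x, G x z.1 * (starRingEnd ℂ) (G x z.2) ∂μ‖ₑ ∂(ν.prod ν) := by
  have hsq : ∀ x, ((‖∫ w, G x w ∂ν‖ ^ 2 : ℝ) : ℂ) =
      ∫ z, G x z.1 * (starRingEnd ℂ) (G x z.2) ∂(ν.prod ν) := fun x => by
    rw [integral_prod_mul (fun w => G x w) (fun w => (starRingEnd ℂ) (G x w)), integral_conj,
      Complex.mul_conj, Complex.normSq_eq_norm_sq]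
  have hInt : Integrable (fun x => ‖∫ w, G x w ∂ν‖ ^ 2) μ :=
    (hG.integral_prod_left.congr (.of_forall fun x => (hsq x).symm)).re
  calc
    _ = ∫⁻ x, ENNReal.ofReal (‖∫ w, G x w ∂ν‖ ^ 2) ∂μ := by
      simp_rw [ENNReal.ofReal_pow (norm_nonneg _), ofReal_norm]
    _ = ‖∫ x, ∫ z, G x z.1 * (starRingEnd ℂ) (G x z.2) ∂(ν.prod ν) ∂μ‖ₑ := by
      simp_rw [← hsq]
      rw [← ofReal_integral_eq_lintegral_ofReal hInt (.of_forall fun x => by positivity),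
        integral_complex_ofReal, ← ofReal_norm, Complex.norm_real,
        Real.norm_of_nonneg (integral_nonneg fun x => by positivity)]
    _ ≤ _ := by
      rw [integral_integral_swap hG]
      exact enorm_integral_le_lintegral_enorm _

section LocalL2

variable {n : ℕ}

theorem setLIntegral_weight_mul_le (R : ℝ) {a : En n × En n → ℝ≥0∞} (ha : Measurable a) :
    ∫⁻ z in freqBox n R ×ˢ freqBox n R,
      ENNReal.ofReal (weight (z.1.1 + z.1.2 - (z.2.1 + z.2.2))) * (a z.1 * a z.2) ≤
    2 * (volume (Metric.closedBall (0 : En n) R) * ∫⁻ x : En n, ENNReal.ofReal (weight x)) *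
      ∫⁻ w in freqBox n R, a w ^ 2 := by
  have hrestrict : (volume : Measure ((En n × En n) × (En n × En n))).restrict
      (freqBox n R ×ˢ freqBox n R) =
      (volume.restrict (freqBox n R)).prod (volume.restrict (freqBox n R)) := by
    rw [Measure.prod_restrict]
    rfl
  rw [hrestrict]
  refine lintegral_kernel_mul_le_of_schur (volume.restrict (freqBox n R))
    (κ := fun z => ENNReal.ofReal (weight (z.1.1 + z.1.2 - (z.2.1 + z.2.2))))
    (ENNReal.measurable_ofReal.comp (continuous_weight.comp (by fun_prop)).measurable)
    (fun w => setLIntegral_freqBox_weight_le R (w.1 + w.2)) (fun w => ?_) ha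
  refine le_of_eq_of_le (lintegral_congr fun z => ?_)
    (setLIntegral_freqBox_weight_le R (w.1 + w.2))
  rw [← weight_neg, neg_sub]

/-- The integrand of the double integral to which the `TT*` method reduces the `L²` bound. -/
def bilinearIntegrandPair (A : PhaseSpace n → ℂ) (U V : En n → ℂ) (x : En n)
    (z : (En n × En n) × (En n × En n)) : ℂ :=
  bilinearIntegrand A U V x z.1 * (starRingEnd ℂ) (bilinearIntegrand A U V x z.2)

theorem integral_bilinearIntegrandPair (A : PhaseSpace n → ℂ) (U V : En n → ℂ)
    (z : (En n × En n) × (En n × En n)) :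
    ∫ x, bilinearIntegrandPair A U V x z =
      (U z.1.1 * V z.1.2 * (starRingEnd ℂ) (U z.2.1 * V z.2.2)) *
        ∫ x, (A (x, z.1) * (starRingEnd ℂ) (A (x, z.2))) *
          expI ⟪x, z.1.1 + z.1.2 - (z.2.1 + z.2.2)⟫ := by
  rw [← integral_const_mul]
  refine integral_congr_ae (.of_forall fun x => ?_)
  have hphase : ⟪x, z.1.1 + z.1.2 - (z.2.1 + z.2.2)⟫ =
      (⟪x, z.1.1⟫ + ⟪x, z.1.2⟫) + -(⟪x, z.2.1⟫ + ⟪x, z.2.2⟫) := by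
    rw [inner_sub_right, inner_add_right, inner_add_right, sub_eq_add_neg]
  simp only [bilinearIntegrandPair, bilinearIntegrand, map_mul, conj_expI, hphase,
    expI_add (⟪x, z.1.1⟫ + ⟪x, z.1.2⟫)]
  ring

theorem continuous_bilinearIntegrand {A : PhaseSpace n → ℂ} {U V : En n → ℂ} (hA : Continuous A)
    (hU : Continuous U) (hV : Continuous V) :
    Continuous fun q : PhaseSpace n => bilinearIntegrand A U V q.1 q.2 := by
  have := continuous_expI
  unfold bilinearIntegrand
  fun_prop

namespace IsLocalizedSymbol

variable {R B : ℝ} {k : ℕ} {A : PhaseSpace n → ℂ}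

theorem bilinearIntegrandPair_eq_zero (hA : IsLocalizedSymbol R B k A) (U V : En n → ℂ) {x : En n}
    {z : (En n × En n) × (En n × En n)}
    (h : (x, z) ∉ Metric.closedBall (0 : En n) 2 ×ˢ (freqBox n R ×ˢ freqBox n R)) :
    bilinearIntegrandPair A U V x z = 0 := by
  by_contra hne
  have h₁ := not_imp_comm.1 (hA.bilinearIntegrand_eq_zero U V) (left_ne_zero_of_mul hne)
  have h₂ := not_imp_comm.1 (hA.bilinearIntegrand_eq_zero U V)
    fun h₀ => right_ne_zero_of_mul hne (by rw [h₀, map_zero])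
  exact h ⟨h₁.1, h₁.2, h₂.2⟩

theorem integrable_bilinearIntegrandPair (hA : IsLocalizedSymbol R B k A) {U V : En n → ℂ}
    (hU : Continuous U) (hV : Continuous V) :
    Integrable fun q : En n × ((En n × En n) × (En n × En n)) =>
      bilinearIntegrandPair A U V q.1 q.2 := by
  have hcont := continuous_bilinearIntegrand hA.contDiff.continuous hU hV
  have hbox := isCompact_freqBox (n := n) R
  refine Continuous.integrable_of_hasCompactSupport ?_ (HasCompactSupport.intro
    ((isCompact_closedBall (0 : En n) 2).prod (hbox.prod hbox))
    fun q hq => hA.bilinearIntegrandPair_eq_zero U V hq)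
  exact (hcont.comp (by fun_prop : Continuous fun q : En n × ((En n × En n) × (En n × En n)) =>
    (q.1, q.2.1))).mul (Complex.continuous_conj.comp (hcont.comp (by fun_prop :
      Continuous fun q : En n × ((En n × En n) × (En n × En n)) => (q.1, q.2.2))))

end IsLocalizedSymbol

theorem exists_enorm_integral_bilinearIntegrandPair_le (n : ℕ) :
    ∃ C : ℝ≥0∞, C ≠ ⊤ ∧ ∀ (R B : ℝ) (A : PhaseSpace n → ℂ), IsLocalizedSymbol R B (2 * n) A →
      ∀ (U V : En n → ℂ) (z : (En n × En n) × (En n × En n)),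
      ‖∫ x, bilinearIntegrandPair A U V x z‖ₑ ≤ C * ENNReal.ofReal (B ^ 2) *
        (ENNReal.ofReal (weight (z.1.1 + z.1.2 - (z.2.1 + z.2.2))) *
          ((‖U z.1.1‖ₑ * ‖V z.1.2‖ₑ) * (‖U z.2.1‖ₑ * ‖V z.2.2‖ₑ))) := by
  obtain ⟨C, hC, hker⟩ := exists_norm_integral_slice_mul_conj_le n
  refine ⟨ENNReal.ofReal C, ENNReal.ofReal_ne_top, fun R B A hA U V z => ?_⟩
  have hle := ENNReal.ofReal_le_ofReal (hker R B A hA z.1 z.2 (z.1.1 + z.1.2 - (z.2.1 + z.2.2)))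
  rw [ofReal_norm, ENNReal.ofReal_mul (by positivity), ENNReal.ofReal_mul hC] at hle
  rw [integral_bilinearIntegrandPair, enorm_mul, mul_comm, ← mul_assoc]
  refine (mul_le_mul_left hle _).trans_eq ?_
  simp only [enorm_mul, RCLike.enorm_conj]

/-- Orthogonality: the exponential factors make the kernel of `TT*` concentrate near
`ξ + η = ξ' + η'`, which saves a factor `R ^ n` over the trivial bound. -/
theorem exists_lintegral_enorm_bilinearOp_sq_le (n : ℕ) :
    ∃ C : ℝ≥0∞, C ≠ ⊤ ∧ ∀ (R B : ℝ), 0 ≤ R → ∀ A : PhaseSpace n → ℂ,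
      IsLocalizedSymbol R B (2 * n) A → ∀ U V : En n → ℂ, Continuous U → Continuous V →
      ∫⁻ x, ‖bilinearOp A U V x‖ₑ ^ 2 ≤ C * ENNReal.ofReal (B ^ 2) * ENNReal.ofReal (R ^ n) *
        (ballEnergy R U * ballEnergy R V) := by
  obtain ⟨C, hC, hker⟩ := exists_enorm_integral_bilinearIntegrandPair_le n
  set Wt := ∫⁻ x : En n, ENNReal.ofReal (weight x)
  have hWt : Wt ≠ ⊤ := lintegral_weight_ne_top
  refine ⟨C * 2 * (volume (Metric.closedBall (0 : En n) 1) * Wt), ?_,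
    fun R B hR A hA U V hU hV => ?_⟩
  · exact ENNReal.mul_ne_top (ENNReal.mul_ne_top hC ENNReal.ofNat_ne_top)
      (ENNReal.mul_ne_top measure_closedBall_lt_top.ne hWt)
  set a : En n × En n → ℝ≥0∞ := fun w => ‖U w.1‖ₑ * ‖V w.2‖ₑ with ha
  calc
    _ ≤ ∫⁻ z, ‖∫ x, bilinearIntegrandPair A U V x z‖ₑ :=
      lintegral_enorm_integral_sq_le _ (hA.integrable_bilinearIntegrandPair hU hV)
    _ = ∫⁻ z in freqBox n R ×ˢ freqBox n R, ‖∫ x, bilinearIntegrandPair A U V x z‖ₑ := by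
      refine (setLIntegral_eq_of_support_subset fun z hz => ?_).symm
      by_contra hbox
      exact hz (by simp [hA.bilinearIntegrandPair_eq_zero U V fun h => hbox h.2])
    _ ≤ ∫⁻ z in freqBox n R ×ˢ freqBox n R, C * ENNReal.ofReal (B ^ 2) *
        (ENNReal.ofReal (weight (z.1.1 + z.1.2 - (z.2.1 + z.2.2))) * (a z.1 * a z.2)) :=
      lintegral_mono fun z => hker R B A hA U V z
    _ ≤ C * ENNReal.ofReal (B ^ 2) * (2 * (volume (Metric.closedBall (0 : En n) R) * Wt) *
        ∫⁻ w in freqBox n R, a w ^ 2) := by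
      rw [lintegral_const_mul' _ _ (by finiteness)]
      gcongr
      exact setLIntegral_weight_mul_le R (by fun_prop)
    _ = C * ENNReal.ofReal (B ^ 2) * (2 * (volume (Metric.closedBall (0 : En n) R) * Wt) *
        (ballEnergy R U * ballEnergy R V)) := by
      simp only [ha, mul_pow]
      rw [setLIntegral_freqBox_mul R (hU.enorm.measurable.pow_const 2)
        (hV.enorm.measurable.pow_const 2), ballEnergy, ballEnergy]
    _ = _ := by
      rw [Measure.addHaar_closedBall' volume _ hR, finrank_euclideanSpace_fin]
      ring

end LocalL2

/-! ### Decay in the spatial variables -/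

section SpatialBracket

variable {n : ℕ}

theorem integral_mul_expI_mul_ft {ψ : En n → ℂ} (hψ : Continuous ψ) (hsupp : HasCompactSupport ψ)
    {f : En n → ℂ} (hf : Integrable f) (x : En n) :
    ∫ ξ, ψ ξ * expI ⟪x, ξ⟫ * ft f ξ = ∫ y, f y * ∫ ξ, ψ ξ * expI ⟪ξ, x - y⟫ := by
  have hInt : Integrable (fun z : En n × En n => ψ z.1 * f z.2 * expI ⟪z.1, x - z.2⟫)
      (volume.prod volume) := by
    refine ((hψ.integrable_of_hasCompactSupport hsupp (μ := volume)).mul_prod hf).mul_bdd (c := 1)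
      ?_ (Filter.Eventually.of_forall fun z => (norm_expI _).le)
    exact (continuous_expI.comp (by fun_prop)).aestronglyMeasurable
  calc ∫ ξ, ψ ξ * expI ⟪x, ξ⟫ * ft f ξ
      = ∫ ξ, ∫ y, ψ ξ * f y * expI ⟪ξ, x - y⟫ := by
        refine integral_congr_ae (Filter.Eventually.of_forall fun ξ => ?_)
        simp only [ft_eq_integral_expI, ← integral_const_mul]
        refine integral_congr_ae (Filter.Eventually.of_forall fun y => ?_)
        simp only [real_inner_comm ξ, sub_eq_add_neg, inner_add_right, inner_neg_right, expI_add]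
        ring
    _ = ∫ y, ∫ ξ, ψ ξ * f y * expI ⟪ξ, x - y⟫ := integral_integral_swap hInt
    _ = ∫ y, f y * ∫ ξ, ψ ξ * expI ⟪ξ, x - y⟫ := by
        simp only [← integral_const_mul, mul_left_comm, mul_assoc]

/-- Integrating by parts in `ξ` against `e^{i⟨x - y, ξ⟩}`, the bracket operator with constants `x i`
produces the factor `∏ (1 + y_i²)`, which the weight on `f y` cancels. -/
theorem integral_mul_expI_mul_ft_eq_weighted {ψ : En n → ℂ} (hψ : ContDiff ℝ ∞ ψ)
    (hsupp : HasCompactSupport ψ) {f : En n → ℂ} (hf : Integrable f)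
    (hfw : Integrable (weighted f)) (x : En n) :
    ∫ ξ, ψ ξ * expI ⟪x, ξ⟫ * ft f ξ =
      ∫ ξ, iterBracketOp basisVec (fun i _ => x i) (List.finRange n) ψ ξ * expI ⟪x, ξ⟫ *
        ft (weighted f) ξ := by
  rw [integral_mul_expI_mul_ft hψ.continuous hsupp hf, integral_mul_expI_mul_ft
    (contDiff_iterBracketOp (fun i => contDiff_const) hψ _).continuous
    (hasCompactSupport_iterBracketOp hsupp _) hfw]
  refine integral_congr_ae (Filter.Eventually.of_forall fun y => ?_)
  have hprod : ((List.finRange n).map fun i => 1 + (x i - (x - y) i) ^ 2).prod = (weight y)⁻¹ := by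
    simp [← prod_map_finRange_eq_inv_weight]
  have hy : (weight y : ℂ) ≠ 0 := mod_cast (weight_pos y).ne'
  simp only [integral_iterBracketOp_mul_expI hψ hsupp, hprod, weighted]
  push_cast
  field_simp

/-- The iterated bracket operator along the directions `e i`, with the spatial coordinate `x i` as
the coefficient in the direction `e i`. -/
def spatialBracketOp (e : Fin n → PhaseSpace n) (A : PhaseSpace n → ℂ) : PhaseSpace n → ℂ :=
  iterBracketOp e (fun i q => q.1 i) (List.finRange n) A

theorem contDiff_spatialCoord (i : Fin n) : ContDiff ℝ ∞ fun q : PhaseSpace n => q.1 i := by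
  fun_prop

theorem integral_affine_mul_expI_mul_ft {A : PhaseSpace n → ℂ} (hA : ContDiff ℝ ∞ A)
    (L : En n →L[ℝ] PhaseSpace n) (p : PhaseSpace n) {x : En n} (hx : ∀ ξ, (L ξ + p).1 = x)
    (hsupp : HasCompactSupport fun ξ => A (L ξ + p)) {f : En n → ℂ} (hf : InAllLp f) :
    ∫ ξ, A (L ξ + p) * expI ⟪x, ξ⟫ * ft f ξ =
      ∫ ξ, spatialBracketOp (fun i => L (basisVec i)) A (L ξ + p) * expI ⟪x, ξ⟫ *
        ft (weighted f) ξ := by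
  have hslice := iterBracketOp_comp_affine hA L p basisVec (c := fun i q => q.1 i)
    contDiff_spatialCoord (c₀ := fun i => x i) (fun i ξ => by rw [hx]) (List.finRange n)
  rw [integral_mul_expI_mul_ft_eq_weighted (contDiff_comp_affine hA L p) hsupp hf.integrable
    hf.weighted.integrable, ← hslice]
  rfl

theorem derivBoundAt_clm {V F κ : Type*} [NormedAddCommGroup V] [NormedSpace ℝ V]
    [NormedAddCommGroup F] [NormedSpace ℝ F] {e : κ → V} {B : ℝ} {q : V} (L : V →L[ℝ] F)
    (hq : ‖L q‖ ≤ B) (he : ∀ i, ‖L (e i)‖ ≤ B) (k : ℕ) : DerivBoundAt e k B L q := by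
  cases k with
  | zero => exact hq
  | succ k =>
    refine ⟨hq, fun i => ?_⟩
    have hderiv : dirDeriv (e i) L = fun _ => L (e i) := by
      funext y
      simp only [dirDeriv, L.fderiv]
    rw [hderiv]
    exact (DerivBoundAt.const _).mono (he i)

theorem derivBoundAt_spatialCoord (i : Fin n) (k : ℕ) {q : PhaseSpace n}
    (hq : q.1 ∈ Metric.closedBall (0 : En n) 2) :
    DerivBoundAt phaseDirs k 2 (fun q : PhaseSpace n => ((q.1 i : ℝ) : ℂ)) q := by
  refine derivBoundAt_clm (Complex.ofRealCLM.comp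
    ((EuclideanSpace.proj i : En n →L[ℝ] ℝ).comp
      (ContinuousLinearMap.fst ℝ (En n) (En n × En n)))) ?_ ?_ k
  · have hq' : ‖q.1‖ ≤ 2 := by simpa using hq
    simpa using (PiLp.norm_apply_le q.1 i).trans hq'
  · rintro (j | j | j)
    · change ‖((basisVec j i : ℝ) : ℂ)‖ ≤ 2
      rw [PiLp.single_apply]
      split_ifs <;> norm_num
    · simp [phaseDirs, dirXi, inclXi]
    · simp [phaseDirs, dirEta, inclEta]

theorem exists_isLocalizedSymbol_spatialBracketOp (j : Fin n → Fin n ⊕ Fin n ⊕ Fin n) (k : ℕ) :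
    ∃ C : ℝ, 0 ≤ C ∧ ∀ (R B : ℝ) (A : PhaseSpace n → ℂ), IsLocalizedSymbol R B (k + 2 * n) A →
      IsLocalizedSymbol R (C * B) k (spatialBracketOp (fun i => phaseDirs (j i)) A) := by
  obtain ⟨C, hC, hbound⟩ := exists_derivBoundAt_iterBracketOp phaseDirs j
    (c := fun i (q : PhaseSpace n) => q.1 i) zero_le_two contDiff_spatialCoord (List.finRange n) k
  refine ⟨C, hC, fun R B A hA => ?_⟩
  have hclosed : IsClosed (Metric.closedBall (0 : En n) 2 ×ˢ freqBox n R) :=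
    Metric.isClosed_closedBall.prod (isCompact_freqBox R).isClosed
  have hzero := iterBracketOp_eq_zero_of_notMem (e := fun i => phaseDirs (j i))
    (c := fun i q => q.1 i) hclosed hA.eq_zero_of_notMem (List.finRange n)
  refine ⟨contDiff_iterBracketOp contDiff_spatialCoord hA.contDiff _, hzero, fun q => ?_⟩
  by_cases hq : q ∈ Metric.closedBall (0 : En n) 2 ×ˢ freqBox n R
  · exact hbound A B q hA.contDiff (fun i k' => derivBoundAt_spatialCoord i k' hq.1)
      (by simpa using hA.derivBoundAt q)
  · refine (DerivBoundAt.zero (mul_nonneg hC hA.nonneg)).congr ?_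
    filter_upwards [hclosed.isOpen_compl.mem_nhds hq] with y hy
    exact (hzero y hy).symm

namespace IsLocalizedSymbol

variable {R B B' : ℝ} {k k' : ℕ} {A : PhaseSpace n → ℂ} {U V f : En n → ℂ}

theorem integrable_bilinearIntegrand (hA : IsLocalizedSymbol R B k A) (hU : Continuous U)
    (hV : Continuous V) (x : En n) : Integrable (bilinearIntegrand A U V x) :=
  ((continuous_bilinearIntegrand hA.contDiff.continuous hU hV).comp
    (Continuous.prodMk_right x)).integrable_of_hasCompactSupport <|
      HasCompactSupport.intro (isCompact_freqBox R) fun _ hw =>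
        hA.bilinearIntegrand_eq_zero U V fun h => hw h.2

theorem bilinearOp_eq_integral_integral_left (hA : IsLocalizedSymbol R B k A) (hU : Continuous U)
    (hV : Continuous V) (x : En n) : bilinearOp A U V x =
      ∫ η, expI ⟪x, η⟫ * V η * ∫ ξ, A (x, ξ, η) * expI ⟪x, ξ⟫ * U ξ := by
  have hInt := hA.integrable_bilinearIntegrand hU hV x
  rw [Measure.volume_eq_prod] at hInt
  rw [bilinearOp, Measure.volume_eq_prod, integral_prod_symm _ hInt]
  simp only [bilinearIntegrand, expI_add, ← integral_const_mul]
  congr! 4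
  ring

theorem bilinearOp_eq_integral_integral_right (hA : IsLocalizedSymbol R B k A) (hU : Continuous U)
    (hV : Continuous V) (x : En n) : bilinearOp A U V x =
      ∫ ξ, expI ⟪x, ξ⟫ * U ξ * ∫ η, A (x, ξ, η) * expI ⟪x, η⟫ * V η := by
  have hInt := hA.integrable_bilinearIntegrand hU hV x
  rw [Measure.volume_eq_prod] at hInt
  rw [bilinearOp, Measure.volume_eq_prod, integral_prod _ hInt]
  simp only [bilinearIntegrand, expI_add, ← integral_const_mul]
  congr! 4
  ring

theorem bilinearOp_ft_left (hA : IsLocalizedSymbol R B k A)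
    (hA' : IsLocalizedSymbol R B' k' (spatialBracketOp dirXi A)) (hf : InAllLp f)
    (hV : Continuous V) (x : En n) :
    bilinearOp A (ft f) V x = bilinearOp (spatialBracketOp dirXi A) (ft (weighted f)) V x := by
  rw [hA.bilinearOp_eq_integral_integral_left (continuous_ft hf.integrable) hV,
    hA'.bilinearOp_eq_integral_integral_left (continuous_ft hf.weighted.integrable) hV]
  congr! 3 with η
  have hsupp : HasCompactSupport fun ξ => A (inclXi n ξ + (x, 0, η)) :=
    HasCompactSupport.intro (isCompact_closedBall 0 R) fun ξ hξ =>
      hA.eq_zero_of_notMem _ fun h => hξ (by simpa [inclXi_add] using h.2.1)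
  have := integral_affine_mul_expI_mul_ft hA.contDiff (inclXi n) (x, 0, η) (x := x)
    (fun ξ => by rw [inclXi_add]) hsupp hf
  simp only [inclXi_add, add_zero] at this
  exact this

theorem bilinearOp_ft_right (hA : IsLocalizedSymbol R B k A)
    (hA' : IsLocalizedSymbol R B' k' (spatialBracketOp dirEta A)) (hU : Continuous U)
    (hf : InAllLp f) (x : En n) :
    bilinearOp A U (ft f) x = bilinearOp (spatialBracketOp dirEta A) U (ft (weighted f)) x := by
  rw [hA.bilinearOp_eq_integral_integral_right hU (continuous_ft hf.integrable),
    hA'.bilinearOp_eq_integral_integral_right hU (continuous_ft hf.weighted.integrable)]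
  congr! 3 with ξ
  have hsupp : HasCompactSupport fun η => A (inclEta n η + (x, ξ, 0)) :=
    HasCompactSupport.intro (isCompact_closedBall 0 R) fun η hη =>
      hA.eq_zero_of_notMem _ fun h => hη (by simpa [inclEta_add] using h.2.2)
  have := integral_affine_mul_expI_mul_ft hA.contDiff (inclEta n) (x, ξ, 0) (x := x)
    (fun η => by rw [inclEta_add]) hsupp hf
  simp only [inclEta_add, add_zero] at this
  exact this

end IsLocalizedSymbol

theorem exists_bilinearOp_ft_eq_weighted (n k : ℕ) : ∃ C : ℝ, 0 ≤ C ∧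
    ∀ (R B : ℝ) (A : PhaseSpace n → ℂ), IsLocalizedSymbol R B (k + 2 * n + 2 * n) A →
      ∃ A' : PhaseSpace n → ℂ, IsLocalizedSymbol R (C * B) k A' ∧
        ∀ f g : En n → ℂ, InAllLp f → InAllLp g → ∀ x,
          bilinearOp A (ft f) (ft g) x = bilinearOp A' (ft (weighted f)) (ft (weighted g)) x := by
  obtain ⟨C₁, hC₁, hleft⟩ := exists_isLocalizedSymbol_spatialBracketOp (n := n)
    (fun i => Sum.inr (Sum.inl i)) (k + 2 * n)
  obtain ⟨C₂, hC₂, hright⟩ := exists_isLocalizedSymbol_spatialBracketOp (n := n)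
    (fun i => Sum.inr (Sum.inr i)) k
  refine ⟨C₂ * C₁, mul_nonneg hC₂ hC₁, fun R B A hA => ?_⟩
  have hA₁ : IsLocalizedSymbol R (C₁ * B) (k + 2 * n) (spatialBracketOp dirXi A) := hleft R B A hA
  have hA₂ : IsLocalizedSymbol R (C₂ * (C₁ * B)) k
    (spatialBracketOp dirEta (spatialBracketOp dirXi A)) := hright R _ _ hA₁
  refine ⟨_, mul_assoc C₂ C₁ B ▸ hA₂, fun f g hf hg x => ?_⟩
  rw [hA.bilinearOp_ft_left hA₁ hf (continuous_ft hg.integrable),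
    hA₁.bilinearOp_ft_right hA₂ (continuous_ft hf.weighted.integrable) hg]

theorem exists_bilinearOp_ft_eq_weighted_weighted (n : ℕ) : ∃ C : ℝ, 0 ≤ C ∧
    ∀ (R B : ℝ) (A : PhaseSpace n → ℂ), IsLocalizedSymbol R B (10 * n) A →
      ∃ A' : PhaseSpace n → ℂ, IsLocalizedSymbol R (C * B) (2 * n) A' ∧
        ∀ f g : En n → ℂ, InAllLp f → InAllLp g → ∀ x, bilinearOp A (ft f) (ft g) x =
          bilinearOp A' (ft (weighted (weighted f))) (ft (weighted (weighted g))) x := by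
  obtain ⟨C₁, hC₁, hstep₁⟩ := exists_bilinearOp_ft_eq_weighted n (6 * n)
  obtain ⟨C₂, hC₂, hstep₂⟩ := exists_bilinearOp_ft_eq_weighted n (2 * n)
  refine ⟨C₂ * C₁, mul_nonneg hC₂ hC₁, fun R B A hA => ?_⟩
  obtain ⟨A₁, hA₁, heq₁⟩ := hstep₁ R B A (by convert hA using 1; ring)
  obtain ⟨A₂, hA₂, heq₂⟩ := hstep₂ R (C₁ * B) A₁ (by convert hA₁ using 1; ring)
  refine ⟨A₂, mul_assoc C₂ C₁ B ▸ hA₂, fun f g hf hg x => ?_⟩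
  rw [heq₁ f g hf hg, heq₂ _ _ hf.weighted hg.weighted]

end SpatialBracket

/-! ### Localization to unit balls -/

section Localization

variable {n : ℕ}

theorem exists_derivBoundAt_of_hasCompactSupport {V F κ : Type*} [NormedAddCommGroup V]
    [NormedSpace ℝ V] [NormedAddCommGroup F] [NormedSpace ℝ F] [Finite κ] (e : κ → V) (k : ℕ)
    {f : V → F} (hf : ContDiff ℝ ∞ f) (hsupp : HasCompactSupport f) :
    ∃ C : ℝ, 0 ≤ C ∧ ∀ q, DerivBoundAt e k C f q := by
  have := Fintype.ofFinite κ
  induction k generalizing f with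
  | zero =>
    obtain ⟨C, hC⟩ := hsupp.exists_bound_of_continuous hf.continuous
    exact ⟨C, (norm_nonneg _).trans (hC 0), hC⟩
  | succ k ih =>
    obtain ⟨C, hC⟩ := hsupp.exists_bound_of_continuous hf.continuous
    choose D hD₀ hD using fun i =>
      ih (contDiff_dirDeriv hf (e i)) (hasCompactSupport_dirDeriv hsupp (e i))
    have hC₀ : 0 ≤ C := (norm_nonneg _).trans (hC 0)
    have hsum₀ : 0 ≤ ∑ i, D i := Finset.sum_nonneg fun i _ => hD₀ i
    refine ⟨C + ∑ i, D i, by positivity, fun q =>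
      ⟨(hC q).trans (by linarith), fun i => (hD i q).mono ?_⟩⟩
    have := Finset.single_le_sum (fun i _ => hD₀ i) (Finset.mem_univ i)
    linarith

/-- A smooth cutoff on `ℝⁿ`, equal to `1` on the unit ball and supported in the ball of
radius `2`. -/
def unitBump (n : ℕ) : ContDiffBump (0 : En n) := ⟨1, 2, by norm_num, by norm_num⟩

/-- The spatial cutoff, as a function on phase space. -/
def spatialCutoff (q : PhaseSpace n) : ℂ := (unitBump n q.1 : ℝ)

theorem contDiff_spatialCutoff : ContDiff ℝ ∞ (spatialCutoff (n := n)) :=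
  Complex.ofRealCLM.contDiff.comp ((unitBump n).contDiff.comp contDiff_fst)

theorem exists_derivBoundAt_spatialCutoff (n k : ℕ) :
    ∃ C : ℝ, 0 ≤ C ∧ ∀ q : PhaseSpace n, DerivBoundAt phaseDirs k C spatialCutoff q := by
  have hsmooth : ContDiff ℝ ∞ fun x : En n => ((unitBump n x : ℝ) : ℂ) :=
    Complex.ofRealCLM.contDiff.comp (unitBump n).contDiff
  have hsupp : HasCompactSupport fun x : En n => ((unitBump n x : ℝ) : ℂ) :=
    (unitBump n).hasCompactSupport.comp_left (g := Complex.ofReal) rfl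
  obtain ⟨C, hC, hbound⟩ := exists_derivBoundAt_of_hasCompactSupport basisVec k hsmooth hsupp
  refine ⟨C, hC, fun q => ?_⟩
  have hcoord (i : Fin n ⊕ Fin n ⊕ Fin n) : ∃ j : Fin n, ∃ c : ℝ, |c| ≤ 1 ∧
      ContinuousLinearMap.fst ℝ (En n) (En n × En n) (phaseDirs i) = c • basisVec j := by
    rcases i with i | i | i
    · exact ⟨i, 1, by simp, by simp [phaseDirs, dirX, inclX]⟩
    · exact ⟨i, 0, by simp, by simp [phaseDirs, dirXi, inclXi]⟩
    · exact ⟨i, 0, by simp, by simp [phaseDirs, dirEta, inclEta]⟩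
  have := DerivBoundAt.comp_affine (e := basisVec) (e' := phaseDirs) hsmooth
    (ContinuousLinearMap.fst ℝ (En n) (En n × En n)) 0 hcoord (w := q) (hbound _)
  simp only [ContinuousLinearMap.coe_fst', add_zero] at this
  exact this

/-- Symbols supported in `|ξ|, |η| ≤ R` all of whose derivatives of order up to `k` are bounded
by `B`. -/
structure IsBandLimitedSymbol (R B : ℝ) (k : ℕ) (b : PhaseSpace n → ℂ) : Prop where
  contDiff : ContDiff ℝ ∞ b
  eq_zero_of_notMem : ∀ q, q.2 ∉ freqBox n R → b q = 0
  derivBoundAt : ∀ q, DerivBoundAt phaseDirs k B b q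

theorem IsBandLimitedSymbol.nonneg {R B : ℝ} {k : ℕ} {b : PhaseSpace n → ℂ}
    (hb : IsBandLimitedSymbol R B k b) : 0 ≤ B :=
  (hb.derivBoundAt 0).nonneg

/-- The symbol `b` recentred at the point `p` and cut off in space. -/
def localize (b : PhaseSpace n → ℂ) (p : En n) : PhaseSpace n → ℂ := fun q =>
  spatialCutoff q * b (q.1 + p, q.2)

theorem exists_isLocalizedSymbol_localize (n k : ℕ) : ∃ C : ℝ, 0 ≤ C ∧
    ∀ (R B : ℝ) (b : PhaseSpace n → ℂ), IsBandLimitedSymbol R B k b →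
      ∀ p, IsLocalizedSymbol R (C * B) k (localize b p) := by
  obtain ⟨C, hC, hcutoff⟩ := exists_derivBoundAt_spatialCutoff n k
  refine ⟨2 ^ k * C, by positivity, fun R B b hb p => ?_⟩
  have hshift : (fun q : PhaseSpace n => b (q.1 + p, q.2)) =
      fun q => b (ContinuousLinearMap.id ℝ (PhaseSpace n) q + (p, 0)) :=
    funext fun q => congrArg b (Prod.ext rfl (add_zero q.2).symm)
  have hsmooth : ContDiff ℝ ∞ fun q : PhaseSpace n => b (q.1 + p, q.2) :=
    hshift ▸ contDiff_comp_affine hb.contDiff _ _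
  have hbound (q : PhaseSpace n) :
      DerivBoundAt phaseDirs k B (fun q : PhaseSpace n => b (q.1 + p, q.2)) q :=
    hshift ▸ DerivBoundAt.comp_affine hb.contDiff _ _ (fun i => ⟨i, 1, by simp, by simp⟩)
      (hb.derivBoundAt _)
  refine ⟨contDiff_spatialCutoff.mul hsmooth, fun q hq => ?_, fun q =>
    ((hcutoff q).mul contDiff_spatialCutoff hsmooth (hbound q)).mono (by ring_nf; rfl)⟩
  by_cases hfreq : q.2 ∈ freqBox n R
  · have hx : q.1 ∉ Metric.closedBall (0 : En n) 2 := fun hx => hq ⟨hx, hfreq⟩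
    have : unitBump n q.1 = 0 :=
      (unitBump n).zero_of_le_dist (not_le.1 fun h => hx (Metric.mem_closedBall.2 h)).le
    simp [localize, spatialCutoff, this]
  · simp [localize, hb.eq_zero_of_notMem (q.1 + p, q.2) hfreq]

/-- The translate of `f` that moves the point `p` to the origin. -/
def recenter (p : En n) (f : En n → ℂ) : En n → ℂ := fun y => f (y + p)

theorem ft_recenter (p : En n) (f : En n → ℂ) (ξ : En n) :
    ft (recenter p f) ξ = expI ⟪p, ξ⟫ * ft f ξ := by
  rw [ft_eq_integral_expI, ft_eq_integral_expI, ← integral_const_mul,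
    ← integral_add_right_eq_self (fun y => expI ⟪p, ξ⟫ * (expI (-⟪y, ξ⟫) * f y)) p]
  refine integral_congr_ae (Filter.Eventually.of_forall fun y => ?_)
  simp only [recenter, ← mul_assoc, ← expI_add, inner_add_left]
  ring_nf

theorem InAllLp.recenter {f : En n → ℂ} (hf : InAllLp f) (p : En n) : InAllLp (recenter p f) :=
  fun s => (hf s).comp_measurePreserving (measurePreserving_add_right volume p)

theorem bilinearOp_ft_add (b : PhaseSpace n → ℂ) (f g : En n → ℂ) (p : En n) {y : En n}
    (hy : y ∈ Metric.closedBall (0 : En n) 1) : bilinearOp b (ft f) (ft g) (y + p) =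
      bilinearOp (localize b p) (ft (recenter p f)) (ft (recenter p g)) y := by
  refine integral_congr_ae (Filter.Eventually.of_forall fun w => ?_)
  have hone : unitBump n y = 1 := (unitBump n).one_of_mem_closedBall hy
  simp only [bilinearIntegrand, localize, spatialCutoff, hone, ft_recenter, inner_add_left,
    expI_add]
  push_cast
  ring

theorem exists_bilinearOp_ft_add_eq (n : ℕ) : ∃ C : ℝ, 0 ≤ C ∧
    ∀ (R B : ℝ) (b : PhaseSpace n → ℂ), IsBandLimitedSymbol R B (10 * n) b → ∀ p : En n,
      ∃ A : PhaseSpace n → ℂ, IsLocalizedSymbol R (C * B) (2 * n) A ∧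
        ∀ f g : En n → ℂ, InAllLp f → InAllLp g → ∀ y ∈ Metric.closedBall (0 : En n) 1,
          bilinearOp b (ft f) (ft g) (y + p) = bilinearOp A
            (ft (weighted (weighted (recenter p f)))) (ft (weighted (weighted (recenter p g))))
            y := by
  obtain ⟨C₁, hC₁, hlocal⟩ := exists_isLocalizedSymbol_localize n (10 * n)
  obtain ⟨C₂, hC₂, hweight⟩ := exists_bilinearOp_ft_eq_weighted_weighted n
  refine ⟨C₂ * C₁, mul_nonneg hC₂ hC₁, fun R B b hb p => ?_⟩
  obtain ⟨A, hA, heq⟩ := hweight R (C₁ * B) _ (hlocal R B b hb p)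
  refine ⟨A, mul_assoc C₂ C₁ B ▸ hA, fun f g hf hg y hy => ?_⟩
  rw [bilinearOp_ft_add b f g p hy, heq _ _ (hf.recenter p) (hg.recenter p)]

/-- The `L^q` norm of `f` against a decaying weight centred at `p`. -/
def localNorm (q : ℝ≥0∞) (f : En n → ℂ) (p : En n) : ℝ≥0∞ :=
  eLpNorm (weighted (recenter p f)) q volume

variable {q₁ q₂ : ℝ≥0∞}

theorem exists_ballEnergy_mul_ballEnergy_le (n : ℕ) (hq₁ : 1 ≤ q₁) (hq₂ : 1 ≤ q₂) :
    ∃ C : ℝ≥0∞, C ≠ ⊤ ∧ ∀ R : ℝ, 1 ≤ R → ∀ f g : En n → ℂ, InAllLp f → InAllLp g → ∀ p,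
      ballEnergy R (ft (weighted (weighted (recenter p f)))) *
          ballEnergy R (ft (weighted (weighted (recenter p g)))) ≤
        C * ENNReal.ofReal (R ^ (n * (bernsteinLoss q₁ + bernsteinLoss q₂))) *
          (localNorm q₁ f p * localNorm q₂ g p) ^ 2 := by
  obtain ⟨C₁, hC₁, h₁⟩ := exists_ballEnergy_ft_weighted_le (n := n) hq₁
  obtain ⟨C₂, hC₂, h₂⟩ := exists_ballEnergy_ft_weighted_le (n := n) hq₂
  refine ⟨C₁ * C₂, ENNReal.mul_ne_top hC₁ hC₂, fun R hR f g hf hg p => ?_⟩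
  refine (mul_le_mul' (h₁ R hR _ (hf.recenter p)) (h₂ R hR _ (hg.recenter p))).trans_eq ?_
  rw [mul_add, rpow_add (by positivity), ENNReal.ofReal_mul (by positivity)]
  simp only [localNorm]
  ring

theorem pow_mul_rpow_eq_sq {R : ℝ} (hR : 0 < R) (n : ℕ) (t l : ℝ) :
    R ^ (n * (2 * t)) * R ^ (n * l) = (R ^ (n * (t + l / 2))) ^ 2 := by
  rw [← rpow_natCast, ← rpow_mul hR.le, ← rpow_add hR]
  congr 1
  push_cast
  ring

theorem exists_setLIntegral_enorm_bilinearOp_sq_le (n : ℕ) (hq₁ : 1 ≤ q₁) (hq₂ : 1 ≤ q₂) :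
    ∃ C : ℝ≥0∞, C ≠ ⊤ ∧ ∀ R B : ℝ, 1 ≤ R → ∀ b : PhaseSpace n → ℂ,
      IsBandLimitedSymbol R B (10 * n) b → ∀ f g : En n → ℂ, InAllLp f → InAllLp g → ∀ p,
        ∫⁻ y in Metric.closedBall (0 : En n) 1, ‖bilinearOp b (ft f) (ft g) (y + p)‖ₑ ^ 2 ≤
          C * ENNReal.ofReal
            (B * R ^ (n * (1 / 2 + (bernsteinLoss q₁ + bernsteinLoss q₂) / 2))) ^ 2 *
              (localNorm q₁ f p * localNorm q₂ g p) ^ 2 := by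
  obtain ⟨C₁, -, hlocal⟩ := exists_bilinearOp_ft_add_eq n
  obtain ⟨C₂, hC₂, hL2⟩ := exists_lintegral_enorm_bilinearOp_sq_le n
  obtain ⟨C₃, hC₃, henergy⟩ := exists_ballEnergy_mul_ballEnergy_le n hq₁ hq₂
  refine ⟨ENNReal.ofReal (C₁ ^ 2) * C₂ * C₃,
    ENNReal.mul_ne_top (ENNReal.mul_ne_top ENNReal.ofReal_ne_top hC₂) hC₃,
    fun R B hR b hb f g hf hg p => ?_⟩
  have hR₀ : 0 < R := by positivity
  obtain ⟨A, hA, heq⟩ := hlocal R B b hb p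
  rw [setLIntegral_congr_fun Metric.isClosed_closedBall.measurableSet
    fun y hy => by rw [heq f g hf hg y hy]]
  refine (setLIntegral_le_lintegral _ _).trans <| (hL2 R _ hR₀.le A hA _ _
    (continuous_ft (hf.recenter p).weighted.weighted.integrable)
    (continuous_ft (hg.recenter p).weighted.weighted.integrable)).trans <|
      (mul_le_mul_right (henergy R hR f g hf hg p) _).trans_eq ?_
  have hpow : (R ^ n : ℝ) = R ^ (n * (2 * (1 / 2)) : ℝ) := by simp
  rw [← ENNReal.ofReal_pow (mul_nonneg hb.nonneg (by positivity)), mul_pow C₁, mul_pow B,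
    ← pow_mul_rpow_eq_sq hR₀, ← hpow, ENNReal.ofReal_mul (sq_nonneg _),
    ENNReal.ofReal_mul (sq_nonneg _), ENNReal.ofReal_mul (by positivity)]
  ring

theorem exists_enorm_bilinearOp_sq_le (n : ℕ) (hq₁ : 1 ≤ q₁) (hq₂ : 1 ≤ q₂) :
    ∃ C : ℝ≥0∞, C ≠ ⊤ ∧ ∀ R B : ℝ, 1 ≤ R → ∀ b : PhaseSpace n → ℂ,
      IsBandLimitedSymbol R B (10 * n) b → ∀ f g : En n → ℂ, InAllLp f → InAllLp g → ∀ p,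
        ∀ y ∈ Metric.closedBall (0 : En n) 1, ‖bilinearOp b (ft f) (ft g) (y + p)‖ₑ ^ 2 ≤
          C * ENNReal.ofReal (B * R ^ (n * (1 + (bernsteinLoss q₁ + bernsteinLoss q₂) / 2))) ^ 2 *
            (localNorm q₁ f p * localNorm q₂ g p) ^ 2 := by
  obtain ⟨C₁, -, hlocal⟩ := exists_bilinearOp_ft_add_eq n
  obtain ⟨C₃, hC₃, henergy⟩ := exists_ballEnergy_mul_ballEnergy_le n hq₁ hq₂
  refine ⟨ENNReal.ofReal (C₁ ^ 2) * volume (Metric.closedBall (0 : En n) 1) ^ 2 * C₃,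
    ENNReal.mul_ne_top (ENNReal.mul_ne_top ENNReal.ofReal_ne_top
      (ENNReal.pow_ne_top measure_closedBall_lt_top.ne)) hC₃,
    fun R B hR b hb f g hf hg p y hy => ?_⟩
  have hR₀ : 0 < R := by positivity
  obtain ⟨A, hA, heq⟩ := hlocal R B b hb p
  rw [heq f g hf hg y hy]
  refine (hA.enorm_bilinearOp_sq_le
    (continuous_ft (hf.recenter p).weighted.weighted.integrable)
    (continuous_ft (hg.recenter p).weighted.weighted.integrable) y).trans <|
      (mul_le_mul_right (henergy R hR f g hf hg p) _).trans_eq ?_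
  have hpow : (R ^ n : ℝ) ^ 2 = R ^ (n * (2 * 1) : ℝ) := by
    rw [← pow_mul, ← rpow_natCast]
    push_cast
    ring_nf
  rw [Measure.addHaar_closedBall' volume _ hR₀.le, finrank_euclideanSpace_fin,
    ← ENNReal.ofReal_pow (mul_nonneg hb.nonneg (by positivity)), mul_pow C₁, mul_pow B,
    ← pow_mul_rpow_eq_sq hR₀, ← hpow, ENNReal.ofReal_mul (sq_nonneg _),
    ENNReal.ofReal_mul (sq_nonneg _), ENNReal.ofReal_mul (by positivity),
    ENNReal.ofReal_pow (p := R ^ n) (by positivity)]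
  ring

end Localization

/-! ### Operators with band-limited symbols -/

section PowerIntegrals

variable {X : Type*} [MeasurableSpace X] {μ : Measure X}

theorem sq_rpow_half (x : ℝ≥0∞) (t : ℝ) : (x ^ 2) ^ (t / 2) = x ^ t := by
  rw [← ENNReal.rpow_natCast, ← ENNReal.rpow_mul, Nat.cast_ofNat, mul_div_cancel₀ _ two_ne_zero]

theorem eLpNorm_rpow_eq_lintegral {E : Type*} [NormedAddCommGroup E] {q : ℝ≥0∞} (hq₀ : q ≠ 0)
    (hq : q ≠ ⊤) (f : X → E) : eLpNorm f q μ ^ q.toReal = ∫⁻ x, ‖f x‖ₑ ^ q.toReal ∂μ := by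
  lift q to ℝ≥0 using hq
  exact eLpNorm_nnreal_pow_eq_lintegral (by exact_mod_cast hq₀)

theorem lintegral_rpow_enorm_le_of_le_two {E : Type*} [NormedAddCommGroup E] {f : X → E}
    (hf : AEStronglyMeasurable f μ) {t : ℝ} (ht₀ : 0 < t) (ht : t ≤ 2) :
    ∫⁻ x, ‖f x‖ₑ ^ t ∂μ ≤ (∫⁻ x, ‖f x‖ₑ ^ 2 ∂μ) ^ (t / 2) * μ Set.univ ^ (1 - t / 2) := by
  have h := ENNReal.rpow_le_rpow (eLpNorm'_le_eLpNorm'_mul_rpow_measure_univ ht₀ ht hf) ht₀.le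
  simp only [eLpNorm', ENNReal.rpow_ofNat] at h
  rw [ENNReal.mul_rpow_of_nonneg _ _ ht₀.le, ← ENNReal.rpow_mul, ← ENNReal.rpow_mul,
    ← ENNReal.rpow_mul, one_div_mul_cancel ht₀.ne', ENNReal.rpow_one, sub_mul,
    one_div_mul_cancel ht₀.ne', one_div_mul_eq_div] at h
  exact h

theorem lintegral_rpow_enorm_le_of_two_le {E : Type*} [NormedAddCommGroup E] {f : X → E}
    {t : ℝ} (ht : 2 ≤ t) {L : ℝ≥0∞} (hL : L ≠ ⊤) (hf : ∀ᵐ x ∂μ, ‖f x‖ₑ ^ 2 ≤ L) :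
    ∫⁻ x, ‖f x‖ₑ ^ t ∂μ ≤ L ^ ((t - 2) / 2) * ∫⁻ x, ‖f x‖ₑ ^ 2 ∂μ := by
  have ht₂ : 0 ≤ (t - 2) / 2 := by linarith
  rw [← lintegral_const_mul' _ _ (ENNReal.rpow_ne_top_of_nonneg ht₂ hL)]
  refine lintegral_mono_ae (hf.mono fun x hx => ?_)
  calc ‖f x‖ₑ ^ t = (‖f x‖ₑ ^ 2) ^ ((t - 2) / 2) * ‖f x‖ₑ ^ (2 : ℝ) := by
        rw [sq_rpow_half, ← ENNReal.rpow_add_of_nonneg _ _ (by linarith) zero_le_two,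
          sub_add_cancel]
    _ ≤ L ^ ((t - 2) / 2) * ‖f x‖ₑ ^ 2 := by
        rw [ENNReal.rpow_ofNat]
        gcongr

end PowerIntegrals

section LocalNorms

variable {n : ℕ}

theorem lintegral_setLIntegral_comp_add {F : En n → ℝ≥0∞} (hF : Measurable F) (s : Set (En n)) :
    ∫⁻ p, ∫⁻ y in s, F (y + p) = volume s * ∫⁻ x, F x := by
  have hadd : Measurable fun z : En n × En n => F (z.2 + z.1) :=
    hF.comp (measurable_snd.add measurable_fst)
  rw [lintegral_lintegral_swap hadd.aemeasurable]
  simp_rw [lintegral_add_left_eq_self F]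
  rw [lintegral_const, Measure.restrict_apply_univ, mul_comm]

theorem eLpNorm_le_of_setLIntegral_le {r : ℝ≥0∞} (hr₀ : r ≠ 0) (hr : r ≠ ⊤) {T : En n → ℂ}
    (hT : StronglyMeasurable T) {K : ℝ≥0∞} (hK : K ≠ ⊤) {M : En n → ℝ}
    (h : ∀ p, ∫⁻ y in Metric.closedBall (0 : En n) 1, ‖T (y + p)‖ₑ ^ r.toReal ≤
      K * ‖M p‖ₑ ^ r.toReal) :
    eLpNorm T r volume ≤
      ((volume (Metric.closedBall (0 : En n) 1))⁻¹ * K) ^ r.toReal⁻¹ * eLpNorm M r volume := by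
  have ht₀ : 0 < r.toReal := ENNReal.toReal_pos hr₀ hr
  have hv₀ : volume (Metric.closedBall (0 : En n) 1) ≠ 0 :=
    (Metric.measure_closedBall_pos volume _ one_pos).ne'
  rw [← ENNReal.rpow_le_rpow_iff ht₀, ENNReal.mul_rpow_of_nonneg _ _ ht₀.le,
    ENNReal.rpow_inv_rpow ht₀.ne', mul_assoc,
    ← ENNReal.mul_le_iff_le_inv hv₀ measure_closedBall_lt_top.ne, eLpNorm_rpow_eq_lintegral hr₀ hr,
    eLpNorm_rpow_eq_lintegral hr₀ hr, ← lintegral_const_mul' _ _ hK,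
    ← lintegral_setLIntegral_comp_add (hT.enorm.pow_const r.toReal)]
  exact lintegral_mono h

theorem stronglyMeasurable_bilinearOp {A : PhaseSpace n → ℂ} (hA : Continuous A) {U V : En n → ℂ}
    (hU : Continuous U) (hV : Continuous V) : StronglyMeasurable (bilinearOp A U V) :=
  (continuous_bilinearIntegrand hA hU hV).stronglyMeasurable.integral_prod_right'

theorem localNorm_le_eLpNorm {q : ℝ≥0∞} {f : En n → ℂ} (hf : AEStronglyMeasurable f volume)
    (p : En n) : localNorm q f p ≤ eLpNorm f q volume :=
  (eLpNorm_mono (norm_weighted_le _)).trans_eq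
    (eLpNorm_comp_measurePreserving hf (measurePreserving_add_right volume p))

theorem localNorm_ne_top {f : En n → ℂ} (hf : InAllLp f) (q : ℝ≥0∞) (p : En n) :
    localNorm q f p ≠ ⊤ :=
  ((hf.recenter p).weighted q).2.ne

theorem localNorm_rpow_eq_lintegral {q : ℝ≥0∞} (hq₀ : q ≠ 0) (hq : q ≠ ⊤) (f : En n → ℂ)
    (p : En n) : localNorm q f p ^ q.toReal =
      ∫⁻ y, ENNReal.ofReal (weight y) ^ q.toReal * ‖f (y + p)‖ₑ ^ q.toReal := by
  rw [localNorm, eLpNorm_rpow_eq_lintegral hq₀ hq]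
  refine lintegral_congr fun y => ?_
  rw [weighted, recenter, enorm_mul, ENNReal.mul_rpow_of_nonneg _ _ ENNReal.toReal_nonneg,
    ← ofReal_norm, Complex.norm_real, Real.norm_of_nonneg (weight_pos y).le]

theorem measurable_weight_rpow_mul_enorm_rpow {f : En n → ℂ} (hf : Continuous f) (t : ℝ) :
    Measurable fun z : En n × En n =>
      ENNReal.ofReal (weight z.2) ^ t * ‖f (z.2 + z.1)‖ₑ ^ t :=
  ((continuous_weight.comp continuous_snd).measurable.ennreal_ofReal.pow_const t).mul
    ((hf.comp (continuous_snd.add continuous_fst)).enorm.measurable.pow_const t)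

theorem measurable_localNorm {q : ℝ≥0∞} (hq₀ : q ≠ 0) (hq : q ≠ ⊤) {f : En n → ℂ}
    (hf : Continuous f) : Measurable (localNorm q f) := by
  have hroot : localNorm q f = fun p => (∫⁻ y, ENNReal.ofReal (weight y) ^ q.toReal *
      ‖f (y + p)‖ₑ ^ q.toReal) ^ q.toReal⁻¹ := by
    funext p
    rw [← localNorm_rpow_eq_lintegral hq₀ hq, ENNReal.rpow_rpow_inv (ENNReal.toReal_ne_zero.2
      ⟨hq₀, hq⟩)]
  exact hroot ▸ (measurable_weight_rpow_mul_enorm_rpow hf _).lintegral_prod_right'.pow_const _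

theorem lintegral_localNorm_rpow {q : ℝ≥0∞} (hq₀ : q ≠ 0) (hq : q ≠ ⊤) {f : En n → ℂ}
    (hf : Continuous f) : ∫⁻ p, localNorm q f p ^ q.toReal =
      (∫⁻ y : En n, ENNReal.ofReal (weight y) ^ q.toReal) * eLpNorm f q volume ^ q.toReal := by
  have hpow : ∀ y : En n, ENNReal.ofReal (weight y) ^ q.toReal ≠ ⊤ := fun y =>
    ENNReal.rpow_ne_top_of_nonneg ENNReal.toReal_nonneg ENNReal.ofReal_ne_top
  simp_rw [localNorm_rpow_eq_lintegral hq₀ hq]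
  rw [lintegral_lintegral_swap (measurable_weight_rpow_mul_enorm_rpow hf _).aemeasurable,
    eLpNorm_rpow_eq_lintegral hq₀ hq, ← lintegral_mul_const _
      (continuous_weight.measurable.ennreal_ofReal.pow_const _)]
  refine lintegral_congr fun y => ?_
  rw [lintegral_const_mul' _ _ (hpow y), lintegral_add_left_eq_self fun x => ‖f x‖ₑ ^ q.toReal]

theorem lintegral_weight_rpow_ne_top {t : ℝ} (ht : 1 ≤ t) :
    ∫⁻ y : En n, ENNReal.ofReal (weight y) ^ t ≠ ⊤ :=
  ne_top_of_le_ne_top lintegral_weight_ne_top <| lintegral_mono fun y =>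
    (ENNReal.rpow_le_rpow_of_exponent_ge (ENNReal.ofReal_le_one.2 (weight_le_one y)) ht).trans_eq
      (ENNReal.rpow_one _)

theorem exists_eLpNorm_localNorm_le (n : ℕ) {q : ℝ≥0∞} (hq : 1 ≤ q) (hq' : q ≠ ⊤) :
    ∃ C : ℝ≥0∞, C ≠ ⊤ ∧ ∀ f : En n → ℂ, Continuous f → InAllLp f →
      eLpNorm (fun p => (localNorm q f p).toReal) q volume ≤ C * eLpNorm f q volume := by
  have hq₀ : q ≠ 0 := (zero_lt_one.trans_le hq).ne'
  have ht₀ : 0 < q.toReal := ENNReal.toReal_pos hq₀ hq'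
  refine ⟨(∫⁻ y : En n, ENNReal.ofReal (weight y) ^ q.toReal) ^ q.toReal⁻¹,
    ENNReal.rpow_ne_top_of_nonneg (by positivity) (lintegral_weight_rpow_ne_top
      (ENNReal.toReal_one ▸ ENNReal.toReal_mono hq' hq)), fun f hfc hf => ?_⟩
  rw [← ENNReal.rpow_le_rpow_iff ht₀, ENNReal.mul_rpow_of_nonneg _ _ ht₀.le,
    ENNReal.rpow_inv_rpow ht₀.ne', ← lintegral_localNorm_rpow hq₀ hq' hfc,
    eLpNorm_rpow_eq_lintegral hq₀ hq']
  refine lintegral_mono fun p => ?_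
  rw [Real.enorm_eq_ofReal ENNReal.toReal_nonneg, ENNReal.ofReal_toReal (localNorm_ne_top hf q p)]

theorem exists_localNorm_majorant (n : ℕ) {q : ℝ≥0∞} (hq : 1 ≤ q) :
    ∃ C : ℝ≥0∞, C ≠ ⊤ ∧ ∀ f : En n → ℂ, Continuous f → InAllLp f →
      ∃ M : En n → ℝ, Measurable M ∧ (∀ p, localNorm q f p ≤ ‖M p‖ₑ) ∧
        eLpNorm M q volume ≤ C * eLpNorm f q volume := by
  have henorm : ∀ {a : ℝ≥0∞}, a ≠ ⊤ → ‖a.toReal‖ₑ = a := fun ha => by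
    rw [Real.enorm_eq_ofReal ENNReal.toReal_nonneg, ENNReal.ofReal_toReal ha]
  rcases eq_or_ne q ⊤ with rfl | hq'
  · refine ⟨1, ENNReal.one_ne_top, fun f _ hf => ⟨fun _ => (eLpNorm f ⊤ volume).toReal,
      measurable_const, fun p => ?_, ?_⟩⟩
    · exact (localNorm_le_eLpNorm (hf ⊤).1 p).trans_eq (henorm (hf ⊤).2.ne).symm
    · rw [eLpNorm_exponent_top, one_mul]
      exact eLpNormEssSup_le_of_ae_enorm_bound (.of_forall fun _ => (henorm (hf ⊤).2.ne).le)
  · obtain ⟨C, hC, h⟩ := exists_eLpNorm_localNorm_le n hq hq'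
    exact ⟨C, hC, fun f hfc hf => ⟨fun p => (localNorm q f p).toReal,
      (measurable_localNorm (zero_lt_one.trans_le hq).ne' hq' hfc).ennreal_toReal,
      fun p => (henorm (localNorm_ne_top hf q p)).ge, h f hfc hf⟩⟩

end LocalNorms

section GlobalEstimate

variable {n : ℕ} {q₁ q₂ r : ℝ≥0∞}

/-- The number `κ` such that symbols with frequencies in a box of side `R` and no decay define
operators `L^q₁ × L^q₂ → L^r` of norm `O(R ^ (n κ))`. -/
def criticalIndex (q₁ q₂ r : ℝ≥0∞) : ℝ :=
  max (1 / 2) (1 - r⁻¹.toReal) + (bernsteinLoss q₁ + bernsteinLoss q₂) / 2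

theorem exists_setLIntegral_rpow_le_of_le_two (n : ℕ) (hq₁ : 1 ≤ q₁) (hq₂ : 1 ≤ q₂) {t : ℝ}
    (ht₀ : 0 < t) (ht : t ≤ 2) :
    ∃ C : ℝ≥0∞, C ≠ ⊤ ∧ ∀ R B : ℝ, 1 ≤ R → ∀ b : PhaseSpace n → ℂ,
      IsBandLimitedSymbol R B (10 * n) b → ∀ f g : En n → ℂ, InAllLp f → InAllLp g → ∀ p,
        ∫⁻ y in Metric.closedBall (0 : En n) 1, ‖bilinearOp b (ft f) (ft g) (y + p)‖ₑ ^ t ≤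
          C * ENNReal.ofReal
            (B * R ^ (n * (1 / 2 + (bernsteinLoss q₁ + bernsteinLoss q₂) / 2))) ^ t *
              (localNorm q₁ f p * localNorm q₂ g p) ^ t := by
  obtain ⟨C, hC, hL2⟩ := exists_setLIntegral_enorm_bilinearOp_sq_le n hq₁ hq₂
  refine ⟨volume (Metric.closedBall (0 : En n) 1) ^ (1 - t / 2) * C ^ (t / 2),
    ENNReal.mul_ne_top (ENNReal.rpow_ne_top_of_nonneg (by linarith) measure_closedBall_lt_top.ne)
      (ENNReal.rpow_ne_top_of_nonneg (by positivity) hC), fun R B hR b hb f g hf hg p => ?_⟩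
  have hmeas : StronglyMeasurable fun y => bilinearOp b (ft f) (ft g) (y + p) :=
    (stronglyMeasurable_bilinearOp hb.contDiff.continuous (continuous_ft hf.integrable)
      (continuous_ft hg.integrable)).comp_measurable (measurable_add_const p)
  refine (lintegral_rpow_enorm_le_of_le_two hmeas.aestronglyMeasurable ht₀ ht).trans <|
    (mul_le_mul_left (ENNReal.rpow_le_rpow (hL2 R B hR b hb f g hf hg p) (by positivity))
      _).trans_eq ?_
  rw [ENNReal.mul_rpow_of_nonneg _ _ (by positivity),
    ENNReal.mul_rpow_of_nonneg _ _ (by positivity), sq_rpow_half, sq_rpow_half,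
    Measure.restrict_apply_univ]
  ring

theorem ofReal_mul_rpow_rpow {R B : ℝ} (hR : 0 < R) (hB : 0 ≤ B) (e : ℝ) {s : ℝ} (hs : 0 ≤ s) :
    ENNReal.ofReal (B * R ^ e) ^ s = ENNReal.ofReal B ^ s * ENNReal.ofReal (R ^ (e * s)) := by
  rw [ENNReal.ofReal_mul hB, ENNReal.mul_rpow_of_nonneg _ _ hs,
    ENNReal.ofReal_rpow_of_pos (rpow_pos_of_pos hR e), ← rpow_mul hR.le]

theorem rpow_sub_two_half_mul_eq (C D E Y : ℝ≥0∞) {t : ℝ} (ht : 2 ≤ t) :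
    (C * E ^ 2 * Y ^ 2) ^ ((t - 2) / 2) * (C * D ^ 2 * Y ^ 2) =
      C ^ (t / 2) * (E ^ (t - 2) * D ^ (2 : ℝ)) * Y ^ t := by
  have ht₂ : 0 ≤ (t - 2) / 2 := by linarith
  have hC : C ^ (t / 2) = C ^ ((t - 2) / 2) * C := by
    conv_rhs => enter [2]; rw [← ENNReal.rpow_one C]
    rw [← ENNReal.rpow_add_of_nonneg _ _ ht₂ zero_le_one]
    ring_nf
  have hY : Y ^ t = Y ^ (t - 2) * Y ^ 2 := by
    rw [← ENNReal.rpow_ofNat, ← ENNReal.rpow_add_of_nonneg _ _ (by linarith) zero_le_two,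
      sub_add_cancel]
  rw [ENNReal.mul_rpow_of_nonneg _ _ ht₂, ENNReal.mul_rpow_of_nonneg _ _ ht₂,
    sq_rpow_half, sq_rpow_half, hC, hY, ENNReal.rpow_ofNat]
  ring

theorem exists_setLIntegral_rpow_le_of_two_le (n : ℕ) (hq₁ : 1 ≤ q₁) (hq₂ : 1 ≤ q₂) {t : ℝ}
    (ht : 2 ≤ t) :
    ∃ C : ℝ≥0∞, C ≠ ⊤ ∧ ∀ R B : ℝ, 1 ≤ R → ∀ b : PhaseSpace n → ℂ,
      IsBandLimitedSymbol R B (10 * n) b → ∀ f g : En n → ℂ, InAllLp f → InAllLp g → ∀ p,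
        ∫⁻ y in Metric.closedBall (0 : En n) 1, ‖bilinearOp b (ft f) (ft g) (y + p)‖ₑ ^ t ≤
          C * ENNReal.ofReal
            (B * R ^ (n * (1 - t⁻¹ + (bernsteinLoss q₁ + bernsteinLoss q₂) / 2))) ^ t *
              (localNorm q₁ f p * localNorm q₂ g p) ^ t := by
  obtain ⟨C₁, hC₁, hL2⟩ := exists_setLIntegral_enorm_bilinearOp_sq_le n hq₁ hq₂
  obtain ⟨C₂, hC₂, hsup⟩ := exists_enorm_bilinearOp_sq_le n hq₁ hq₂
  have ht₂ : 0 ≤ t - 2 := by linarith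
  refine ⟨(max C₁ C₂) ^ (t / 2), ENNReal.rpow_ne_top_of_nonneg (by linarith) (by simp [hC₁, hC₂]),
    fun R B hR b hb f g hf hg p => ?_⟩
  have hR₀ : 0 < R := by positivity
  set l := bernsteinLoss q₁ + bernsteinLoss q₂
  set Y := localNorm q₁ f p * localNorm q₂ g p
  have hY : Y ≠ ⊤ := ENNReal.mul_ne_top (localNorm_ne_top hf q₁ p) (localNorm_ne_top hg q₂ p)
  have hexp : n * (1 + l / 2) * (t - 2) + n * (1 / 2 + l / 2) * 2 =
      n * (1 - t⁻¹ + l / 2) * t := by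
    field_simp
    ring
  have hconst : ENNReal.ofReal (B * R ^ (n * (1 + l / 2))) ^ (t - 2) *
      ENNReal.ofReal (B * R ^ (n * (1 / 2 + l / 2))) ^ (2 : ℝ) =
        ENNReal.ofReal (B * R ^ (n * (1 - t⁻¹ + l / 2))) ^ t := by
    rw [ofReal_mul_rpow_rpow hR₀ hb.nonneg _ ht₂, ofReal_mul_rpow_rpow hR₀ hb.nonneg _ zero_le_two,
      ofReal_mul_rpow_rpow hR₀ hb.nonneg _ (by linarith : 0 ≤ t), mul_mul_mul_comm,
      ← ENNReal.rpow_add_of_nonneg _ _ ht₂ zero_le_two, ← ENNReal.ofReal_mul (by positivity),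
      ← rpow_add hR₀, sub_add_cancel, hexp]
  rw [← hconst, ← rpow_sub_two_half_mul_eq _ _ _ _ ht]
  refine (lintegral_rpow_enorm_le_of_two_le ht
    (ENNReal.mul_ne_top (ENNReal.mul_ne_top hC₂ (by simp)) (ENNReal.pow_ne_top hY))
    (ae_restrict_of_forall_mem Metric.isClosed_closedBall.measurableSet
      (hsup R B hR b hb f g hf hg p))).trans ?_
  gcongr
  · exact le_max_right _ _
  · refine (hL2 R B hR b hb f g hf hg p).trans ?_
    gcongr
    exact le_max_left _ _

theorem exists_setLIntegral_enorm_bilinearOp_rpow_le (n : ℕ) (hq₁ : 1 ≤ q₁) (hq₂ : 1 ≤ q₂)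
    (hr₀ : r ≠ 0) (hr : r ≠ ⊤) :
    ∃ C : ℝ≥0∞, C ≠ ⊤ ∧ ∀ R B : ℝ, 1 ≤ R → ∀ b : PhaseSpace n → ℂ,
      IsBandLimitedSymbol R B (10 * n) b → ∀ f g : En n → ℂ, InAllLp f → InAllLp g → ∀ p,
        ∫⁻ y in Metric.closedBall (0 : En n) 1,
            ‖bilinearOp b (ft f) (ft g) (y + p)‖ₑ ^ r.toReal ≤
          C * ENNReal.ofReal (B * R ^ (n * criticalIndex q₁ q₂ r)) ^ r.toReal *
            (localNorm q₁ f p * localNorm q₂ g p) ^ r.toReal := by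
  have ht₀ : 0 < r.toReal := ENNReal.toReal_pos hr₀ hr
  rw [criticalIndex, ENNReal.toReal_inv]
  rcases le_total r.toReal 2 with ht | ht
  · rw [max_eq_left (by linarith [inv_anti₀ ht₀ ht])]
    exact exists_setLIntegral_rpow_le_of_le_two n hq₁ hq₂ ht₀ ht
  · rw [max_eq_right (by linarith [inv_anti₀ two_pos ht])]
    exact exists_setLIntegral_rpow_le_of_two_le n hq₁ hq₂ ht

theorem exists_eLpNorm_bilinearOp_le (n : ℕ) (hq₁ : 1 ≤ q₁) (hq₂ : 1 ≤ q₂) (hr₀ : r ≠ 0)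
    (hr : r ≠ ⊤) (hrel : r⁻¹ = q₁⁻¹ + q₂⁻¹) :
    ∃ C : ℝ≥0∞, C ≠ ⊤ ∧ ∀ R B : ℝ, 1 ≤ R → ∀ b : PhaseSpace n → ℂ,
      IsBandLimitedSymbol R B (10 * n) b → ∀ f g : En n → ℂ, Continuous f → Continuous g →
        InAllLp f → InAllLp g →
          eLpNorm (bilinearOp b (ft f) (ft g)) r volume ≤
            C * ENNReal.ofReal (B * R ^ (n * criticalIndex q₁ q₂ r)) *
              (eLpNorm f q₁ volume * eLpNorm g q₂ volume) := by
  obtain ⟨C, hC, hlocal⟩ := exists_setLIntegral_enorm_bilinearOp_rpow_le n hq₁ hq₂ hr₀ hr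
  obtain ⟨C₁, hC₁, hmaj₁⟩ := exists_localNorm_majorant n hq₁
  obtain ⟨C₂, hC₂, hmaj₂⟩ := exists_localNorm_majorant n hq₂
  have ht₀ : 0 < r.toReal := ENNReal.toReal_pos hr₀ hr
  set v := volume (Metric.closedBall (0 : En n) 1)
  have hv₀ : v ≠ 0 := (Metric.measure_closedBall_pos volume _ one_pos).ne'
  refine ⟨(v⁻¹ * C) ^ r.toReal⁻¹ * (C₁ * C₂), ENNReal.mul_ne_top
    (ENNReal.rpow_ne_top_of_nonneg (by positivity)
      (ENNReal.mul_ne_top (ENNReal.inv_ne_top.2 hv₀) hC)) (ENNReal.mul_ne_top hC₁ hC₂),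
    fun R B hR b hb f g hfc hgc hf hg => ?_⟩
  obtain ⟨M₁, hM₁, hle₁, hnorm₁⟩ := hmaj₁ f hfc hf
  obtain ⟨M₂, hM₂, hle₂, hnorm₂⟩ := hmaj₂ g hgc hg
  set D := ENNReal.ofReal (B * R ^ (n * criticalIndex q₁ q₂ r))
  have : ENNReal.HolderTriple q₁ q₂ r := ⟨hrel.symm⟩
  have hHolder : eLpNorm (M₁ • M₂) r volume ≤ eLpNorm M₁ q₁ volume * eLpNorm M₂ q₂ volume :=
    eLpNorm_smul_le_mul_eLpNorm hM₂.aestronglyMeasurable hM₁.aestronglyMeasurable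
  have hD : C * D ^ r.toReal ≠ ⊤ :=
    ENNReal.mul_ne_top hC (ENNReal.rpow_ne_top_of_nonneg ht₀.le ENNReal.ofReal_ne_top)
  have hmain := eLpNorm_le_of_setLIntegral_le hr₀ hr
    (stronglyMeasurable_bilinearOp hb.contDiff.continuous (continuous_ft hf.integrable)
      (continuous_ft hg.integrable)) hD (M := M₁ • M₂) fun p =>
      (hlocal R B hR b hb f g hf hg p).trans <| mul_le_mul_right (ENNReal.rpow_le_rpow
        ((mul_le_mul' (hle₁ p) (hle₂ p)).trans_eq (enorm_mul _ _).symm) ht₀.le) _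
  rw [← mul_assoc, ENNReal.mul_rpow_of_nonneg _ _ (by positivity),
    ENNReal.rpow_rpow_inv ht₀.ne'] at hmain
  calc _ ≤ _ := hmain
    _ ≤ (v⁻¹ * C) ^ r.toReal⁻¹ * D *
        ((C₁ * eLpNorm f q₁ volume) * (C₂ * eLpNorm g q₂ volume)) := by
      gcongr
      exact hHolder.trans (mul_le_mul' hnorm₁ hnorm₂)
    _ = _ := by ring

theorem criticalIndex_le (hq₁ : 1 ≤ q₁) (hq₂ : 1 ≤ q₂) (hrel : r⁻¹ = q₁⁻¹ + q₂⁻¹) :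
    criticalIndex q₁ q₂ r ≤
      max (max (1 / 2) (max q₁⁻¹.toReal q₂⁻¹.toReal)) (1 - r⁻¹.toReal) +
        (1 / 2) * max (r⁻¹.toReal - 1) 0 := by
  have hinv : ∀ {q : ℝ≥0∞}, 1 ≤ q → q⁻¹ ≠ ⊤ := fun hq =>
    ENNReal.inv_ne_top.2 (zero_lt_one.trans_le hq).ne'
  rw [criticalIndex, bernsteinLoss, bernsteinLoss, hrel, ENNReal.toReal_add (hinv hq₁) (hinv hq₂)]
  have ha : 0 ≤ q₁⁻¹.toReal := ENNReal.toReal_nonneg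
  have hb : 0 ≤ q₂⁻¹.toReal := ENNReal.toReal_nonneg
  simp only [max_def]
  split_ifs <;> linarith

end GlobalEstimate

/-! ### Rescaling dyadic pieces of a symbol -/

section DyadicPieces

variable {n : ℕ}

/-- The size `1 + |ξ| + |η|` of the frequency of a point of phase space. -/
def freqSize (q : PhaseSpace n) : ℝ := 1 + ‖q.2.1‖ + ‖q.2.2‖

theorem freqSize_pos (q : PhaseSpace n) : 0 < freqSize q := by
  unfold freqSize
  positivity

/-- The anisotropic dilation `(x, w) ↦ (s⁻¹ x, s w)` of phase space. -/
def dilation (n : ℕ) (s : ℝ) : PhaseSpace n →L[ℝ] PhaseSpace n :=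
  (s⁻¹ • ContinuousLinearMap.id ℝ (En n)).prodMap (s • ContinuousLinearMap.id ℝ (En n × En n))

theorem dilation_apply (s : ℝ) (q : PhaseSpace n) : dilation n s q = (s⁻¹ • q.1, s • q.2) := rfl

theorem rpow_le_five_rpow_abs {u : ℝ} (m : ℝ) (h₁ : 1 / 5 ≤ u) (h₂ : u ≤ 5) :
    u ^ m ≤ 5 ^ |m| := by
  have hu : 0 < u := by linarith
  rcases le_total 0 m with hm | hm
  · rw [abs_of_nonneg hm]
    exact Real.rpow_le_rpow hu.le h₂ hm
  · rw [abs_of_nonpos hm, ← neg_neg m, Real.rpow_neg hu.le, ← Real.inv_rpow hu.le, neg_neg]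
    exact Real.rpow_le_rpow (by positivity) (by rw [inv_le_comm₀ hu] <;> linarith) (by linarith)

namespace IsBilinearSymbol

variable {m ρ δ : ℝ} {F : PhaseSpace n → ℂ}

theorem exists_norm_le (hF : IsBilinearSymbol m ρ δ F) :
    ∃ C : ℝ, 0 ≤ C ∧ ∀ q, ‖F q‖ ≤ C * freqSize q ^ m := by
  obtain ⟨C, hC⟩ := hF.exists_bound 0 0 0
  refine ⟨|C|, abs_nonneg C, fun q => ?_⟩
  have hq : ‖F q‖ ≤ C * freqSize q ^ m := by
    simpa [phaseDeriv, multiDirDeriv_zero, mdeg, freqSize] using hC q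
  exact hq.trans
    (mul_le_mul_of_nonneg_right (le_abs_self C) (Real.rpow_nonneg (freqSize_pos q).le m))

theorem exists_norm_le_of_freqSize_mem (hF : IsBilinearSymbol m ρ δ F) :
    ∃ C : ℝ, 0 ≤ C ∧ ∀ N : ℝ, 1 ≤ N → ∀ q, freqSize q ∈ Set.Icc (N / 2) (5 * N) →
      ‖F q‖ ≤ C * N ^ m := by
  obtain ⟨C, hC₀, hC⟩ := hF.exists_norm_le
  refine ⟨C * 5 ^ |m|, by positivity, fun N hN q hq => ?_⟩
  have hN₀ : 0 < N := by linarith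
  have hratio : (freqSize q / N) ^ m ≤ 5 ^ |m| :=
    rpow_le_five_rpow_abs m (by rw [le_div_iff₀ hN₀]; linarith [hq.1])
      (by rw [div_le_iff₀ hN₀]; exact hq.2)
  calc ‖F q‖ ≤ C * freqSize q ^ m := hC q
    _ = C * (freqSize q / N) ^ m * N ^ m := by
        rw [Real.div_rpow (freqSize_pos q).le hN₀.le, mul_assoc, div_mul_cancel₀ _ (by positivity)]
    _ ≤ C * 5 ^ |m| * N ^ m := by gcongr

/-- The gain from the dilation compensates the growth of the derivative; in the `x`-directions
this is where `δ ≤ ρ` enters. -/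
theorem exists_dirDeriv_phaseDirs (hF : IsBilinearSymbol m ρ δ F) (hδρ : δ ≤ ρ)
    (i : Fin n ⊕ Fin n ⊕ Fin n) :
    ∃ m', IsBilinearSymbol m' ρ δ (dirDeriv (phaseDirs i) F) ∧ ∀ N : ℝ, 1 ≤ N →
      ∃ c : ℝ, dilation n (N ^ ρ) (phaseDirs i) = c • phaseDirs i ∧ |c| * N ^ m' ≤ N ^ m := by
  have hfreq : ∀ N : ℝ, 1 ≤ N → |N ^ ρ| * N ^ (m - ρ) ≤ N ^ m := fun N hN => by
    rw [abs_of_nonneg (by positivity), ← Real.rpow_add (by linarith), add_sub_cancel]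
  rcases i with i | i | i
  · refine ⟨m + δ, hF.dirDeriv_dirX i, fun N hN => ⟨(N ^ ρ)⁻¹, ?_, ?_⟩⟩
    · simp [dilation_apply, phaseDirs, dirX, inclX]
    · rw [abs_of_nonneg (by positivity), ← Real.rpow_neg (by linarith),
        ← Real.rpow_add (by linarith)]
      exact Real.rpow_le_rpow_of_exponent_le hN (by linarith)
  · refine ⟨m - ρ, hF.dirDeriv_dirXi i, fun N hN => ⟨N ^ ρ, ?_, hfreq N hN⟩⟩
    simp [dilation_apply, phaseDirs, dirXi, inclXi]
  · refine ⟨m - ρ, hF.dirDeriv_dirEta i, fun N hN => ⟨N ^ ρ, ?_, hfreq N hN⟩⟩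
    simp [dilation_apply, phaseDirs, dirEta, inclEta]

theorem exists_derivBoundAt_comp_dilation (hF : IsBilinearSymbol m ρ δ F) (hδρ : δ ≤ ρ) (k : ℕ) :
    ∃ C : ℝ, 0 ≤ C ∧ ∀ N : ℝ, 1 ≤ N → ∀ q : PhaseSpace n,
      freqSize (dilation n (N ^ ρ) q) ∈ Set.Icc (N / 2) (5 * N) →
        DerivBoundAt phaseDirs k (C * N ^ m) (fun q => F (dilation n (N ^ ρ) q)) q := by
  induction k generalizing m F with
  | zero =>
    obtain ⟨C, hC₀, hC⟩ := hF.exists_norm_le_of_freqSize_mem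
    exact ⟨C, hC₀, fun N hN q hq => hC N hN _ hq⟩
  | succ k ih =>
    obtain ⟨C, hC₀, hC⟩ := hF.exists_norm_le_of_freqSize_mem
    choose m' hF' hscale using hF.exists_dirDeriv_phaseDirs hδρ
    choose D hD₀ hD using fun i => ih (hF' i)
    have hsum₀ : 0 ≤ ∑ i, D i := Finset.sum_nonneg fun i _ => hD₀ i
    refine ⟨C + ∑ i, D i, by positivity, fun N hN q hq => ⟨?_, fun i => ?_⟩⟩
    · exact (hC N hN _ hq).trans (by gcongr; linarith)
    · obtain ⟨c, hdir, hc⟩ := hscale i N hN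
      have hderiv : dirDeriv (phaseDirs i) (fun q => F (dilation n (N ^ ρ) q)) =
          fun q => (c : ℂ) * dirDeriv (phaseDirs i) F (dilation n (N ^ ρ) q) := by
        simpa [hdir, dirDeriv_smul_left] using dirDeriv_comp_affine
          (hF.contDiff.differentiable (by simp)) (dilation n (N ^ ρ)) 0 (phaseDirs i)
      rw [hderiv]
      refine ((hD i N hN q hq).const_mul
        ((hF' i).contDiff.comp (dilation n (N ^ ρ)).contDiff) c).mono ?_
      calc ‖(c : ℂ)‖ * (D i * N ^ m' i) = D i * (|c| * N ^ m' i) := by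
            rw [Complex.norm_real, Real.norm_eq_abs]; ring
        _ ≤ D i * N ^ m := mul_le_mul_of_nonneg_left hc (hD₀ i)
        _ ≤ (C + ∑ i, D i) * N ^ m := by
            gcongr
            linarith [Finset.single_le_sum (fun i _ => hD₀ i) (Finset.mem_univ i)]

end IsBilinearSymbol

/-- The smooth cutoff to the frequencies `|ξ|, |η| ≲ 1`. -/
def lowCutoff (w : En n × En n) : ℂ := ((unitBump n w.1 * unitBump n w.2 : ℝ) : ℂ)

/-- The smooth cutoff to the frequencies of size comparable to `1`. -/
def annularCutoff (w : En n × En n) : ℂ := lowCutoff w - lowCutoff ((2 : ℝ) • w)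

theorem contDiff_lowCutoff : ContDiff ℝ ∞ (lowCutoff (n := n)) :=
  Complex.ofRealCLM.contDiff.comp (((unitBump n).contDiff.comp contDiff_fst).mul
    ((unitBump n).contDiff.comp contDiff_snd))

theorem lowCutoff_eq_one {w : En n × En n} (hw : w ∈ freqBox n 1) : lowCutoff w = 1 := by
  rw [lowCutoff, (unitBump n).one_of_mem_closedBall hw.1,
    (unitBump n).one_of_mem_closedBall hw.2]
  simp

theorem lowCutoff_eq_zero {w : En n × En n} (hw : w ∉ freqBox n 2) : lowCutoff w = 0 := by
  rw [freqBox, Set.mem_prod, not_and_or, Metric.mem_closedBall, Metric.mem_closedBall, not_le,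
    not_le] at hw
  rcases hw with hw | hw
  · simp [lowCutoff, (unitBump n).zero_of_le_dist hw.le]
  · simp [lowCutoff, (unitBump n).zero_of_le_dist hw.le]

theorem norm_lowCutoff_le (w : En n × En n) : ‖lowCutoff w‖ ≤ 1 := by
  rw [lowCutoff, Complex.norm_real,
    Real.norm_of_nonneg (mul_nonneg (unitBump n).nonneg (unitBump n).nonneg)]
  exact mul_le_one₀ (unitBump n).le_one (unitBump n).nonneg (unitBump n).le_one

theorem smul_mem_freqBox_iff {c R : ℝ} (hc : 0 < c) (w : En n × En n) :
    c • w ∈ freqBox n (c * R) ↔ w ∈ freqBox n R := by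
  simp [freqBox, norm_smul, abs_of_pos hc, hc]

theorem contDiff_annularCutoff : ContDiff ℝ ∞ (annularCutoff (n := n)) :=
  contDiff_lowCutoff.sub (contDiff_lowCutoff.comp (contDiff_const_smul 2))

theorem annularCutoff_eq_zero {w : En n × En n} (hw : w ∉ freqBox n 2) : annularCutoff w = 0 := by
  have hw' : (2 : ℝ) • w ∉ freqBox n 2 := fun h₂ => hw <| by
    have h : w ∈ freqBox n 1 := by
      rwa [← smul_mem_freqBox_iff two_pos, mul_one]
    exact Set.prod_mono (Metric.closedBall_subset_closedBall one_le_two)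
      (Metric.closedBall_subset_closedBall one_le_two) h
  rw [annularCutoff, lowCutoff_eq_zero hw, lowCutoff_eq_zero hw', sub_zero]

theorem annularCutoff_eq_zero_of_mem {w : En n × En n} (hw : w ∈ freqBox n (1 / 2)) :
    annularCutoff w = 0 := by
  have hw₁ : (2 : ℝ) • w ∈ freqBox n 1 := by
    rwa [show (1 : ℝ) = 2 * (1 / 2) by norm_num, smul_mem_freqBox_iff two_pos]
  have hw₂ : w ∈ freqBox n 1 :=
    Set.prod_mono (Metric.closedBall_subset_closedBall (by norm_num))
      (Metric.closedBall_subset_closedBall (by norm_num)) hw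
  rw [annularCutoff, lowCutoff_eq_one hw₁, lowCutoff_eq_one hw₂, sub_self]

/-- The part `F(x, ξ, η) Ψ(ξ / N, η / N)` of a symbol living at frequencies `|ξ| + |η| ~ N`. -/
def freqPiece (F : PhaseSpace n → ℂ) (Ψ : En n × En n → ℂ) (N : ℝ) : PhaseSpace n → ℂ :=
  fun q => F q * Ψ (N⁻¹ • q.2)

theorem exists_derivBoundAt_cutoff_smul (k : ℕ) {Ψ : En n × En n → ℂ} (hΨ : ContDiff ℝ ∞ Ψ)
    (hsupp : ∀ w ∉ freqBox n 2, Ψ w = 0) :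
    ∃ C : ℝ, 0 ≤ C ∧ ∀ c : ℝ, |c| ≤ 1 → ∀ q : PhaseSpace n,
      DerivBoundAt phaseDirs k C (fun q : PhaseSpace n => Ψ (c • q.2)) q := by
  obtain ⟨C, hC₀, hC⟩ := exists_derivBoundAt_of_hasCompactSupport
    (fun i : Fin n ⊕ Fin n => (phaseDirs (Sum.inr i)).2) k hΨ
    (HasCompactSupport.intro (isCompact_freqBox 2) hsupp)
  refine ⟨C, hC₀, fun c hc q => ?_⟩
  have hL : ∀ i : Fin n ⊕ Fin n ⊕ Fin n, ∃ j : Fin n ⊕ Fin n, ∃ c' : ℝ, |c'| ≤ 1 ∧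
      (c • ContinuousLinearMap.snd ℝ (En n) (En n × En n)) (phaseDirs i) =
        c' • (phaseDirs (Sum.inr j)).2 := by
    rintro (i | i)
    · exact ⟨Sum.inl i, 0, by simp, by simp [phaseDirs, dirX, inclX]⟩
    · exact ⟨i, c, hc, rfl⟩
  simpa using DerivBoundAt.comp_affine hΨ _ 0 hL (hC _)

theorem freqSize_mem_of_smul_mem_freqBox {N : ℝ} (hN : 1 ≤ N) {q : PhaseSpace n}
    (hq : N⁻¹ • q.2 ∈ freqBox n 2) (hlow : N ≤ 2 ∨ N⁻¹ • q.2 ∉ freqBox n (1 / 2)) :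
    freqSize q ∈ Set.Icc (N / 2) (5 * N) := by
  have hN₀ : 0 < N := by linarith
  simp only [freqBox, Set.mem_prod, mem_closedBall_zero_iff, Prod.smul_fst, Prod.smul_snd,
    norm_smul, norm_inv, Real.norm_of_nonneg hN₀.le, inv_mul_le_iff₀ hN₀, not_and_or,
    not_le] at hq hlow
  have h₁ := norm_nonneg q.2.1
  have h₂ := norm_nonneg q.2.2
  rw [Set.mem_Icc, freqSize]
  refine ⟨?_, by linarith⟩
  rcases hlow with h | h | h <;> linarith

theorem freqSize_mem_of_smul_mem_tsupport {N : ℝ} (hN : 1 ≤ N) {Ψ : En n × En n → ℂ}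
    (hsupp : ∀ w ∉ freqBox n 2, Ψ w = 0) (hlow : N ≤ 2 ∨ ∀ w ∈ freqBox n (1 / 2), Ψ w = 0)
    {q : PhaseSpace n} (hq : N⁻¹ • q.2 ∈ tsupport Ψ) :
    freqSize q ∈ Set.Icc (N / 2) (5 * N) := by
  have hN₀ : N ≠ 0 := by positivity
  have hclosed : IsClosed {w : En n × En n | freqSize (q.1, N • w) ∈ Set.Icc (N / 2) (5 * N)} :=
    isClosed_Icc.preimage (by unfold freqSize; fun_prop)
  have hsubset : Function.support Ψ ⊆
      {w : En n × En n | freqSize (q.1, N • w) ∈ Set.Icc (N / 2) (5 * N)} := fun w hw => by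
    refine freqSize_mem_of_smul_mem_freqBox hN ?_ ?_ <;> rw [inv_smul_smul₀ hN₀]
    · exact not_imp_comm.1 (hsupp w) hw
    · exact hlow.imp_right fun h hw' => hw (h w hw')
  simpa only [Set.mem_ofPred_eq, smul_inv_smul₀ hN₀] using closure_minimal hsubset hclosed hq

theorem IsBilinearSymbol.exists_isBandLimitedSymbol_freqPiece {m ρ δ : ℝ} {F : PhaseSpace n → ℂ}
    (hF : IsBilinearSymbol m ρ δ F) (hδρ : δ ≤ ρ) (hρ : ρ ≤ 1) (k : ℕ)
    {Ψ : En n × En n → ℂ} (hΨ : ContDiff ℝ ∞ Ψ) (hsupp : ∀ w ∉ freqBox n 2, Ψ w = 0) :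
    ∃ C : ℝ, 0 ≤ C ∧ ∀ N : ℝ, 1 ≤ N → (N ≤ 2 ∨ ∀ w ∈ freqBox n (1 / 2), Ψ w = 0) →
      IsBandLimitedSymbol (2 * N ^ (1 - ρ)) (C * N ^ m) k
        (fun q => freqPiece F Ψ N (dilation n (N ^ ρ) q)) := by
  obtain ⟨C, hC₀, hC⟩ := hF.exists_derivBoundAt_comp_dilation hδρ k
  obtain ⟨D, hD₀, hD⟩ := exists_derivBoundAt_cutoff_smul k hΨ hsupp
  refine ⟨2 ^ k * (C * D), by positivity, fun N hN hlow => ?_⟩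
  have hN₀ : 0 < N := by linarith
  have hc : N⁻¹ * N ^ ρ = (N ^ (1 - ρ))⁻¹ := by
    rw [Real.rpow_sub hN₀, Real.rpow_one, inv_div, div_eq_inv_mul]
  have hc₀ : 0 < N⁻¹ * N ^ ρ := by positivity
  have hc₁ : |N⁻¹ * N ^ ρ| ≤ 1 := by
    rw [abs_of_pos hc₀, hc]
    exact inv_le_one_of_one_le₀ (Real.one_le_rpow hN (by linarith))
  have hsmul : ∀ w : En n × En n, N⁻¹ • N ^ ρ • w = (N⁻¹ * N ^ ρ) • w := smul_smul _ _
  simp only [freqPiece, dilation_apply, hsmul] at hC ⊢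
  have hF' : ContDiff ℝ ∞ fun q : PhaseSpace n => F ((N ^ ρ)⁻¹ • q.1, N ^ ρ • q.2) :=
    hF.contDiff.comp (dilation n (N ^ ρ)).contDiff
  have hΨ' : ContDiff ℝ ∞ fun q : PhaseSpace n => Ψ ((N⁻¹ * N ^ ρ) • q.2) :=
    hΨ.comp (contDiff_snd.const_smul _)
  refine ⟨hF'.mul hΨ', fun q hq => ?_, fun q => ?_⟩
  · have hR : N⁻¹ * N ^ ρ * (2 * N ^ (1 - ρ)) = 2 := by
      rw [hc, mul_left_comm, inv_mul_cancel₀ (by positivity), mul_one]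
    rw [hsupp _ (by rwa [← hR, smul_mem_freqBox_iff hc₀]), mul_zero]
  by_cases hq : (N⁻¹ * N ^ ρ) • q.2 ∈ tsupport Ψ
  · have hsize : freqSize (dilation n (N ^ ρ) q) ∈ Set.Icc (N / 2) (5 * N) :=
      freqSize_mem_of_smul_mem_tsupport hN hsupp hlow (by rwa [dilation_apply, hsmul])
    exact ((hC N hN q hsize).mul hF' hΨ' (hD _ hc₁ q)).mono (le_of_eq (by ring))
  · have hzero : ∀ᶠ q' : PhaseSpace n in nhds q, Ψ ((N⁻¹ * N ^ ρ) • q'.2) = 0 :=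
      (continuous_snd.const_smul (N⁻¹ * N ^ ρ)).continuousAt.eventually
        (notMem_tsupport_iff_eventuallyEq.1 hq)
    refine (DerivBoundAt.zero (by positivity)).congr ?_
    filter_upwards [hzero] with q' hq'
    rw [hq', mul_zero]

end DyadicPieces

/-! ### Rescaling operators -/

section Dilations

open scoped FourierTransform

variable {n : ℕ}

/-- The isotropic dilation `f(s ·)`. -/
def dilate (s : ℝ) (f : En n → ℂ) : En n → ℂ := fun y => f (s • y)

theorem eLpNorm_dilate {s : ℝ} (hs : 0 < s) (f : En n → ℂ) (q : ℝ≥0∞) :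
    eLpNorm (dilate s f) q volume =
      ENNReal.ofReal (s ^ (-(n : ℝ) * q⁻¹.toReal)) * eLpNorm f q volume := by
  have hemb : MeasurableEmbedding fun y : En n => s • y :=
    (Homeomorph.smulOfNeZero s hs.ne').measurableEmbedding
  rw [show dilate s f = f ∘ fun y : En n => s • y from rfl, ← hemb.eLpNorm_map_measure,
    Measure.map_addHaar_smul _ hs.ne', eLpNorm_smul_measure_of_ne_zero (by simp [hs.ne']),
    smul_eq_mul, finrank_euclideanSpace_fin, one_div, ENNReal.ofReal_rpow_of_pos (by positivity),
    abs_of_pos (by positivity), ← Real.rpow_natCast, ← Real.rpow_neg hs.le, ← Real.rpow_mul hs.le]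

theorem InAllLp.dilate {f : En n → ℂ} (hf : InAllLp f) {s : ℝ} (hs : 0 < s) :
    InAllLp (dilate s f) := by
  have hqmp : Measure.QuasiMeasurePreserving fun y : En n => s • y :=
    ⟨measurable_const_smul s, by
      rw [Measure.map_addHaar_smul _ hs.ne']
      exact Measure.smul_absolutelyContinuous⟩
  refine fun p => ⟨(hf p).1.comp_quasiMeasurePreserving hqmp, ?_⟩
  rw [eLpNorm_dilate hs]
  exact ENNReal.mul_lt_top ENNReal.ofReal_lt_top (hf p).2

theorem ft_smul {s : ℝ} (hs : 0 < s) (f : En n → ℂ) (ξ : En n) :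
    ft f (s • ξ) = ((s ^ n)⁻¹ : ℝ) * ft (dilate s⁻¹ f) ξ := by
  have hscale := Measure.integral_comp_smul (volume : Measure (En n))
    (fun y => expI (-⟪y, ξ⟫) * dilate s⁻¹ f y) s
  rw [finrank_euclideanSpace_fin, abs_of_pos (by positivity)] at hscale
  rw [ft_eq_integral_expI, ft_eq_integral_expI, ← Complex.real_smul, ← hscale]
  simp [dilate, smul_smul, inv_mul_cancel₀ hs.ne', inner_smul_left, inner_smul_right]

theorem bilinearOp_ft_eq_comp_dilation {s : ℝ} (hs : 0 < s) (A : PhaseSpace n → ℂ)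
    (f g : En n → ℂ) (x : En n) : bilinearOp A (ft f) (ft g) x =
      bilinearOp (fun q => A (dilation n s q)) (ft (dilate s⁻¹ f)) (ft (dilate s⁻¹ g))
        (s • x) := by
  have hHaar : (volume : Measure (En n × En n)).IsAddHaarMeasure :=
    inferInstanceAs ((volume : Measure (En n)).prod (volume : Measure (En n))).IsAddHaarMeasure
  have hscale := Measure.integral_comp_smul (volume : Measure (En n × En n))
    (bilinearIntegrand A (ft f) (ft g) x) s
  rw [show Module.finrank ℝ (En n × En n) = n + n by simp, abs_of_pos (by positivity),
    eq_inv_smul_iff₀ (by positivity)] at hscale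
  rw [bilinearOp, bilinearOp, ← hscale, ← integral_smul]
  refine integral_congr_ae (.of_forall fun w => ?_)
  have hs' : (s : ℂ) ≠ 0 := by exact_mod_cast hs.ne'
  simp only [bilinearIntegrand, Prod.smul_fst, Prod.smul_snd, ft_smul hs, dilation_apply, smul_smul,
    inv_mul_cancel₀ hs.ne', one_smul, inner_smul_left, inner_smul_right, Complex.real_smul,
    conj_trivial]
  push_cast
  field_simp
  ring

/-- Under the Hölder relation the norms on the two sides scale in the same way. -/
theorem eLpNorm_bilinearOp_le_of_dilation {q₁ q₂ r : ℝ≥0∞} (hq₁ : q₁ ≠ 0) (hq₂ : q₂ ≠ 0)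
    (hrel : r⁻¹ = q₁⁻¹ + q₂⁻¹) {s : ℝ} (hs : 0 < s) {A : PhaseSpace n → ℂ} {f g : En n → ℂ}
    {K : ℝ≥0∞} (h : eLpNorm (bilinearOp (fun q => A (dilation n s q)) (ft (dilate s⁻¹ f))
      (ft (dilate s⁻¹ g))) r volume ≤
        K * (eLpNorm (dilate s⁻¹ f) q₁ volume * eLpNorm (dilate s⁻¹ g) q₂ volume)) :
    eLpNorm (bilinearOp A (ft f) (ft g)) r volume ≤
      K * (eLpNorm f q₁ volume * eLpNorm g q₂ volume) := by
  have hexp : r⁻¹.toReal = q₁⁻¹.toReal + q₂⁻¹.toReal := by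
    rw [hrel, ENNReal.toReal_add (ENNReal.inv_ne_top.2 hq₁) (ENNReal.inv_ne_top.2 hq₂)]
  have hcancel : ENNReal.ofReal (s ^ (-(n : ℝ) * r⁻¹.toReal)) *
      (ENNReal.ofReal (s⁻¹ ^ (-(n : ℝ) * q₁⁻¹.toReal)) *
        ENNReal.ofReal (s⁻¹ ^ (-(n : ℝ) * q₂⁻¹.toReal))) = 1 := by
    rw [← ENNReal.ofReal_mul (by positivity), ← ENNReal.ofReal_mul (by positivity),
      ← Real.rpow_add (by positivity), ← mul_add, ← hexp, ← Real.mul_rpow hs.le (by positivity),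
      mul_inv_cancel₀ hs.ne', Real.one_rpow, ENNReal.ofReal_one]
  have hdil : bilinearOp A (ft f) (ft g) = dilate s (bilinearOp (fun q => A (dilation n s q))
      (ft (dilate s⁻¹ f)) (ft (dilate s⁻¹ g))) :=
    funext (bilinearOp_ft_eq_comp_dilation hs A f g)
  rw [eLpNorm_dilate (inv_pos.2 hs), eLpNorm_dilate (inv_pos.2 hs)] at h
  rw [hdil, eLpNorm_dilate hs]
  refine (mul_le_mul_right h _).trans (le_of_eq ?_)
  conv_rhs => rw [← mul_one (K * _), ← hcancel]
  ring

theorem IsBilinearSymbol.exists_eLpNorm_bilinearOp_freqPiece_le {q₁ q₂ r : ℝ≥0∞} (hq₁ : 1 ≤ q₁)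
    (hq₂ : 1 ≤ q₂) (hr₀ : r ≠ 0) (hr : r ≠ ⊤) (hrel : r⁻¹ = q₁⁻¹ + q₂⁻¹) {ρ δ m : ℝ}
    (hδρ : δ ≤ ρ) (hρ : ρ ≤ 1) {F : PhaseSpace n → ℂ} (hF : IsBilinearSymbol m ρ δ F)
    {Ψ : En n × En n → ℂ} (hΨ : ContDiff ℝ ∞ Ψ) (hsupp : ∀ w ∉ freqBox n 2, Ψ w = 0) :
    ∃ C : ℝ≥0∞, C ≠ ⊤ ∧ ∀ N : ℝ, 1 ≤ N → (N ≤ 2 ∨ ∀ w ∈ freqBox n (1 / 2), Ψ w = 0) →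
      ∀ f g : En n → ℂ, Continuous f → Continuous g → InAllLp f → InAllLp g →
        eLpNorm (bilinearOp (freqPiece F Ψ N) (ft f) (ft g)) r volume ≤
          C * ENNReal.ofReal (N ^ (m + (1 - ρ) * (n * criticalIndex q₁ q₂ r))) *
            (eLpNorm f q₁ volume * eLpNorm g q₂ volume) := by
  obtain ⟨C, hC, hbound⟩ := exists_eLpNorm_bilinearOp_le n hq₁ hq₂ hr₀ hr hrel
  obtain ⟨D, hD₀, hpiece⟩ := hF.exists_isBandLimitedSymbol_freqPiece hδρ hρ (10 * n) hΨ hsupp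
  set κ := criticalIndex q₁ q₂ r
  refine ⟨C * ENNReal.ofReal (D * 2 ^ (n * κ)), ENNReal.mul_ne_top hC ENNReal.ofReal_ne_top,
    fun N hN hlow f g hfc hgc hf hg => ?_⟩
  have hN₀ : 0 < N := by linarith
  have hs : 0 < N ^ ρ := by positivity
  have hR : 1 ≤ 2 * N ^ (1 - ρ) := by
    linarith [Real.one_le_rpow hN (sub_nonneg.2 hρ)]
  have hconst : C * ENNReal.ofReal (D * N ^ m * (2 * N ^ (1 - ρ)) ^ (n * κ)) =
      C * ENNReal.ofReal (D * 2 ^ (n * κ)) * ENNReal.ofReal (N ^ (m + (1 - ρ) * (n * κ))) := by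
    rw [mul_assoc C, ← ENNReal.ofReal_mul (by positivity),
      Real.mul_rpow zero_le_two (by positivity),
      ← Real.rpow_mul hN₀.le, Real.rpow_add hN₀]
    ring_nf
  rw [← hconst]
  exact eLpNorm_bilinearOp_le_of_dilation (one_pos.trans_le hq₁).ne' (one_pos.trans_le hq₂).ne'
    hrel hs <| hbound _ _ hR _ (hpiece N hN hlow) _ _ (hfc.comp (continuous_const_smul _))
      (hgc.comp (continuous_const_smul _)) (hf.dilate (inv_pos.2 hs)) (hg.dilate (inv_pos.2 hs))

theorem integrable_ft (f : 𝓢(En n, ℂ)) : Integrable (ft (f : En n → ℂ)) := by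
  have hInt : Integrable fun ξ => (𝓕 f : 𝓢(En n, ℂ)) ((2 * π)⁻¹ • ξ) :=
    (𝓕 f : 𝓢(En n, ℂ)).integrable.comp_smul (by positivity)
  simpa only [SchwartzMap.fourier_coe, ← ft_eq_fourier] using hInt

theorem norm_bilinearIntegrand (A : PhaseSpace n → ℂ) (U V : En n → ℂ) (x : En n)
    (w : En n × En n) : ‖bilinearIntegrand A U V x w‖ = ‖A (x, w)‖ * ‖U w.1 * V w.2‖ := by
  simp [bilinearIntegrand, norm_expI, mul_assoc]

theorem integrable_bilinearIntegrand {A : PhaseSpace n → ℂ} (hA : Continuous A) {C : ℝ}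
    (hC : ∀ q, ‖A q‖ ≤ C) {U V : En n → ℂ} (hU : Integrable U) (hV : Integrable V)
    (hUc : Continuous U) (hVc : Continuous V) (x : En n) :
    Integrable (bilinearIntegrand A U V x) := by
  refine ((hU.mul_prod hV).norm.const_mul C).mono'
    ((continuous_bilinearIntegrand hA hUc hVc).comp
      (Continuous.prodMk_right x)).aestronglyMeasurable (.of_forall fun w => ?_)
  rw [norm_bilinearIntegrand]
  exact mul_le_mul_of_nonneg_right (hC _) (norm_nonneg _)

end Dilations

/-! ### Summation of the dyadic pieces -/

section QuasiNorm

variable {X E : Type*} [MeasurableSpace X] {μ : Measure X} [NormedAddCommGroup E] {r : ℝ≥0∞}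

theorem eLpNorm_add_rpow_min_le (hr₀ : r ≠ 0) (hr : r ≠ ⊤) {f g : X → E}
    (hf : AEStronglyMeasurable f μ) (hg : AEStronglyMeasurable g μ) :
    eLpNorm (f + g) r μ ^ min 1 r.toReal ≤
      eLpNorm f r μ ^ min 1 r.toReal + eLpNorm g r μ ^ min 1 r.toReal := by
  rcases le_total 1 r.toReal with h | h
  · rw [min_eq_left h]
    simp only [ENNReal.rpow_one]
    refine eLpNorm_add_le hf hg ?_
    rw [← ENNReal.ofReal_toReal hr]
    exact ENNReal.one_le_ofReal.2 h
  · rw [min_eq_right h]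
    simp only [eLpNorm_rpow_eq_lintegral hr₀ hr]
    rw [← lintegral_add_left' (hf.enorm.pow_const _)]
    refine lintegral_mono fun x => ?_
    calc ‖f x + g x‖ₑ ^ r.toReal ≤ (‖f x‖ₑ + ‖g x‖ₑ) ^ r.toReal := by
          gcongr
          exact enorm_add_le _ _
      _ ≤ ‖f x‖ₑ ^ r.toReal + ‖g x‖ₑ ^ r.toReal :=
          ENNReal.rpow_add_le_add_rpow _ _ ENNReal.toReal_nonneg h

theorem eLpNorm_sum_rpow_min_le (hr₀ : r ≠ 0) (hr : r ≠ ⊤) {S : ℕ → X → E}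
    (hS : ∀ j, AEStronglyMeasurable (S j) μ) (J : ℕ) :
    eLpNorm (∑ j ∈ Finset.range J, S j) r μ ^ min 1 r.toReal ≤
      ∑ j ∈ Finset.range J, eLpNorm (S j) r μ ^ min 1 r.toReal := by
  have hp : 0 < min 1 r.toReal := lt_min one_pos (ENNReal.toReal_pos hr₀ hr)
  induction J with
  | zero => simp [hp]
  | succ J ih =>
    rw [Finset.sum_range_succ, Finset.sum_range_succ]
    exact (eLpNorm_add_rpow_min_le hr₀ hr
      (Finset.aestronglyMeasurable_sum _ fun j _ => hS j) (hS J)).trans (by gcongr)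

theorem exists_eLpNorm_le_of_geometric (hr₀ : r ≠ 0) (hr : r ≠ ⊤) {θ : ℝ≥0∞} (hθ : θ < 1) :
    ∃ C : ℝ≥0∞, C ≠ ⊤ ∧ ∀ (K : ℝ≥0∞) (S : ℕ → X → E) (f : X → E),
      (∀ j, AEStronglyMeasurable (S j) μ) → (∀ j, eLpNorm (S j) r μ ≤ K * θ ^ j) →
      (∀ x, Filter.Tendsto (fun J => ∑ j ∈ Finset.range J, S j x) Filter.atTop (nhds (f x))) →
        eLpNorm f r μ ≤ C * K := by
  set p := min 1 r.toReal
  have hp : 0 < p := lt_min one_pos (ENNReal.toReal_pos hr₀ hr)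
  refine ⟨(∑' j : ℕ, (θ ^ p) ^ j) ^ p⁻¹, ENNReal.rpow_ne_top_of_nonneg (by positivity) ?_,
    fun K S f hS hbound hlim => ?_⟩
  · rw [ENNReal.tsum_geometric]
    exact ENNReal.inv_ne_top.2 (tsub_pos_of_lt (ENNReal.rpow_lt_one hθ hp)).ne'
  have hpartial : ∀ J, eLpNorm (∑ j ∈ Finset.range J, S j) r μ ≤
      (∑' j : ℕ, (θ ^ p) ^ j) ^ p⁻¹ * K := fun J => by
    rw [← ENNReal.rpow_le_rpow_iff hp, ENNReal.mul_rpow_of_nonneg _ _ hp.le,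
      ENNReal.rpow_inv_rpow hp.ne']
    calc eLpNorm (∑ j ∈ Finset.range J, S j) r μ ^ p
        ≤ ∑ j ∈ Finset.range J, eLpNorm (S j) r μ ^ p := eLpNorm_sum_rpow_min_le hr₀ hr hS J
      _ ≤ ∑ j ∈ Finset.range J, (θ ^ p) ^ j * K ^ p := Finset.sum_le_sum fun j _ => by
          rw [← ENNReal.rpow_natCast, ← ENNReal.rpow_mul, mul_comm p, ENNReal.rpow_mul,
            ENNReal.rpow_natCast, ← ENNReal.mul_rpow_of_nonneg _ _ hp.le, mul_comm _ K]
          exact ENNReal.rpow_le_rpow (hbound j) hp.le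
      _ ≤ (∑' j : ℕ, (θ ^ p) ^ j) * K ^ p := by
          rw [← Finset.sum_mul]
          gcongr
          exact ENNReal.sum_le_tsum _
  refine (Lp.eLpNorm_lim_le_liminf_eLpNorm (fun J => Finset.aestronglyMeasurable_sum _ fun j _ =>
    hS j) f (.of_forall fun x => by simpa only [Finset.sum_apply] using hlim x)).trans ?_
  refine Filter.liminf_le_of_le (by isBoundedDefault) fun b hb => ?_
  obtain ⟨J, hJ⟩ := hb.exists
  exact hJ.trans (hpartial J)

end QuasiNorm

section DyadicDecomposition

variable {n : ℕ} {F : PhaseSpace n → ℂ} {U V : En n → ℂ}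

/-- The Littlewood–Paley pieces of a symbol: the low frequencies for `j = 0`, and the frequencies
of size about `2 ^ j` otherwise. -/
def dyadicPiece (F : PhaseSpace n → ℂ) : ℕ → PhaseSpace n → ℂ
  | 0 => freqPiece F lowCutoff 1
  | j + 1 => freqPiece F annularCutoff (2 ^ (j + 1))

theorem sum_dyadicPiece (F : PhaseSpace n → ℂ) (J : ℕ) (q : PhaseSpace n) :
    ∑ j ∈ Finset.range (J + 1), dyadicPiece F j q = freqPiece F lowCutoff (2 ^ J) q := by
  induction J with
  | zero => simp [dyadicPiece]
  | succ J ih =>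
    have hscale : (2 : ℝ) • ((2 : ℝ) ^ (J + 1))⁻¹ • q.2 = ((2 : ℝ) ^ J)⁻¹ • q.2 := by
      rw [smul_smul, pow_succ, mul_inv_rev, mul_inv_cancel_left₀ two_ne_zero]
    rw [Finset.sum_range_succ, ih, dyadicPiece, freqPiece, freqPiece, freqPiece, annularCutoff,
      hscale]
    ring

theorem continuous_freqPiece (hF : Continuous F) {Ψ : En n × En n → ℂ} (hΨ : Continuous Ψ)
    (N : ℝ) : Continuous (freqPiece F Ψ N) :=
  hF.mul (hΨ.comp ((continuous_const_smul _).comp continuous_snd))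

theorem continuous_dyadicPiece (hF : Continuous F) (j : ℕ) : Continuous (dyadicPiece F j) := by
  cases j with
  | zero => exact continuous_freqPiece hF contDiff_lowCutoff.continuous _
  | succ j => exact continuous_freqPiece hF contDiff_annularCutoff.continuous _

theorem norm_freqPiece_lowCutoff_le (F : PhaseSpace n → ℂ) (N : ℝ) (q : PhaseSpace n) :
    ‖freqPiece F lowCutoff N q‖ ≤ ‖F q‖ := by
  rw [freqPiece, norm_mul]
  exact mul_le_of_le_one_right (norm_nonneg _) (norm_lowCutoff_le _)

theorem norm_dyadicPiece_le (F : PhaseSpace n → ℂ) (j : ℕ) (q : PhaseSpace n) :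
    ‖dyadicPiece F j q‖ ≤ 2 * ‖F q‖ := by
  cases j with
  | zero => exact (norm_freqPiece_lowCutoff_le F 1 q).trans (by linarith [norm_nonneg (F q)])
  | succ j =>
    rw [dyadicPiece, freqPiece, norm_mul, mul_comm]
    gcongr
    exact (norm_sub_le_of_le (norm_lowCutoff_le _) (norm_lowCutoff_le _)).trans (by norm_num)

theorem eventually_freqPiece_lowCutoff_eq (F : PhaseSpace n → ℂ) (q : PhaseSpace n) :
    ∀ᶠ J : ℕ in Filter.atTop, freqPiece F lowCutoff (2 ^ J) q = F q := by
  have hpow : Filter.Tendsto (fun J : ℕ => (2 : ℝ) ^ J) Filter.atTop Filter.atTop :=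
    tendsto_pow_atTop_atTop_of_one_lt one_lt_two
  filter_upwards [hpow.eventually_ge_atTop ‖q.2‖] with J hJ
  have hJ₀ : (0 : ℝ) < (2 ^ J)⁻¹ := by positivity
  have hq : q.2 ∈ freqBox n (2 ^ J) := by simpa [freqBox, norm_prod_le_iff] using hJ
  rw [freqPiece, lowCutoff_eq_one, mul_one]
  rwa [← smul_mem_freqBox_iff hJ₀, inv_mul_cancel₀ (by positivity)] at hq

theorem tendsto_sum_bilinearOp_dyadicPiece (hF : Continuous F) {M : ℝ} (hM : ∀ q, ‖F q‖ ≤ M)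
    (hU : Integrable U) (hV : Integrable V) (hUc : Continuous U) (hVc : Continuous V) (x : En n) :
    Filter.Tendsto (fun J => ∑ j ∈ Finset.range J, bilinearOp (dyadicPiece F j) U V x)
      Filter.atTop (nhds (bilinearOp F U V x)) := by
  have hsum : ∀ J, ∑ j ∈ Finset.range (J + 1), bilinearOp (dyadicPiece F j) U V x =
      ∫ w, bilinearIntegrand (freqPiece F lowCutoff (2 ^ J)) U V x w := fun J => by
    simp only [bilinearOp]
    rw [← integral_finsetSum _ fun j _ => integrable_bilinearIntegrand
      (continuous_dyadicPiece hF j) (fun q => (norm_dyadicPiece_le F j q).trans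
        (mul_le_mul_of_nonneg_left (hM q) zero_le_two)) hU hV hUc hVc x]
    simp only [bilinearIntegrand, ← Finset.sum_mul, sum_dyadicPiece]
  rw [← Filter.tendsto_add_atTop_iff_nat 1]
  simp only [hsum]
  refine tendsto_integral_of_dominated_convergence _ (fun J => ?_)
    (integrable_bilinearIntegrand hF hM hU hV hUc hVc x).norm (fun J => .of_forall fun w => ?_)
    (.of_forall fun w => tendsto_const_nhds.congr' ?_)
  · exact ((continuous_bilinearIntegrand (continuous_freqPiece hF contDiff_lowCutoff.continuous _)
      hUc hVc).comp (Continuous.prodMk_right x)).aestronglyMeasurable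
  · rw [norm_bilinearIntegrand, norm_bilinearIntegrand]
    gcongr
    exact norm_freqPiece_lowCutoff_le _ _ _
  · filter_upwards [eventually_freqPiece_lowCutoff_eq F (x, w)] with J hJ
    rw [bilinearIntegrand, bilinearIntegrand, hJ]

end DyadicDecomposition

/-! ### Boundedness of bilinear pseudodifferential operators -/

theorem criticalIndex_nonneg (q₁ q₂ r : ℝ≥0∞) : 0 ≤ criticalIndex q₁ q₂ r := by
  unfold criticalIndex bernsteinLoss
  positivity

namespace IsBilinearSymbol

variable {n : ℕ} {m ρ δ : ℝ} {q₁ q₂ r : ℝ≥0∞} {F : PhaseSpace n → ℂ}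

theorem exists_norm_le_of_nonpos (hF : IsBilinearSymbol m ρ δ F) (hm : m ≤ 0) :
    ∃ M : ℝ, ∀ q, ‖F q‖ ≤ M := by
  obtain ⟨C, hC₀, hC⟩ := hF.exists_norm_le
  have hsize : ∀ q : PhaseSpace n, 1 ≤ freqSize q := fun q =>
    (le_add_of_nonneg_right (norm_nonneg q.2.1)).trans
      (le_add_of_nonneg_right (norm_nonneg q.2.2))
  exact ⟨C, fun q => (hC q).trans <| mul_le_of_le_one_right hC₀ <|
    Real.rpow_le_one_of_one_le_of_nonpos (hsize q) hm⟩

theorem exists_eLpNorm_bilinearOp_dyadicPiece_le (hq₁ : 1 ≤ q₁) (hq₂ : 1 ≤ q₂) (hr₀ : r ≠ 0)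
    (hr : r ≠ ⊤) (hrel : r⁻¹ = q₁⁻¹ + q₂⁻¹) (hδρ : δ ≤ ρ) (hρ : ρ ≤ 1)
    (hF : IsBilinearSymbol m ρ δ F) :
    ∃ C : ℝ≥0∞, C ≠ ⊤ ∧ ∀ f g : En n → ℂ, Continuous f → Continuous g → InAllLp f → InAllLp g →
      ∀ j, eLpNorm (bilinearOp (dyadicPiece F j) (ft f) (ft g)) r volume ≤
        C * (eLpNorm f q₁ volume * eLpNorm g q₂ volume) *
          ENNReal.ofReal (2 ^ (m + (1 - ρ) * (n * criticalIndex q₁ q₂ r))) ^ j := by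
  obtain ⟨C₀, hC₀, hlow⟩ := hF.exists_eLpNorm_bilinearOp_freqPiece_le hq₁ hq₂ hr₀ hr hrel hδρ hρ
    contDiff_lowCutoff fun _ => lowCutoff_eq_zero
  obtain ⟨C₁, hC₁, hhigh⟩ := hF.exists_eLpNorm_bilinearOp_freqPiece_le hq₁ hq₂ hr₀ hr hrel hδρ hρ
    contDiff_annularCutoff fun _ => annularCutoff_eq_zero
  set e := m + (1 - ρ) * (n * criticalIndex q₁ q₂ r)
  refine ⟨C₀ + C₁, ENNReal.add_ne_top.2 ⟨hC₀, hC₁⟩, fun f g hfc hgc hf hg j => ?_⟩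
  rw [mul_right_comm]
  cases j with
  | zero =>
    refine (hlow 1 le_rfl (.inl one_le_two) f g hfc hgc hf hg).trans ?_
    rw [Real.one_rpow, ENNReal.ofReal_one, pow_zero]
    gcongr
    exact le_self_add
  | succ j =>
    refine (hhigh (2 ^ (j + 1)) (one_le_pow₀ one_le_two)
      (.inr fun _ => annularCutoff_eq_zero_of_mem) f g hfc hgc hf hg).trans ?_
    rw [← ENNReal.ofReal_pow (by positivity), ← Real.rpow_mul_natCast zero_le_two, mul_comm e,
      Real.rpow_natCast_mul zero_le_two]
    gcongr
    exact le_add_self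

theorem exists_eLpNorm_bilinearOp_le (hq₁ : 1 ≤ q₁) (hq₂ : 1 ≤ q₂) (hr₀ : r ≠ 0) (hr : r ≠ ⊤)
    (hrel : r⁻¹ = q₁⁻¹ + q₂⁻¹) (hδρ : δ ≤ ρ) (hρ : ρ ≤ 1)
    (hm : m < n * (ρ - 1) * criticalIndex q₁ q₂ r) (hF : IsBilinearSymbol m ρ δ F) :
    ∃ C : ℝ≥0∞, C ≠ ⊤ ∧ ∀ f g : 𝓢(En n, ℂ),
      eLpNorm (bilinearOp F (ft f) (ft g)) r volume ≤
        C * (eLpNorm f q₁ volume * eLpNorm g q₂ volume) := by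
  have hm₀ : m ≤ 0 := hm.le.trans <| mul_nonpos_of_nonpos_of_nonneg
    (mul_nonpos_of_nonneg_of_nonpos n.cast_nonneg (sub_nonpos.2 hρ)) (criticalIndex_nonneg _ _ _)
  obtain ⟨M, hM⟩ := hF.exists_norm_le_of_nonpos hm₀
  obtain ⟨C₁, hC₁, hpiece⟩ :=
    hF.exists_eLpNorm_bilinearOp_dyadicPiece_le hq₁ hq₂ hr₀ hr hrel hδρ hρ
  set e := m + (1 - ρ) * (n * criticalIndex q₁ q₂ r)
  have he : e < 0 := by
    have : e = m - n * (ρ - 1) * criticalIndex q₁ q₂ r := by ring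
    linarith
  have hθ : ENNReal.ofReal (2 ^ e) < 1 :=
    ENNReal.ofReal_lt_one.2 (Real.rpow_lt_one_of_one_lt_of_neg one_lt_two he)
  obtain ⟨C₂, hC₂, hsum⟩ := exists_eLpNorm_le_of_geometric (μ := (volume : Measure (En n)))
    (E := ℂ) hr₀ hr hθ
  refine ⟨C₂ * C₁, ENNReal.mul_ne_top hC₂ hC₁, fun f g => ?_⟩
  have hft : ∀ h : 𝓢(En n, ℂ), Continuous (ft h) := fun h => continuous_ft h.integrable
  have hFc : Continuous F := hF.contDiff.continuous
  rw [mul_assoc]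
  exact hsum _ _ _
    (fun j => (stronglyMeasurable_bilinearOp (continuous_dyadicPiece hFc j) (hft f)
      (hft g)).aestronglyMeasurable)
    (hpiece f g f.continuous g.continuous (fun p => f.memLp p) fun p => g.memLp p)
    (tendsto_sum_bilinearOp_dyadicPiece hFc hM (integrable_ft f) (integrable_ft g) (hft f) (hft g))

end IsBilinearSymbol

theorem statement19_general {n : ℕ} (r q₁ q₂ : ℝ≥0∞) (hq₁ : 1 ≤ q₁) (hq₂ : 1 ≤ q₂)
    (hr : r < ⊤) (hrel : r⁻¹ = q₁⁻¹ + q₂⁻¹) (m ρ δ : ℝ) (hρ : ρ ≤ 1) (hδρ : δ ≤ ρ)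
    (hm : m < n * (ρ - 1) * criticalIndex q₁ q₂ r)
    (a : En n → En n → En n → ℂ) (ha : HormS2 m ρ δ a) :
    ∃ C : ℝ, 0 < C ∧ ∀ f g : 𝓢(En n, ℂ),
      eLpNorm (bfio a (fun x ξ => ⟪x, ξ⟫) (fun x η => ⟪x, η⟫) (⇑f) (⇑g)) r volume ≤
        ENNReal.ofReal C * eLpNorm (⇑f) q₁ volume * eLpNorm (⇑g) q₂ volume := by
  have hr₀ : r ≠ 0 := by
    rw [← ENNReal.inv_ne_top, hrel, ENNReal.add_ne_top, ENNReal.inv_ne_top, ENNReal.inv_ne_top]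
    exact ⟨(one_pos.trans_le hq₁).ne', (one_pos.trans_le hq₂).ne'⟩
  obtain ⟨C, hC, hbound⟩ := (isBilinearSymbol_uncurrySymbol ha).exists_eLpNorm_bilinearOp_le
    hq₁ hq₂ hr₀ hr.ne hrel hδρ hρ hm
  refine ⟨C.toReal + 1, by positivity, fun f g => (hbound f g).trans ?_⟩
  rw [mul_assoc]
  gcongr
  exact (ENNReal.ofReal_toReal hC).symm.le.trans (ENNReal.ofReal_le_ofReal (by simp))

/-- Theorem 5.20: improvement of the result of
Bényi–Bernicot–Maldonado–Naibo–Torres. -/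
theorem statement19 {n : ℕ} (r q₁ q₂ : ℝ≥0∞) (hq₁ : 1 ≤ q₁) (hq₂ : 1 ≤ q₂)
    (hr0 : 0 < r) (hr1 : r < ⊤) (hrel : r⁻¹ = q₁⁻¹ + q₂⁻¹)
    (m ρ δ : ℝ) (hρ0 : 0 < ρ) (hρ1 : ρ ≤ 1) (hδρ : δ ≤ ρ) (hδ : δ < 1)
    (hm : m < (n : ℝ) * (ρ - 1) *
      (max (max (1 / 2) (max q₁⁻¹.toReal q₂⁻¹.toReal)) (1 - r⁻¹.toReal) +
        (1 / 2) * max (r⁻¹.toReal - 1) 0))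
    (a : En n → En n → En n → ℂ) (ha : HormS2 m ρ δ a) :
    ∃ C : ℝ, 0 < C ∧ ∀ f g : 𝓢(En n, ℂ),
      eLpNorm (bfio a (fun x ξ => ⟪x, ξ⟫) (fun x η => ⟪x, η⟫) (⇑f) (⇑g)) r volume ≤
        ENNReal.ofReal C * eLpNorm (⇑f) q₁ volume * eLpNorm (⇑g) q₂ volume :=
  statement19_general r q₁ q₂ hq₁ hq₂ hr1 hrel m ρ δ hρ1 hδρ
    (hm.trans_le <| mul_le_mul_of_nonpos_left (criticalIndex_le hq₁ hq₂ hrel) <|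
      mul_nonpos_of_nonneg_of_nonpos n.cast_nonneg (sub_nonpos.2 hρ1)) a ha
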